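/- Let s ∈ 𝔊₀. Then the recurrence coefficients exist for all large n and have the stated genus-zero asymptotics: there exist N₀ ∈ ℕ, a constant C > 0, sequences α, β : ℕ → ℂ, and for every n ≥ N₀ monic polynomials P_{n,n−1}, P_{n,n}, P_{n,n+1} ∈ Polynomial ℂ of degrees n−1, n, n+1 respectively, each satisfying the degree-k orthogonality conditions for (n, s) (with k = n−1, n, n+1), such that for all n ≥ N₀: X·P_{n,n} = P_{n,n+1} + α(n)·P_{n,n} + β(n)·P_{n,n−1}, and ‖α(n) − 2s/((s²−4)²·n²)‖ ≤ C/n³ and ‖β(n) − 1/4 − (s²+4)/(4·(s²−4)²·n²)‖ ≤ C/n⁴. -/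

import Mathlib

/-!
With `t = n s`, everything is expressed through the moments of the weight `e^{-tx}` on `[-1, 1]`,
their Hankel determinants `D_k(t)`, and the monic orthogonal polynomials `P_k` given by Cramer's
rule where `D_k ≠ 0`. Write `n = N + 1`.

*An exact system.* Integration by parts against `P_{n-1}`, `P_n` and differentiation of the
orthogonality relations in `t` give a closed system of differential equations for
`b = s² β(ns)`, `p = b' / n` and `g = β + c/t`, where `c` is the subleading coefficient of
`P_n`, together with the algebraic first integral
`p² = 4 (1 - b) (s² g² - b)` (`hasDerivAt_bf`, `hasDerivAt_pf`, `hasDerivAt_gf`, `pf_sq`); both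
recurrence coefficients are elementary functions of `b`, `p`, `g`.

*An approximate solution.* The system has the formal solution
`bt = s²/4 + ε b₁(s) + ε² b₂(s) + ⋯`, `g = 1/2 + ε w₁(s) + ε² w₂(s) + ⋯`, with `ε = n⁻²`, which is
regular away from `s = ±2`; truncated as shown it leaves a residual of size `ε³` (`res1`, `res2`).
The errors `y = b - bt` and `d = p - bt'/n` satisfy
`y' = n d`, `d' = n ((4 - s²)/s²) y + (small)` (`est`).

*The real segment `0 < s < 2`.* There the weight is positive, so all Hankel determinants are
nonzero and `b`, `p`, `g` are real, with `0 < b < 1`. A comparison argument for the oscillator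
satisfied by `√(1 - b)` shows `β → 1/4`, `g → 1/2`, `p → 0` (`crude`). As `(4 - s²)/s² > 0`, the
linearised system is hyperbolic, and a solution that stays small over an interval of fixed length
is as small as the forcing: the errors are `O(n⁻⁶)` (`hyper`, `real_sharp`).

*Continuation to complex `s`.* The function `ψ(s) = s e^{q/2} / (2 + q)`, `q = √(4 - s²)`, satisfies
`|Re H| = 2 |log |ψ||` and `s ψ'/ψ = q/2`. Hence the genus-zero region lies in `{|ψ| < 1}`, off the
cuts of `q` (`G0_sub`), and each of its points other than `0` is joined to `(0, 2)` by a level curve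
of `log |ψ|` (`level_path`). Along such a curve the exponents `± n ∫ (q/s) ds` of the linearised
system are purely imaginary, so the energy `|y|² + |s d / q|²` grows at most by a bounded factor
(`energy`). A continuous induction along the curve propagates the error bounds and the
nonvanishing of the Hankel determinants together, since `D_n'/D_n` is controlled by `β` and `g`,
and `D_{n+1} D_{n-1} = β D_n²` (`UU_close`, `path_est`).

The errors at the given `s` are then `O(n⁻⁵)`, which is enough to read off `α` and `β`
(`asym_ne`). The point `s = 0` is the Legendre case, where `α = 0` and `β` is explicit
(`asym_zero`).
-/

open Complex Polynomial

/-- The saddle-point value `H(s) = h(2/s; s)` of the genus-zero modified external field. -/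
noncomputable def Hfun (s : ℂ) : ℂ :=
  2 * Complex.log (2 / s + (4 / s ^ 2 - 1) ^ ((1 : ℂ) / 2))
    - s * (4 / s ^ 2 - 1) ^ ((1 : ℂ) / 2)

/-- The set of breaking points. -/
def Breaking : Set ℂ := {s : ℂ | s ≠ 0 ∧ (Hfun s).re = 0}

/-- The genus-zero region: the connected component of the complement of the
breaking set containing the origin. -/
noncomputable def G0 : Set ℂ := connectedComponentIn Breakingᶜ 0

/-- A monic polynomial of degree `k` satisfying the degree-`k` orthogonality
conditions for `(n, s)`. -/
def OrthoConds (n : ℕ) (s : ℂ) (k : ℕ) (p : Polynomial ℂ) : Prop :=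
  p.Monic ∧ p.natDegree = k ∧
    ∀ j < k, (∫ x : ℝ in (-1 : ℝ)..1,
      p.eval (x : ℂ) * (x : ℂ) ^ j * Complex.exp (-(n : ℂ) * s * (x : ℂ))) = 0

open ComplexConjugate

/-! ### Moments and the moment functional -/

namespace GenusZero

/-- The moments of the weight `e^{-tx}` on `[-1,1]`. -/
noncomputable def mom (k : ℕ) (t : ℂ) : ℂ :=
  ∫ x : ℝ in (-1 : ℝ)..1, (x : ℂ) ^ k * Complex.exp (-t * x)

/-- The moment functional `f ↦ ∫_{-1}^1 f(x) e^{-tx} dx` on polynomials. -/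
noncomputable def Lf (t : ℂ) : ℂ[X] →ₗ[ℂ] ℂ where
  toFun f := ∫ x : ℝ in (-1 : ℝ)..1, f.eval (x : ℂ) * Complex.exp (-t * x)
  map_add' f g := by
    simp only [eval_add, add_mul]
    apply intervalIntegral.integral_add
    · exact Continuous.intervalIntegrable (by fun_prop) _ _
    · exact Continuous.intervalIntegrable (by fun_prop) _ _
  map_smul' c f := by
    simp only [eval_smul, smul_eq_mul, mul_assoc, RingHom.id_apply]
    exact intervalIntegral.integral_const_mul _ _

lemma Lf_apply (t : ℂ) (f : ℂ[X]) :
    Lf t f = ∫ x : ℝ in (-1 : ℝ)..1, f.eval (x : ℂ) * Complex.exp (-t * x) := rfl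

@[simp] lemma Lf_X_pow (t : ℂ) (k : ℕ) : Lf t (X ^ k) = mom k t := by
  simp [Lf_apply, mom]

lemma Lf_C_mul (t c : ℂ) (f : ℂ[X]) : Lf t (C c * f) = c * Lf t f := by
  rw [← smul_eq_C_mul, map_smul, smul_eq_mul]

/-- Integration by parts for the weight `e^{-tx}`. -/
lemma Lf_parts (t : ℂ) (f : ℂ[X]) :
    Lf t (derivative f) - t * Lf t f
      = f.eval 1 * Complex.exp (-t) - f.eval (-1) * Complex.exp t := by
  have h1 : ∀ x : ℝ, HasDerivAt (fun x : ℝ => f.eval (x : ℂ) * Complex.exp (-t * x))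
      ((derivative f - C t * f).eval (x : ℂ) * Complex.exp (-t * x)) x := by
    intro x
    have h2 : HasDerivAt (fun z : ℂ => f.eval z * Complex.exp (-t * z))
        ((derivative f - C t * f).eval (x : ℂ) * Complex.exp (-t * x)) (x : ℂ) := by
      have h3 := (f.hasDerivAt (x : ℂ)).mul
        (((hasDerivAt_id (x : ℂ)).const_mul (-t)).cexp)
      refine h3.congr_deriv ?_
      simp
      ring
    exact h2.comp_ofReal
  have h4 := intervalIntegral.integral_eq_sub_of_hasDerivAt (a := -1) (b := 1)
    (fun x _ => h1 x) (Continuous.intervalIntegrable (by fun_prop) _ _)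
  have h5 : Lf t (derivative f - C t * f) = f.eval 1 * Complex.exp (-t)
      - f.eval (-1) * Complex.exp t := by
    rw [Lf_apply, h4]; simp
  rw [← h5, map_sub, Lf_C_mul]

lemma hasDerivAt_mom (k : ℕ) (t : ℂ) : HasDerivAt (mom k) (-mom (k + 1) t) t := by
  have key := intervalIntegral.hasDerivAt_integral_of_dominated_loc_of_deriv_le
    (μ := MeasureTheory.volume) (a := (-1 : ℝ)) (b := 1)
    (F := fun (t : ℂ) (x : ℝ) => (x : ℂ) ^ k * Complex.exp (-t * x))
    (F' := fun (t : ℂ) (x : ℝ) => -((x : ℂ) ^ (k + 1) * Complex.exp (-t * x)))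
    (x₀ := t) (s := Metric.ball t 1) (bound := fun _ => Real.exp (‖t‖ + 1))
    (Metric.ball_mem_nhds t one_pos)
    (Filter.Eventually.of_forall fun t =>
      (Continuous.aestronglyMeasurable (by fun_prop)))
    (Continuous.intervalIntegrable (by fun_prop) _ _)
    (Continuous.aestronglyMeasurable (by fun_prop))
    (Filter.Eventually.of_forall ?_)
    (Continuous.intervalIntegrable (by fun_prop) _ _)
    (Filter.Eventually.of_forall ?_)
  · have := key.2
    rw [intervalIntegral.integral_neg] at this
    exact this
  · intro x hx z hz
    have hx1 : |x| ≤ 1 := by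
      rw [Set.uIoc_of_le (by norm_num)] at hx
      exact abs_le.2 ⟨hx.1.le, hx.2⟩
    rw [norm_neg, norm_mul, norm_pow, Complex.norm_real, Complex.norm_exp]
    have h1 : ‖x‖ ^ (k + 1) ≤ 1 := pow_le_one₀ (norm_nonneg _) hx1
    have h2 : (-z * x).re ≤ ‖t‖ + 1 := by
      refine (Complex.re_le_norm _).trans ?_
      rw [norm_mul, norm_neg, Complex.norm_real]
      have h3 : ‖z‖ ≤ ‖t‖ + 1 := by
        have := norm_le_norm_add_norm_sub' z t
        have h4 : ‖z - t‖ < 1 := by simpa [dist_eq_norm] using hz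
        linarith
      calc ‖z‖ * ‖x‖ ≤ ‖z‖ * 1 := by gcongr; exact hx1
        _ ≤ _ := by linarith
    calc _ ≤ 1 * Real.exp (‖t‖ + 1) := by gcongr
      _ = _ := one_mul _
  · intro x _ z _
    have := (((hasDerivAt_id z).neg.mul_const (x : ℂ)).cexp).const_mul ((x : ℂ) ^ k)
    refine this.congr_deriv ?_
    simp
    ring

/-! ### Hankel determinants and orthogonal polynomials -/

/-- The Hankel matrix of moments of size `k`. -/
noncomputable def Hk (k : ℕ) (t : ℂ) : Matrix (Fin k) (Fin k) ℂ :=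
  Matrix.of fun i j => mom ((i : ℕ) + j) t

/-- The Hankel determinant. -/
noncomputable def Dk (k : ℕ) (t : ℂ) : ℂ := (Hk k t).det

/-- Non-leading coefficients of the monic orthogonal polynomial, by Cramer's rule. -/
noncomputable def cvec (k : ℕ) (t : ℂ) (i : Fin k) : ℂ :=
  -(Matrix.cramer (Hk k t) (fun j => mom ((j : ℕ) + k) t) i) / Dk k t

/-- The polynomial of degree less than `k` with the given coefficients. -/
noncomputable def polyOf (k : ℕ) (c : Fin k → ℂ) : ℂ[X] := ∑ i : Fin k, C (c i) * X ^ (i : ℕ)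

/-- The monic orthogonal polynomial of degree `k` for the weight `e^{-tx}`
(meaningful when `Dk k t ≠ 0`). -/
noncomputable def Pk (k : ℕ) (t : ℂ) : ℂ[X] := X ^ k + polyOf k (cvec k t)

lemma polyOf_degree_lt (k : ℕ) (c : Fin k → ℂ) : (polyOf k c).degree < k := by
  unfold polyOf
  refine (degree_sum_le _ _).trans_lt ?_
  refine (Finset.sup_lt_iff (WithBot.bot_lt_coe k)).2 fun i _ => ?_
  refine (degree_C_mul_X_pow_le _ _).trans_lt ?_
  exact Nat.cast_lt.2 i.2

lemma polyOf_coeff (k : ℕ) (c : Fin k → ℂ) (i : Fin k) : (polyOf k c).coeff i = c i := by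
  unfold polyOf
  simp [finsetSum_coeff, coeff_C_mul, coeff_X_pow, Fin.val_inj]

lemma eq_polyOf (k : ℕ) (f : ℂ[X]) (hf : f.degree < k) :
    f = polyOf k (fun i => f.coeff i) := by
  ext j
  by_cases hj : j < k
  · exact (polyOf_coeff k (fun i => f.coeff i) ⟨j, hj⟩).symm
  · rw [coeff_eq_zero_of_degree_lt (hf.trans_le (by exact_mod_cast not_lt.1 hj)),
      coeff_eq_zero_of_degree_lt ((polyOf_degree_lt _ _).trans_le (by exact_mod_cast not_lt.1 hj))]

lemma Pk_monic (k : ℕ) (t : ℂ) : (Pk k t).Monic :=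
  monic_X_pow_add (polyOf_degree_lt k _)

lemma Pk_natDegree (k : ℕ) (t : ℂ) : (Pk k t).natDegree = k := by
  unfold Pk
  rw [natDegree_add_eq_left_of_degree_lt]
  · simp
  · simpa using polyOf_degree_lt k (cvec k t)

lemma Pk_degree (k : ℕ) (t : ℂ) : (Pk k t).degree = k := by
  rw [degree_eq_natDegree (Pk_monic k t).ne_zero, Pk_natDegree]

lemma Lf_polyOf (k : ℕ) (c : Fin k → ℂ) (t : ℂ) (j : ℕ) :
    Lf t (polyOf k c * X ^ j) = ∑ i : Fin k, c i * mom ((i : ℕ) + j) t := by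
  unfold polyOf
  rw [Finset.sum_mul, map_sum]
  refine Finset.sum_congr rfl fun i _ => ?_
  rw [mul_assoc, Lf_C_mul, ← pow_add, Lf_X_pow]

lemma Pk_ortho {k : ℕ} {t : ℂ} (hD : Dk k t ≠ 0) {j : ℕ} (hj : j < k) :
    Lf t (Pk k t * X ^ j) = 0 := by
  unfold Pk
  rw [add_mul, map_add, ← pow_add, Lf_X_pow, Lf_polyOf]
  have h := congrFun (Matrix.mulVec_cramer (Hk k t) (fun j => mom ((j : ℕ) + k) t)) ⟨j, hj⟩
  simp only [Matrix.mulVec, dotProduct, Hk, Matrix.of_apply, Pi.smul_apply, smul_eq_mul] at h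
  have h2 : ∑ i : Fin k, cvec k t i * mom ((i : ℕ) + j) t
      = -(∑ x : Fin k, mom (j + (x : ℕ)) t * (Hk k t).cramer (fun j => mom ((j : ℕ) + k) t) x)
        / Dk k t := by
    rw [neg_div, Finset.sum_div, ← Finset.sum_neg_distrib]
    refine Finset.sum_congr rfl fun i _ => ?_
    rw [cvec, add_comm j]
    ring
  rw [h2]
  have h3 : (∑ x : Fin k, mom (j + (x : ℕ)) t * (Hk k t).cramer (fun j => mom ((j : ℕ) + k) t) x)
      = Dk k t * mom (j + k) t := h
  rw [h3, add_comm k]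
  field_simp
  ring

lemma Lf_eq_zero_of_degree_lt {t : ℂ} {P : ℂ[X]} {k : ℕ}
    (hP : ∀ j < k, Lf t (P * X ^ j) = 0) {f : ℂ[X]} (hf : f.degree < k) : Lf t (P * f) = 0 := by
  rw [eq_polyOf k f hf, polyOf, Finset.mul_sum, map_sum]
  refine Finset.sum_eq_zero fun i _ => ?_
  rw [← mul_assoc, mul_comm P, mul_assoc, Lf_C_mul, hP i i.2, mul_zero]

/-- Nonvanishing of the Hankel determinant makes the orthogonality conditions nondegenerate. -/
lemma ortho_uniq {k : ℕ} {t : ℂ} (hD : Dk k t ≠ 0) {f : ℂ[X]} (hf : f.degree < k)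
    (h : ∀ j < k, Lf t (f * X ^ j) = 0) : f = 0 := by
  have h0 : (Hk k t).mulVec (fun i => f.coeff i) = 0 := by
    ext j
    have := h j j.2
    rw [eq_polyOf k f hf, Lf_polyOf] at this
    simp only [Matrix.mulVec, dotProduct, Hk, Matrix.of_apply, Pi.zero_apply]
    rw [← this]
    refine Finset.sum_congr rfl fun i _ => ?_
    rw [mul_comm, add_comm (j : ℕ)]
  have h1 := Matrix.eq_zero_of_mulVec_eq_zero hD h0
  rw [eq_polyOf k f hf, h1]
  simp [polyOf]

/-- The squared norm `h_k = L(P_k x^k)`. -/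
noncomputable def hk (k : ℕ) (t : ℂ) : ℂ := Lf t (Pk k t * X ^ k)

/-- `h_k = D_{k+1} / D_k`. -/
lemma Dk_succ {k : ℕ} {t : ℂ} (hD : Dk k t ≠ 0) : Dk (k + 1) t = hk k t * Dk k t := by
  -- `M w = h e_last` for the coefficient vector `w` of `P_k`; apply the adjugate.
  set w : Fin (k + 1) → ℂ := Fin.snoc (α := fun _ => ℂ) (cvec k t) 1 with hw
  have hL : ∀ j, Lf t (Pk k t * X ^ j) = ∑ i : Fin (k + 1), w i * mom ((i : ℕ) + j) t := by
    intro j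
    rw [Fin.sum_univ_castSucc, Pk, add_mul, map_add, ← pow_add, Lf_X_pow, Lf_polyOf, add_comm]
    simp [hw]
  have h1 : (Hk (k + 1) t).mulVec w = fun i => if i = Fin.last k then hk k t else 0 := by
    ext i
    have h2 : (Hk (k + 1) t).mulVec w i = Lf t (Pk k t * X ^ (i : ℕ)) := by
      rw [hL]
      simp only [Matrix.mulVec, dotProduct, Hk, Matrix.of_apply]
      refine Finset.sum_congr rfl fun j _ => ?_
      rw [mul_comm, add_comm (i : ℕ)]
    rw [h2]
    split_ifs with h3
    · rw [h3]; simp [hk]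
    · exact Pk_ortho hD (Fin.val_lt_last h3)
  have h4 : (Hk (k + 1) t).adjugate.mulVec ((Hk (k + 1) t).mulVec w) (Fin.last k)
      = Dk (k + 1) t := by
    rw [Matrix.mulVec_mulVec, Matrix.adjugate_mul, Matrix.smul_mulVec, Matrix.one_mulVec]
    simp [hw, Dk]
  rw [h1] at h4
  rw [← h4]
  simp only [Matrix.mulVec, dotProduct, mul_ite, mul_zero, Finset.sum_ite_eq', Finset.mem_univ,
    if_true]
  rw [Matrix.adjugate_fin_succ_eq_det_submatrix, mul_comm]
  congr 1
  simp only [Fin.succAbove_last, Fin.val_last, ← two_mul, pow_mul, Dk]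
  simp
  congr 1

/-! ### Deformation in `t` -/

/-- Jacobi-type formula: the determinant is differentiated column by column. -/
lemma hasDerivAt_det {k : ℕ} {M : ℂ → Matrix (Fin k) (Fin k) ℂ} {M' : Matrix (Fin k) (Fin k) ℂ}
    {t : ℂ} (h : ∀ i j, HasDerivAt (fun z => M z i j) (M' i j) t) :
    HasDerivAt (fun z => (M z).det)
      (∑ j, ((M t).updateCol j (fun i => M' i j)).det) t := by
  have h1 : HasDerivAt (fun z => ∑ σ : Equiv.Perm (Fin k),
      ((Equiv.Perm.sign σ : ℤ) : ℂ) * ∏ i, M z (σ i) i)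
      (∑ σ : Equiv.Perm (Fin k), ((Equiv.Perm.sign σ : ℤ) : ℂ) *
        ∑ j, (∏ i ∈ Finset.univ.erase j, M t (σ i) i) • M' (σ j) j) t := by
    refine HasDerivAt.fun_sum fun σ _ => HasDerivAt.const_mul _ ?_
    exact HasDerivAt.fun_finsetProd (fun i _ => h (σ i) i)
  have h2 : (fun z => (M z).det) = (fun z => ∑ σ : Equiv.Perm (Fin k),
      ((Equiv.Perm.sign σ : ℤ) : ℂ) * ∏ i, M z (σ i) i) := by
    ext z; rw [Matrix.det_apply']
  rw [h2]
  refine h1.congr_deriv ?_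
  simp_rw [Matrix.det_apply', Finset.mul_sum]
  rw [Finset.sum_comm]
  refine Finset.sum_congr rfl fun j _ => Finset.sum_congr rfl fun σ _ => ?_
  congr 1
  rw [← Finset.mul_prod_erase Finset.univ _ (Finset.mem_univ j), smul_eq_mul, mul_comm]
  congr 1
  · simp
  · refine Finset.prod_congr rfl fun i hi => ?_
    rw [Matrix.updateCol_ne (Finset.ne_of_mem_erase hi)]

lemma differentiable_Dk (k : ℕ) : Differentiable ℂ (Dk k) := fun t =>
  (hasDerivAt_det (M := Hk k) (M' := fun i j => -mom ((i : ℕ) + j + 1) t)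
    fun i j => hasDerivAt_mom _ t).differentiableAt

lemma differentiableAt_cvec {k : ℕ} {t : ℂ} (hD : Dk k t ≠ 0) (i : Fin k) :
    DifferentiableAt ℂ (fun z => cvec k z i) t := by
  unfold cvec
  refine DifferentiableAt.div (DifferentiableAt.neg ?_) (differentiable_Dk k t) hD
  simp_rw [Matrix.cramer_apply]
  refine (hasDerivAt_det (M' := fun a b => if b = i then -mom ((a : ℕ) + k + 1) t
    else -mom ((a : ℕ) + b + 1) t) fun a b => ?_).differentiableAt
  by_cases hb : b = i
  · subst hb
    simpa using hasDerivAt_mom ((a : ℕ) + k) t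
  · simpa [Matrix.updateCol_ne hb, hb, Hk] using hasDerivAt_mom ((a : ℕ) + b) t

/-- The subleading coefficient of `P_{N+1}`, with opposite sign (the sum of its zeros). -/
noncomputable def Sn (N : ℕ) (t : ℂ) : ℂ := -cvec (N + 1) t (Fin.last N)

/-- The logarithmic derivative of the Hankel determinant is the subleading coefficient. -/
lemma hasDerivAt_Dk {N : ℕ} {t : ℂ} (hD : Dk (N + 1) t ≠ 0) :
    HasDerivAt (Dk (N + 1)) (-Sn N t * Dk (N + 1) t) t := by
  have h := hasDerivAt_det (M := Hk (N + 1)) (M' := fun i j => -mom ((i : ℕ) + j + 1) t)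
    (t := t) fun i j => hasDerivAt_mom _ t
  refine h.congr_deriv ?_
  rw [Finset.sum_eq_single (Fin.last N)]
  · rw [Sn, cvec, neg_neg, div_mul_cancel₀ _ hD, Matrix.cramer_apply]
    have : (fun i : Fin (N + 1) => -mom ((i : ℕ) + (Fin.last N : ℕ) + 1) t)
        = (-1 : ℂ) • fun i : Fin (N + 1) => mom ((i : ℕ) + (N + 1)) t := by
      ext i; simp [add_assoc]
    rw [this, Matrix.det_updateCol_smul]
    simp
  · intro j _ hj
    have hlt : (j : ℕ) + 1 < N + 1 := by
      have := Fin.val_lt_last hj; omega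
    have hne : j ≠ ⟨j + 1, hlt⟩ := by
      intro h; have := congrArg Fin.val h; simp at this
    have : (fun i : Fin (N + 1) => -mom ((i : ℕ) + (j : ℕ) + 1) t)
        = (-1 : ℂ) • fun i : Fin (N + 1) => mom ((i : ℕ) + (j + 1)) t := by
      ext i; simp [add_assoc]
    rw [this, Matrix.det_updateCol_smul, Matrix.det_zero_of_column_eq hne, mul_zero]
    intro i
    simp [Matrix.updateCol_ne hne.symm, Hk]
  · simp

/-- Derivative of `t ↦ P_k` (coefficientwise). -/
noncomputable def dP (k : ℕ) (t : ℂ) : ℂ[X] := polyOf k (fun i => deriv (fun z => cvec k z i) t)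

lemma dP_degree_lt (k : ℕ) (t : ℂ) : (dP k t).degree < k := polyOf_degree_lt _ _

lemma hasDerivAt_Lf_Pk {k : ℕ} {t : ℂ} (hD : Dk k t ≠ 0) (j : ℕ) :
    HasDerivAt (fun z => Lf z (Pk k z * X ^ j))
      (Lf t (dP k t * X ^ j) - Lf t (Pk k t * X ^ (j + 1))) t := by
  have h0 : (fun z => Lf z (Pk k z * X ^ j)) = fun z => mom (k + j) z +
      ∑ i : Fin k, cvec k z i * mom ((i : ℕ) + j) z := by
    ext z
    rw [Pk, add_mul, map_add, ← pow_add, Lf_X_pow, Lf_polyOf]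
  have h1 : HasDerivAt (fun z => mom (k + j) z +
      ∑ i : Fin k, cvec k z i * mom ((i : ℕ) + j) z)
      (-mom (k + j + 1) t + ∑ i : Fin k, (deriv (fun z => cvec k z i) t * mom ((i : ℕ) + j) t
        + cvec k t i * -mom ((i : ℕ) + j + 1) t)) t :=
    (hasDerivAt_mom _ t).add (HasDerivAt.fun_sum fun i _ =>
      (differentiableAt_cvec hD i).hasDerivAt.mul (hasDerivAt_mom _ t))
  rw [h0]
  refine h1.congr_deriv ?_
  rw [Pk, add_mul, map_add, ← pow_add, Lf_X_pow, Lf_polyOf, dP, Lf_polyOf, Finset.sum_add_distrib]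
  simp only [mul_neg, Finset.sum_neg_distrib, add_assoc]
  ring

lemma hasDerivAt_eval_Pk {k : ℕ} {t : ℂ} (hD : Dk k t ≠ 0) (x : ℂ) :
    HasDerivAt (fun z => (Pk k z).eval x) ((dP k t).eval x) t := by
  have h0 : (fun z => (Pk k z).eval x) = fun z => x ^ k + ∑ i : Fin k, cvec k z i * x ^ (i : ℕ) := by
    ext z; simp [Pk, polyOf, eval_finsetSum]
  have h1 : HasDerivAt (fun z => x ^ k + ∑ i : Fin k, cvec k z i * x ^ (i : ℕ))
      (∑ i : Fin k, deriv (fun z => cvec k z i) t * x ^ (i : ℕ)) t :=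
    (HasDerivAt.fun_sum fun i _ =>
      (differentiableAt_cvec hD i).hasDerivAt.mul_const _).const_add _
  rw [h0]
  refine h1.congr_deriv ?_
  simp [dP, polyOf, eval_finsetSum]

lemma isOpen_Dk_ne (k : ℕ) : IsOpen {t | Dk k t ≠ 0} :=
  isOpen_ne_fun (differentiable_Dk k).continuous continuous_const

/-- Differentiating the orthogonality relations. -/
lemma dP_ortho {k : ℕ} {t : ℂ} (hD : Dk k t ≠ 0) {j : ℕ} (hj : j < k) :
    Lf t (dP k t * X ^ j) = Lf t (Pk k t * X ^ (j + 1)) := by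
  have h1 := hasDerivAt_Lf_Pk hD j
  have h2 : (fun z => Lf z (Pk k z * X ^ j)) =ᶠ[nhds t] fun _ => 0 := by
    filter_upwards [(isOpen_Dk_ne k).mem_nhds hD] with z hz
    exact Pk_ortho hz hj
  have h3 := h1.unique ((hasDerivAt_const t (0 : ℂ)).congr_of_eventuallyEq h2)
  linear_combination h3

/-! ### Ladder relations and the differential system in `t` -/

/-- The recurrence coefficient `L(x P_k²) / h_k`. -/
noncomputable def alk (k : ℕ) (t : ℂ) : ℂ := Lf t (Pk k t * (X * Pk k t)) / hk k t

lemma Lf_Pk_mul {k : ℕ} {t : ℂ} (hD : Dk k t ≠ 0) {f : ℂ[X]} (hf : f.degree < (k : WithBot ℕ)) :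
    Lf t (Pk k t * f) = 0 := Lf_eq_zero_of_degree_lt (fun _ hj => Pk_ortho hD hj) hf

lemma X_pow_sub_degree (k : ℕ) (t : ℂ) : (X ^ k - Pk k t).degree < (k : WithBot ℕ) := by
  have : X ^ k - Pk k t = -polyOf k (cvec k t) := by rw [Pk]; ring
  rw [this, degree_neg]
  exact polyOf_degree_lt _ _

lemma Lf_Pk_mul_monic {k : ℕ} {t : ℂ} (hD : Dk k t ≠ 0) {f : ℂ[X]} (c : ℂ)
    (hf : (f - C c * X ^ k).degree < (k : WithBot ℕ)) :
    Lf t (Pk k t * f) = c * hk k t := by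
  have h : Pk k t * f = Pk k t * (f - C c * X ^ k) + C c * (Pk k t * X ^ k) := by ring
  rw [h, map_add, Lf_Pk_mul hD hf, Lf_C_mul, hk, zero_add]

lemma Lf_Pk_sq {k : ℕ} {t : ℂ} (hD : Dk k t ≠ 0) : Lf t (Pk k t * Pk k t) = hk k t := by
  rw [Lf_Pk_mul_monic hD 1, one_mul]
  rw [← degree_neg]
  simpa using X_pow_sub_degree k t

/-- A polynomial of degree at most `k`, minus its `k`-th term, has degree below `k`. -/
lemma sub_top_degree {k : ℕ} {f : ℂ[X]} (hf : f.degree < ((k + 1 : ℕ) : WithBot ℕ)) {c : ℂ} (hc : f.coeff k = c) :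
    (f - C c * X ^ k).degree < (k : WithBot ℕ) := by
  rw [degree_lt_iff_coeff_zero] at hf ⊢
  intro m hm
  rcases hm.eq_or_lt with rfl | hm
  · simp [hc]
  · simp [hf m hm, coeff_X_pow, hm.ne']

lemma Pk_degree_lt (k : ℕ) (t : ℂ) : (Pk k t).degree < ((k + 1 : ℕ) : WithBot ℕ) := by
  rw [Pk_degree]; exact_mod_cast Nat.lt_succ_self k

lemma Pk_coeff_self (k : ℕ) (t : ℂ) : (Pk k t).coeff k = 1 := by
  have := Pk_monic k t
  rwa [Monic, leadingCoeff, Pk_natDegree] at this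

lemma derivative_degree_lt {k : ℕ} {f : ℂ[X]} (hf : f.degree < ((k + 1 : ℕ) : WithBot ℕ)) :
    (derivative f).degree < (k : WithBot ℕ) := by
  rw [degree_lt_iff_coeff_zero] at hf ⊢
  intro m hm
  rw [coeff_derivative, hf (m + 1) (by omega), zero_mul]

lemma X_mul_degree_lt {k : ℕ} {f : ℂ[X]} (hf : f.degree < (k : WithBot ℕ)) :
    (X * f).degree < ((k + 1 : ℕ) : WithBot ℕ) := by
  rw [degree_lt_iff_coeff_zero] at hf ⊢
  intro m hm
  obtain ⟨m, rfl⟩ : ∃ m', m = m' + 1 := ⟨m - 1, by omega⟩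
  rw [coeff_X_mul, hf m (by omega)]

lemma dP_mul {k : ℕ} {t : ℂ} (hD : Dk k t ≠ 0) {f : ℂ[X]} (hf : f.degree < (k : WithBot ℕ)) :
    Lf t (dP k t * f) = Lf t (Pk k t * (X * f)) := by
  have h : Lf t ((dP k t - Pk k t * X) * f) = 0 := by
    refine Lf_eq_zero_of_degree_lt (k := k) (fun j hj => ?_) hf
    have := dP_ortho hD hj
    rw [sub_mul, map_sub, this, mul_assoc, ← pow_succ', sub_self]
  rw [sub_mul, map_sub, mul_assoc] at h
  exact sub_eq_zero.1 h

lemma dP_top {k : ℕ} {t : ℂ} (hD : Dk k t ≠ 0) :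
    Lf t (dP k t * X ^ k) - Lf t (Pk k t * X ^ (k + 1)) = -Lf t (Pk k t * (X * Pk k t)) := by
  have h1 : dP k t * X ^ k = Pk k t * dP k t + dP k t * (X ^ k - Pk k t) := by ring
  have h2 : Pk k t * X ^ (k + 1) = Pk k t * (X * Pk k t) + Pk k t * (X * (X ^ k - Pk k t)) := by
    ring
  rw [h1, h2, map_add, map_add, dP_mul hD (X_pow_sub_degree k t), Lf_Pk_mul hD (dP_degree_lt k t)]
  ring

/-- The norms satisfy `h_k' = -α_k h_k`. -/
lemma hasDerivAt_hk {k : ℕ} {t : ℂ} (hD : Dk k t ≠ 0) (hh : hk k t ≠ 0) :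
    HasDerivAt (hk k) (-alk k t * hk k t) t := by
  refine (hasDerivAt_Lf_Pk hD k).congr_deriv ?_
  rw [dP_top hD, alk]
  field_simp

/-- `a_k = P_k(1)² e^{-t} / h_k`. -/
noncomputable def ak (k : ℕ) (t : ℂ) : ℂ := (Pk k t).eval 1 ^ 2 * exp (-t) / hk k t

/-- Integration by parts applied to `P_k²`. -/
lemma ak_parts {k : ℕ} {t : ℂ} (hD : Dk k t ≠ 0) (hh : hk k t ≠ 0) :
    (Pk k t).eval (-1) ^ 2 * exp t / hk k t = ak k t + t := by
  have h := Lf_parts t (Pk k t * Pk k t)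
  have h1 : Lf t (derivative (Pk k t * Pk k t)) = 0 := by
    have h2 := Lf_Pk_mul hD (derivative_degree_lt (Pk_degree_lt k t))
    rw [derivative_mul, map_add, mul_comm, h2, add_zero]
  rw [h1, Lf_Pk_sq hD, eval_mul, eval_mul] at h
  rw [ak]
  field_simp
  linear_combination h

/-- Integration by parts applied to `x P_k²`. -/
lemma ak_alk {k : ℕ} {t : ℂ} (hD : Dk k t ≠ 0) (hh : hk k t ≠ 0) :
    2 * ak k t + t = 2 * k + 1 - t * alk k t := by
  have h := Lf_parts t (X * (Pk k t * Pk k t))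
  have h1 : Lf t (derivative (X * (Pk k t * Pk k t))) = (2 * k + 1) * hk k t := by
    have h2 : Lf t (Pk k t * (X * derivative (Pk k t))) = k * hk k t := by
      refine Lf_Pk_mul_monic hD _ (sub_top_degree
        (X_mul_degree_lt (derivative_degree_lt (Pk_degree_lt k t))) ?_)
      cases k with
      | zero => simp [Pk, polyOf]
      | succ k => rw [coeff_X_mul, coeff_derivative, Pk_coeff_self]; push_cast; ring
    have h3 : derivative (X * (Pk k t * Pk k t)) = Pk k t * Pk k t
        + (Pk k t * (X * derivative (Pk k t)) + Pk k t * (X * derivative (Pk k t))) := by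
      rw [derivative_mul, derivative_mul, derivative_X]; ring
    rw [h3, map_add, map_add, h2, Lf_Pk_sq hD]; ring
  have h4 : Lf t (X * (Pk k t * Pk k t)) = alk k t * hk k t := by
    rw [alk, div_mul_cancel₀ _ hh]; congr 1; ring
  have h5 := ak_parts hD hh
  rw [h1, h4] at h
  simp only [eval_mul, eval_X] at h
  have h6 : (Pk k t).eval (-1) ^ 2 * exp t = (ak k t + t) * hk k t := by
    rw [← h5]; field_simp
  have h7 : (Pk k t).eval 1 ^ 2 * exp (-t) = ak k t * hk k t := by
    rw [ak]; field_simp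
  have h8 : (2 * ak k t + t) * hk k t = (2 * k + 1 - t * alk k t) * hk k t := by
    linear_combination -h - h6 - h7
  exact mul_right_cancel₀ hh h8

/-! Consecutive polynomials `P = P_{N+1}`, `Q = P_N`. -/

/-- The recurrence coefficient `β = h_{N+1} / h_N`. -/
noncomputable def bet (N : ℕ) (t : ℂ) : ℂ := hk (N + 1) t / hk N t

/-- The set of `t` where the Hankel determinants of sizes `N, N+1, N+2` do not vanish. -/
def UU (N : ℕ) : Set ℂ := {t | Dk N t ≠ 0 ∧ Dk (N + 1) t ≠ 0 ∧ Dk (N + 2) t ≠ 0}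

lemma isOpen_UU (N : ℕ) : IsOpen (UU N) :=
  (isOpen_Dk_ne N).inter ((isOpen_Dk_ne (N + 1)).inter (isOpen_Dk_ne (N + 2)))

lemma hk0_ne {N : ℕ} {t : ℂ} (h : t ∈ UU N) : hk N t ≠ 0 := by
  have := Dk_succ h.1
  intro h0; rw [h0, zero_mul] at this; exact h.2.1 this

lemma hk1_ne {N : ℕ} {t : ℂ} (h : t ∈ UU N) : hk (N + 1) t ≠ 0 := by
  have := Dk_succ h.2.1
  intro h0; rw [h0, zero_mul] at this; exact h.2.2 this

lemma bet_ne {N : ℕ} {t : ℂ} (h : t ∈ UU N) : bet N t ≠ 0 := div_ne_zero (hk1_ne h) (hk0_ne h)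

lemma bet_eq {N : ℕ} {t : ℂ} (h : t ∈ UU N) :
    bet N t = Dk (N + 2) t * Dk N t / Dk (N + 1) t ^ 2 := by
  have h1 := Dk_succ h.2.1
  have h2 := Dk_succ h.1
  have h3 := (hk0_ne h)
  have h4 := h.1
  rw [bet, h1, h2]
  field_simp

lemma Pk_ortho_low {N : ℕ} {t : ℂ} (h : t ∈ UU N) : Lf t (Pk (N + 1) t * Pk N t) = 0 :=
  Lf_Pk_mul h.2.1 (Pk_degree_lt N t)

/-- Lowering relation: `∂ₜ P_{N+1} = β P_N`, since `∂ₜ P_{N+1}` has degree at most `N` and is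
orthogonal to lower degrees. -/
lemma dP_succ {N : ℕ} {t : ℂ} (h : t ∈ UU N) : dP (N + 1) t = C (bet N t) * Pk N t := by
  rw [← sub_eq_zero]
  refine ortho_uniq h.2.1 ?_ fun j hj => ?_
  · refine (degree_sub_le _ _).trans_lt (max_lt (dP_degree_lt _ _) ?_)
    refine (degree_mul_le _ _).trans_lt ?_
    rw [Pk_degree]
    calc (C (bet N t)).degree + (N : WithBot ℕ) ≤ 0 + N := by gcongr; exact degree_C_le
      _ < _ := by rw [zero_add]; exact_mod_cast Nat.lt_succ_self N
  · rw [sub_mul, map_sub, dP_ortho h.2.1 hj, mul_assoc, Lf_C_mul]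
    rcases (Nat.lt_succ_iff.1 hj).eq_or_lt with rfl | hj'
    · have h1 : Lf t (Pk (j + 1) t * X ^ (j + 1)) = hk (j + 1) t := rfl
      have h2 : Lf t (Pk j t * X ^ j) = hk j t := rfl
      rw [h1, h2, bet, div_mul_cancel₀ _ (hk0_ne h), sub_self]
    · rw [Pk_ortho h.2.1 (by omega), Pk_ortho h.1 hj', mul_zero, sub_zero]

/-- The derivative `∂ₜ P_N` expressed through `P_N` and `P_{N+1}`, which replaces `β_N P_{N-1}` so
that only two consecutive polynomials occur. -/
lemma dP_self {N : ℕ} {t : ℂ} (h : t ∈ UU N) :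
    dP N t = (X - C (alk N t)) * Pk N t - Pk (N + 1) t := by
  have hmon : ((X - C (alk N t)) * Pk N t).Monic := (monic_X_sub_C _).mul (Pk_monic N t)
  rw [← sub_eq_zero]
  refine ortho_uniq h.2.1 ?_ fun j hj => ?_
  · refine (degree_sub_le _ _).trans_lt (max_lt ((dP_degree_lt _ _).trans
      (by exact_mod_cast Nat.lt_succ_self N)) ?_)
    have hd : ((X - C (alk N t)) * Pk N t).degree = ((N + 1 : ℕ) : WithBot ℕ) := by
      rw [degree_mul, degree_X_sub_C, Pk_degree, add_comm]; rfl
    rw [← hd]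
    refine degree_sub_lt_left ?_ hmon.ne_zero ?_
    · rw [hd, Pk_degree]
    · rw [hmon, Pk_monic]
  · have h1 : (dP N t - ((X - C (alk N t)) * Pk N t - Pk (N + 1) t)) * X ^ j
        = dP N t * X ^ j - Pk N t * X ^ (j + 1) + C (alk N t) * (Pk N t * X ^ j)
          + Pk (N + 1) t * X ^ j := by ring
    rw [h1, map_add, map_add, map_sub, Lf_C_mul, Pk_ortho h.2.1 hj]
    rcases (Nat.lt_succ_iff.1 hj).eq_or_lt with rfl | hj'
    · rw [dP_top h.1, alk]
      have h2 : Lf t (Pk j t * X ^ j) = hk j t := rfl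
      rw [h2, div_mul_cancel₀ _ (hk0_ne h)]
      ring
    · rw [dP_ortho h.1 hj', Pk_ortho h.1 hj']
      ring

/-- Toda-type equation `S' = -β`. -/
lemma hasDerivAt_Sn {N : ℕ} {t : ℂ} (h : t ∈ UU N) : HasDerivAt (Sn N) (-bet N t) t := by
  have h1 : HasDerivAt (Sn N) (-(deriv (fun z => cvec (N + 1) z (Fin.last N)) t)) t :=
    (differentiableAt_cvec h.2.1 (Fin.last N)).hasDerivAt.neg
  refine h1.congr_deriv ?_
  have h2 := congrArg (fun f => coeff f N) (dP_succ h)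
  have h3 := polyOf_coeff (N + 1) (fun i => deriv (fun z => cvec (N + 1) z i) t) (Fin.last N)
  simp only [coeff_C_mul, Pk_coeff_self, mul_one] at h2
  rw [← h2, dP]
  rw [Fin.val_last] at h3
  rw [h3]

/-- Toda-type equation for `β`. -/
lemma hasDerivAt_bet {N : ℕ} {t : ℂ} (h : t ∈ UU N) :
    HasDerivAt (bet N) (bet N t * (alk N t - alk (N + 1) t)) t := by
  have h1 := (hasDerivAt_hk h.2.1 (hk1_ne h)).div (hasDerivAt_hk h.1 (hk0_ne h)) (hk0_ne h)
  refine h1.congr_deriv ?_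
  have := hk0_ne h
  rw [bet]
  field_simp
  ring

/-- `c = P(1) Q(1) e^{-t} / h_N`. -/
noncomputable def cc (N : ℕ) (t : ℂ) : ℂ :=
  (Pk (N + 1) t).eval 1 * (Pk N t).eval 1 * exp (-t) / hk N t

/-- `d = P(-1) Q(-1) e^{t} / h_N`. -/
noncomputable def dd (N : ℕ) (t : ℂ) : ℂ :=
  (Pk (N + 1) t).eval (-1) * (Pk N t).eval (-1) * exp t / hk N t

/-- Integration by parts applied to `P Q`. -/
lemma cc_sub_dd {N : ℕ} {t : ℂ} (h : t ∈ UU N) : cc N t - dd N t = N + 1 := by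
  have h0 := Lf_parts t (Pk N t * Pk (N + 1) t)
  have h1 : Lf t (Pk N t * derivative (Pk (N + 1) t)) = (N + 1) * hk N t := by
    refine Lf_Pk_mul_monic h.1 _ (sub_top_degree (derivative_degree_lt (Pk_degree_lt _ t)) ?_)
    rw [coeff_derivative, Pk_coeff_self, one_mul]
  have h2 : Lf t (Pk (N + 1) t * derivative (Pk N t)) = 0 :=
    Lf_Pk_mul h.2.1 ((derivative_degree_lt (Pk_degree_lt _ t)).trans
      (by exact_mod_cast Nat.lt_succ_self N))
  rw [derivative_mul, map_add, h1, mul_comm (derivative _), h2, mul_comm (Pk N t),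
    Pk_ortho_low h] at h0
  simp only [eval_mul] at h0
  have := hk0_ne h
  rw [cc, dd]
  field_simp
  linear_combination -h0

/-- Integration by parts applied to `x P Q`. -/
lemma cc_add_dd {N : ℕ} {t : ℂ} (h : t ∈ UU N) : cc N t + dd N t = Sn N t - t * bet N t := by
  have h0 := Lf_parts t (X * (Pk N t * Pk (N + 1) t))
  have hX : Lf t (Pk (N + 1) t * (X * Pk N t)) = hk (N + 1) t := by
    rw [Lf_Pk_mul_monic h.2.1 1, one_mul]
    refine sub_top_degree (X_mul_degree_lt (Pk_degree_lt N t)) ?_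
    rw [coeff_X_mul, Pk_coeff_self]
  have h1 : Lf t (Pk N t * (X * derivative (Pk (N + 1) t) - C ((N : ℂ) + 1) * Pk (N + 1) t))
      = Sn N t * hk N t := by
    refine Lf_Pk_mul_monic h.1 _ (sub_top_degree ?_ ?_)
    · rw [degree_lt_iff_coeff_zero]
      intro m hm
      obtain ⟨m, rfl⟩ : ∃ m', m = m' + 1 := ⟨m - 1, by omega⟩
      rw [coeff_sub, coeff_X_mul, coeff_derivative, coeff_C_mul]
      rcases hm.eq_or_lt with hm | hm
      · obtain rfl : N = m := by omega
        ring
      · have := (degree_lt_iff_coeff_zero _ _).1 (Pk_degree_lt (N + 1) t) (m + 1) (by omega)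
        rw [this]; ring
    · have hc : (Pk (N + 1) t).coeff N = -Sn N t := by
        have h3 := polyOf_coeff (N + 1) (cvec (N + 1) t) (Fin.last N)
        rw [Fin.val_last] at h3
        rw [Pk, coeff_add, h3, Sn, coeff_X_pow]
        simp
      rw [coeff_sub, coeff_C_mul, hc]
      cases N with
      | zero => simp
      | succ N => rw [coeff_X_mul, coeff_derivative, hc]; push_cast; ring
  have h2 : Lf t (Pk (N + 1) t * (X * derivative (Pk N t))) = 0 :=
    Lf_Pk_mul h.2.1 (X_mul_degree_lt (derivative_degree_lt (Pk_degree_lt _ t)))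
  have h3 : derivative (X * (Pk N t * Pk (N + 1) t)) =
      Pk N t * (X * derivative (Pk (N + 1) t) - C ((N : ℂ) + 1) * Pk (N + 1) t)
      + Pk (N + 1) t * (X * derivative (Pk N t))
      + C ((N : ℂ) + 2) * (Pk (N + 1) t * Pk N t) := by
    have : (C ((N : ℂ) + 2) : ℂ[X]) = C ((N : ℂ) + 1) + 1 := by
      rw [← C_1, ← C_add]; congr 1; ring
    rw [derivative_mul, derivative_mul, derivative_X, this]
    ring
  have h4 : X * (Pk N t * Pk (N + 1) t) = Pk (N + 1) t * (X * Pk N t) := by ring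
  rw [h3, map_add, map_add, Lf_C_mul, h1, h2, Pk_ortho_low h, h4, hX] at h0
  simp only [eval_mul, eval_X] at h0
  have := hk0_ne h
  rw [cc, dd, bet]
  field_simp
  linear_combination -h0

lemma cc_sq {N : ℕ} {t : ℂ} (h : t ∈ UU N) : cc N t ^ 2 = ak (N + 1) t * ak N t * bet N t := by
  have := hk0_ne h
  have := hk1_ne h
  rw [cc, ak, ak, bet]
  field_simp

lemma dd_sq {N : ℕ} {t : ℂ} (h : t ∈ UU N) :
    dd N t ^ 2 = (ak (N + 1) t + t) * (ak N t + t) * bet N t := by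
  rw [← ak_parts h.2.1 (hk1_ne h), ← ak_parts h.1 (hk0_ne h)]
  have := hk0_ne h
  have := hk1_ne h
  rw [dd, bet]
  field_simp

lemma hasDerivAt_ak {N : ℕ} {t : ℂ} (h : t ∈ UU N) :
    HasDerivAt (ak N) (ak N t - alk N t * ak N t - 2 * cc N t) t := by
  have h1 := (((hasDerivAt_eval_Pk h.1 1).pow 2).mul (hasDerivAt_neg t).cexp).div
    (hasDerivAt_hk h.1 (hk0_ne h)) (hk0_ne h)
  refine h1.congr_deriv ?_
  rw [dP_self h, ak, cc]
  have := hk0_ne h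
  simp
  field_simp
  ring

lemma hasDerivAt_ak_succ {N : ℕ} {t : ℂ} (h : t ∈ UU N) :
    HasDerivAt (ak (N + 1)) (2 * cc N t - ak (N + 1) t + alk (N + 1) t * ak (N + 1) t) t := by
  have h1 := (((hasDerivAt_eval_Pk h.2.1 1).pow 2).mul (hasDerivAt_neg t).cexp).div
    (hasDerivAt_hk h.2.1 (hk1_ne h)) (hk1_ne h)
  refine h1.congr_deriv ?_
  rw [dP_succ h, ak, cc, bet]
  have := hk0_ne h
  have := hk1_ne h
  simp
  field_simp
  ring

/-- `T = d(t² β)/dt`. -/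
noncomputable def Tn (N : ℕ) (t : ℂ) : ℂ := 2 * t * bet N t * (ak (N + 1) t - ak N t)

/-- `σ = S - tβ`. -/
noncomputable def sig (N : ℕ) (t : ℂ) : ℂ := Sn N t - t * bet N t

/-- The identity `(c - d)(c + d) = c² - d²`, with both sides evaluated. -/
lemma sig_rel {N : ℕ} {t : ℂ} (h : t ∈ UU N) :
    (N + 1) * sig N t = -(bet N t * t * (ak (N + 1) t + ak N t + t)) := by
  have h1 := cc_sub_dd h
  have h2 := cc_add_dd h
  have h3 := cc_sq h
  have h4 := dd_sq h
  rw [sig, ← h1, ← h2]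
  linear_combination h3 - h4

lemma hasDerivAt_B {N : ℕ} {t : ℂ} (h : t ∈ UU N) :
    HasDerivAt (fun t => t ^ 2 * bet N t) (Tn N t) t := by
  refine ((hasDerivAt_pow 2 t).mul (hasDerivAt_bet h)).congr_deriv ?_
  have h1 := ak_alk h.1 (hk0_ne h)
  have h2 := ak_alk h.2.1 (hk1_ne h)
  rw [Tn]
  push_cast at h2 ⊢
  linear_combination t * bet N t * (h1 - h2)

/-- The algebraic first integral of the system in `t`. -/
lemma Tn_sq {N : ℕ} {t : ℂ} (h : t ∈ UU N) :
    Tn N t ^ 2 = 4 * (t ^ 2 * bet N t - sig N t ^ 2) * (t ^ 2 * bet N t - (N + 1) ^ 2) := by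
  have h1 := cc_sub_dd h
  have h2 := cc_add_dd h
  have h3 := cc_sq h
  have h4 := sig_rel h
  rw [← sig] at h2
  have h5 : cc N t = (N + 1 + sig N t) / 2 := by linear_combination (h1 + h2) / 2
  rw [h5] at h3
  have h6 : ((N + 1) * sig N t + t ^ 2 * bet N t) ^ 2
      = (bet N t * t * (ak (N + 1) t + ak N t)) ^ 2 := by rw [h4]; ring
  rw [Tn]
  linear_combination -4 * h6 + 16 * t ^ 2 * bet N t * h3

/-- The second-order equation for `t² β`. -/
lemma hasDerivAt_Tn {N : ℕ} {t : ℂ} (h : t ∈ UU N) (ht : t ≠ 0) :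
    HasDerivAt (Tn N) (2 * ((t + 2 * sig N t) * (t ^ 2 * bet N t - (N + 1) ^ 2)
      + t * (t ^ 2 * bet N t - sig N t ^ 2)) / t) t := by
  refine ((((hasDerivAt_id t).const_mul 2).mul (hasDerivAt_bet h)).mul
    ((hasDerivAt_ak_succ h).sub (hasDerivAt_ak h))).congr_deriv ?_
  have h1 := cc_sub_dd h
  have h2 := cc_add_dd h
  have h3 := cc_sq h
  have h4 := sig_rel h
  rw [← sig] at h2
  have h5 : cc N t = (N + 1 + sig N t) / 2 := by linear_combination (h1 + h2) / 2
  have hn := ak_alk h.1 (hk0_ne h)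
  have hn1 := ak_alk h.2.1 (hk1_ne h)
  push_cast at hn1
  have e1 : alk N t = (2 * N + 1 - (2 * ak N t + t)) / t := by field_simp; linear_combination hn
  have e2 : alk (N + 1) t = (2 * (N + 1) + 1 - (2 * ak (N + 1) t + t)) / t := by
    field_simp; linear_combination hn1
  rw [h5] at h3
  rw [e1, e2, h5]
  simp only [id, Pi.mul_apply, Pi.sub_apply, mul_one]
  field_simp
  linear_combination (4 * t) * h3 + 2 * (N + 1 - t) * h4

/-- The recurrence coefficient `α` in terms of `β`, `σ` and `T`. -/
lemma alk_rel {N : ℕ} {t : ℂ} (h : t ∈ UU N) :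
    t ^ 2 * bet N t * alk (N + 1) t =
      (2 * N + 3) * t * bet N t + (N + 1) * sig N t - Tn N t / 2 := by
  have h4 := sig_rel h
  have hn1 := ak_alk h.2.1 (hk1_ne h)
  push_cast at hn1
  rw [h4, Tn]
  linear_combination t * bet N t * hn1

/-! ### The three-term recurrence -/

/-- The three-term recurrence. -/
lemma three_term {N : ℕ} {t : ℂ} (h : t ∈ UU N) :
    X * Pk (N + 1) t = Pk (N + 2) t + C (alk (N + 1) t) * Pk (N + 1) t
      + C (bet N t) * Pk N t := by
  have key : X * Pk (N + 1) t - Pk (N + 2) t - C (alk (N + 1) t) * Pk (N + 1) t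
      - C (bet N t) * Pk N t = 0 := by
    have hC : ∀ (c : ℂ) (f : ℂ[X]) (k : ℕ), f.degree < (k : WithBot ℕ) →
        (C c * f).degree < (k : WithBot ℕ) := by
      intro c f k hf
      rw [degree_lt_iff_coeff_zero] at hf ⊢
      intro m hm
      rw [coeff_C_mul, hf m hm, mul_zero]
    have low : ∀ j < N + 1, Lf t ((X * Pk (N + 1) t - Pk (N + 2) t
        - C (alk (N + 1) t) * Pk (N + 1) t - C (bet N t) * Pk N t) * X ^ j) = 0 := by
      intro j hj
      have h1 : (X * Pk (N + 1) t - Pk (N + 2) t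
        - C (alk (N + 1) t) * Pk (N + 1) t - C (bet N t) * Pk N t) * X ^ j
        = Pk (N + 1) t * X ^ (j + 1) - Pk (N + 2) t * X ^ j
          - C (alk (N + 1) t) * (Pk (N + 1) t * X ^ j) - C (bet N t) * (Pk N t * X ^ j) := by
        ring
      rw [h1, map_sub, map_sub, map_sub, Lf_C_mul, Lf_C_mul, Pk_ortho h.2.1 hj,
        Pk_ortho h.2.2 (by omega)]
      rcases (Nat.lt_succ_iff.1 hj).eq_or_lt with rfl | hj'
      · have h1 : Lf t (Pk (j + 1) t * X ^ (j + 1)) = hk (j + 1) t := rfl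
        have h2 : Lf t (Pk j t * X ^ j) = hk j t := rfl
        rw [h1, h2, bet, div_mul_cancel₀ _ (hk0_ne h)]
        ring
      · rw [Pk_ortho h.2.1 (by omega), Pk_ortho h.1 hj']
        ring
    refine ortho_uniq h.2.2 ?_ fun j hj => ?_
    · refine (degree_sub_le _ _).trans_lt (max_lt ((degree_sub_le _ _).trans_lt (max_lt ?_ ?_)) ?_)
      · have hd : (X * Pk (N + 1) t).degree = ((N + 2 : ℕ) : WithBot ℕ) := by
          rw [degree_mul, degree_X, Pk_degree, add_comm]; rfl
        have hm : (X * Pk (N + 1) t).Monic := monic_X.mul (Pk_monic _ t)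
        rw [← hd]
        refine degree_sub_lt_left ?_ hm.ne_zero ?_
        · rw [hd, Pk_degree]
        · rw [hm, Pk_monic]
      · exact hC _ _ _ (Pk_degree_lt (N + 1) t)
      · exact hC _ _ _ ((Pk_degree_lt N t).trans (by exact_mod_cast Nat.lt_succ_self _))
    · rcases (Nat.lt_succ_iff.1 hj).eq_or_lt with rfl | hj'
      · have h2 := Lf_eq_zero_of_degree_lt low (X_pow_sub_degree (N + 1) t)
        have h3 : (X * Pk (N + 1) t - Pk (N + 2) t
          - C (alk (N + 1) t) * Pk (N + 1) t - C (bet N t) * Pk N t) * X ^ (N + 1)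
          = (X * Pk (N + 1) t - Pk (N + 2) t
          - C (alk (N + 1) t) * Pk (N + 1) t - C (bet N t) * Pk N t) * (X ^ (N + 1) - Pk (N + 1) t)
          + (Pk (N + 1) t * (X * Pk (N + 1) t) - Pk (N + 2) t * Pk (N + 1) t
            - C (alk (N + 1) t) * (Pk (N + 1) t * Pk (N + 1) t)
            - C (bet N t) * (Pk (N + 1) t * Pk N t)) := by ring
        rw [h3, map_add, h2, map_sub, map_sub, map_sub, Lf_C_mul, Lf_C_mul, Pk_ortho_low h,
          Lf_Pk_mul h.2.2 (Pk_degree_lt (N + 1) t), Lf_Pk_sq h.2.1, alk,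
          div_mul_cancel₀ _ (hk1_ne h)]
        ring
      · exact low j (by omega)
  linear_combination key

lemma Pk_coeff_N (N : ℕ) (t : ℂ) : (Pk (N + 1) t).coeff N = -Sn N t := by
  have h3 := polyOf_coeff (N + 1) (cvec (N + 1) t) (Fin.last N)
  rw [Fin.val_last] at h3
  rw [Pk, coeff_add, h3, Sn, coeff_X_pow]
  simp

lemma alk_eq_Sn {N : ℕ} {t : ℂ} (h : t ∈ UU N) : alk (N + 1) t = Sn (N + 1) t - Sn N t := by
  have h1 := congrArg (fun f => coeff f (N + 1)) (three_term h)
  simp only [coeff_X_mul, coeff_add, coeff_C_mul, Pk_coeff_N, Pk_coeff_self] at h1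
  rw [(degree_lt_iff_coeff_zero _ _).1 (Pk_degree_lt N t) (N + 1) le_rfl] at h1
  linear_combination -h1

/-! ### Positivity for real `t` -/

lemma Lf_conj (t : ℝ) (f : ℂ[X]) :
    Lf t (f.map (starRingEnd ℂ)) = conj (Lf t f) := by
  rw [Lf_apply, Lf_apply, intervalIntegral.integral_of_le (by norm_num),
    intervalIntegral.integral_of_le (by norm_num), ← integral_conj]
  refine MeasureTheory.setIntegral_congr_fun measurableSet_Ioc fun x _ => ?_
  simp only [map_mul, ← exp_conj, map_neg, conj_ofReal]
  congr 1
  have := eval_map_apply (p := f) (f := starRingEnd ℂ) (x : ℂ)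
  simpa using this

/-- Positivity of `∫ (u + v x) |f|² e^{-tx} dx` for a nonnegative linear factor; the factors `1` and
`1 ± x` give `h_k > 0` and the nonvanishing of `P_k(±1)`. -/
lemma Lf_pos (t : ℝ) {f : ℂ[X]} (hf : f ≠ 0) (u v : ℝ) (hu : ∀ x ∈ Set.Icc (-1 : ℝ) 1, 0 ≤ u + v * x)
    (huv : C (u : ℂ) + C (v : ℂ) * X ≠ 0) :
    ∃ r : ℝ, 0 < r ∧ Lf t (f * ((C (u : ℂ) + C (v : ℂ) * X) * f.map (starRingEnd ℂ))) = r := by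
  refine ⟨∫ x : ℝ in (-1 : ℝ)..1, (u + v * x) * ‖f.eval (x : ℂ)‖ ^ 2 * Real.exp (-t * x), ?_, ?_⟩
  · refine intervalIntegral.integral_pos (by norm_num) (Continuous.continuousOn (by fun_prop)) ?_ ?_
    · intro x hx
      have := hu x ⟨hx.1.le, hx.2⟩
      positivity
    · have hne : f * (C (u : ℂ) + C (v : ℂ) * X) ≠ 0 := mul_ne_zero hf huv
      by_contra hcon
      push Not at hcon
      apply hne
      refine eq_zero_of_infinite_isRoot _ (Set.Infinite.mono ?_
        ((Set.Icc_infinite (show (-1 : ℝ) < 1 by norm_num)).image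
          (f := fun x : ℝ => (x : ℂ)) ofReal_injective.injOn))
      rintro _ ⟨x, hx, rfl⟩
      have h1 := hcon x hx
      have h2 := hu x hx
      have h3 : (u + v * x) * ‖f.eval (x : ℂ)‖ ^ 2 = 0 := by
        have : (u + v * x) * ‖f.eval (x : ℂ)‖ ^ 2 ≤ 0 := by
          by_contra h4
          push Not at h4
          exact absurd h1 (not_le.2 (mul_pos h4 (Real.exp_pos _)))
        exact le_antisymm this (by positivity)
      rw [Set.mem_ofPred_eq, IsRoot, eval_mul]
      rcases mul_eq_zero.1 h3 with h4 | h4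
      · have : ((u : ℂ) + v * x) = 0 := by exact_mod_cast h4
        simp [this]
      · have : f.eval (x : ℂ) = 0 := by simpa using h4
        simp [this]
  · rw [Lf_apply, ← intervalIntegral.integral_ofReal]
    refine intervalIntegral.integral_congr fun x _ => ?_
    have h1 := eval_map_apply (p := f) (f := starRingEnd ℂ) (x : ℂ)
    rw [conj_ofReal] at h1
    simp only [eval_mul, eval_add, eval_C, eval_X, h1]
    push_cast
    have := mul_conj (f.eval (x : ℂ))
    rw [normSq_eq_norm_sq] at this
    push_cast at this
    rw [← this]
    ring

lemma Lf_pos' (t : ℝ) {f : ℂ[X]} (hf : f ≠ 0) :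
    ∃ r : ℝ, 0 < r ∧ Lf t (f * f.map (starRingEnd ℂ)) = r := by
  simpa using Lf_pos t hf 1 0 (fun x _ => by simp) (by simp)

lemma degree_map_conj (f : ℂ[X]) : (f.map (starRingEnd ℂ)).degree = f.degree :=
  degree_map_eq_of_injective (starRingEnd ℂ).injective f

lemma Dk_ne_zero_real (k : ℕ) (t : ℝ) : Dk k t ≠ 0 := by
  intro h0
  obtain ⟨v, hv, hv2⟩ := Matrix.exists_mulVec_eq_zero_iff.2 h0
  have hf : polyOf k v ≠ 0 := by
    intro h
    apply hv
    ext i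
    rw [← polyOf_coeff k v i, h]; simp
  obtain ⟨r, hr, hr2⟩ := Lf_pos' t hf
  rw [Lf_eq_zero_of_degree_lt (k := k)] at hr2
  · exact hr.ne' (by exact_mod_cast hr2.symm)
  · intro j hj
    have := congrFun hv2 ⟨j, hj⟩
    rw [Lf_polyOf]
    simp only [Matrix.mulVec, dotProduct, Hk, Matrix.of_apply, Pi.zero_apply] at this
    rw [← this]
    refine Finset.sum_congr rfl fun i _ => ?_
    rw [mul_comm, add_comm (i : ℕ)]
  · rw [degree_map_conj]; exact polyOf_degree_lt _ _

lemma real_mem_UU (N : ℕ) (t : ℝ) : (t : ℂ) ∈ UU N :=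
  ⟨Dk_ne_zero_real _ t, Dk_ne_zero_real _ t, Dk_ne_zero_real _ t⟩

lemma Pk_conj (k : ℕ) (t : ℝ) : (Pk k t).map (starRingEnd ℂ) = Pk k t := by
  rw [← sub_eq_zero]
  have hm : ((Pk k t).map (starRingEnd ℂ)).Monic := (Pk_monic k t).map _
  refine ortho_uniq (Dk_ne_zero_real k t) ?_ fun j hj => ?_
  · rw [← Pk_degree k t, ← degree_map_conj (Pk k t)]
    refine degree_sub_lt_left (degree_map_conj _) hm.ne_zero ?_
    rw [hm, Pk_monic]
  · have h1 : (Pk k t).map (starRingEnd ℂ) * X ^ j = (Pk k t * X ^ j).map (starRingEnd ℂ) := by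
      simp
    rw [sub_mul, map_sub, h1, Lf_conj, Pk_ortho (Dk_ne_zero_real k t) hj]
    simp

lemma hk_real (k : ℕ) (t : ℝ) : ∃ r : ℝ, 0 < r ∧ hk k t = r := by
  have := Lf_pos' t (Pk_monic k t).ne_zero
  rwa [Pk_conj, Lf_Pk_sq (Dk_ne_zero_real k t)] at this

lemma eval_Pk_real (k : ℕ) (t x : ℝ) : ∃ r : ℝ, (Pk k t).eval (x : ℂ) = r := by
  have h1 := eval_map_apply (p := Pk k t) (f := starRingEnd ℂ) (x : ℂ)
  rw [conj_ofReal, Pk_conj] at h1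
  exact ⟨_, (conj_eq_iff_re.1 h1.symm).symm⟩

lemma coeff_Pk_real (k : ℕ) (t : ℝ) (j : ℕ) : ∃ r : ℝ, (Pk k t).coeff j = r := by
  have h1 := congrArg (fun f => coeff f j) (Pk_conj k t)
  simp only [coeff_map] at h1
  exact ⟨_, (conj_eq_iff_re.1 h1).symm⟩

/-- The zeros of `P_k` are not at the endpoints: otherwise `P_k = (x - x₀) f` and `f` violates
orthogonality by positivity of `∫ (1 ± x) |f|² e^{-tx} dx`. -/
lemma eval_Pk_ne (k : ℕ) (t : ℝ) (x : ℝ) (hx : x = 1 ∨ x = -1) : (Pk k t).eval (x : ℂ) ≠ 0 := by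
  intro h0
  obtain ⟨g, hg⟩ := dvd_iff_isRoot.2 h0
  have hP := (Pk_monic k t).ne_zero
  have hg0 : g ≠ 0 := by rintro rfl; rw [mul_zero] at hg; exact hP hg
  have hx2 : x * x = 1 := by rcases hx with rfl | rfl <;> norm_num
  have hd : g.degree < (k : WithBot ℕ) := by
    have h1 := congrArg natDegree hg
    rw [Pk_natDegree, natDegree_mul (X_sub_C_ne_zero _) hg0, natDegree_X_sub_C] at h1
    rw [degree_eq_natDegree hg0]
    exact_mod_cast (by omega)
  have hux : ((x : ℂ)) * x = 1 := by exact_mod_cast hx2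
  obtain ⟨r, hr, hr2⟩ := Lf_pos t hg0 1 (-x) (by
    intro y hy
    rcases hx with rfl | rfl
    · linarith [hy.2]
    · linarith [hy.1]) (by
    intro h
    have := congrArg (fun f => coeff f 0) h
    simp at this)
  have h2 : g * ((C ((1 : ℝ) : ℂ) + C ((-x : ℝ) : ℂ) * X) * g.map (starRingEnd ℂ))
      = C (-x : ℂ) * (Pk k t * g.map (starRingEnd ℂ)) := by
    have h3 : (C (x : ℂ) * C (x : ℂ) : ℂ[X]) = 1 := by rw [← C_mul, hux, C_1]
    rw [hg]
    push_cast
    simp only [C_neg, C_1]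
    linear_combination (-g * g.map (starRingEnd ℂ)) * h3
  rw [h2, Lf_C_mul, Lf_Pk_mul (Dk_ne_zero_real k t) (by rwa [degree_map_conj]), mul_zero] at hr2
  exact hr.ne' (by exact_mod_cast hr2.symm)

lemma ak_real (k : ℕ) (t : ℝ) : ∃ r : ℝ, 0 < r ∧ ak k t = r := by
  obtain ⟨h, hh, hh2⟩ := hk_real k t
  obtain ⟨e, he⟩ := eval_Pk_real k t 1
  have hne := eval_Pk_ne k t 1 (Or.inl rfl)
  rw [he] at hne
  have hne' : e ≠ 0 := by exact_mod_cast hne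
  refine ⟨e ^ 2 * Real.exp (-t) / h, by positivity, ?_⟩
  rw [ofReal_one] at he
  rw [ak, he, hh2]
  push_cast
  rfl

lemma bet_real (N : ℕ) (t : ℝ) : ∃ r : ℝ, 0 < r ∧ bet N t = r := by
  obtain ⟨h, hh, hh2⟩ := hk_real N t
  obtain ⟨h', hh', hh2'⟩ := hk_real (N + 1) t
  exact ⟨h' / h, by positivity, by rw [bet, hh2, hh2']; push_cast; rfl⟩

lemma Sn_real (N : ℕ) (t : ℝ) : ∃ r : ℝ, Sn N t = r := by
  obtain ⟨r, hr⟩ := coeff_Pk_real (N + 1) t N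
  rw [Pk_coeff_N] at hr
  exact ⟨-r, by push_cast; rw [← hr]; ring⟩

lemma cc_real (N : ℕ) (t : ℝ) : ∃ r : ℝ, r ≠ 0 ∧ cc N t = r := by
  obtain ⟨h, hh, hh2⟩ := hk_real N t
  obtain ⟨e, he⟩ := eval_Pk_real N t 1
  obtain ⟨e', he'⟩ := eval_Pk_real (N + 1) t 1
  have hne := eval_Pk_ne N t 1 (Or.inl rfl)
  have hne' := eval_Pk_ne (N + 1) t 1 (Or.inl rfl)
  rw [he] at hne
  rw [he'] at hne'
  have h1 : e ≠ 0 := by exact_mod_cast hne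
  have h2 : e' ≠ 0 := by exact_mod_cast hne'
  refine ⟨e' * e * Real.exp (-t) / h, by positivity, ?_⟩
  rw [ofReal_one] at he he'
  rw [cc, he, he', hh2]
  push_cast
  rfl

lemma dd_ne (N : ℕ) (t : ℝ) : dd N t ≠ 0 := by
  have hne := eval_Pk_ne N t (-1) (Or.inr rfl)
  have hne' := eval_Pk_ne (N + 1) t (-1) (Or.inr rfl)
  push_cast at hne hne'
  exact div_ne_zero (mul_ne_zero (mul_ne_zero hne' hne) (exp_ne_zero _))
    (hk0_ne (real_mem_UU N t))

lemma continuous_cc (N : ℕ) : Continuous fun t : ℝ => cc N t := by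
  have h1 : ∀ t : ℝ, ContinuousAt (cc N) (t : ℂ) := fun t =>
    (((hasDerivAt_eval_Pk (Dk_ne_zero_real (N + 1) t) 1).continuousAt.mul
      (hasDerivAt_eval_Pk (Dk_ne_zero_real N t) 1).continuousAt).mul
      (by fun_prop)).div
      (hasDerivAt_hk (Dk_ne_zero_real N t) (hk0_ne (real_mem_UU N t))).continuousAt
      (hk0_ne (real_mem_UU N t))
  exact continuous_iff_continuousAt.2 fun t => (h1 t).comp continuous_ofReal.continuousAt

lemma cc_zero (N : ℕ) : cc N 0 = (N + 1) / 2 ∧ dd N 0 = -((N + 1) / 2) := by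
  have h := real_mem_UU N 0
  rw [ofReal_zero] at h
  have h1 := cc_sub_dd h
  have h2 := cc_sq h
  have h3 := dd_sq h
  have h4 : (cc N 0 - dd N 0) * (cc N 0 + dd N 0) = 0 := by linear_combination h2 - h3
  rw [h1] at h4
  have h5 : cc N 0 + dd N 0 = 0 := (mul_eq_zero.1 h4).resolve_left (by exact_mod_cast N.succ_ne_zero)
  constructor
  · linear_combination (h1 + h5) / 2
  · linear_combination (h5 - h1) / 2

lemma Sn_zero (N : ℕ) : Sn N 0 = 0 := by
  have h := real_mem_UU N 0
  rw [ofReal_zero] at h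
  have h1 := cc_add_dd h
  rw [(cc_zero N).1, (cc_zero N).2] at h1
  linear_combination -h1

lemma alk_zero (N : ℕ) : alk (N + 1) 0 = 0 := by
  have h := real_mem_UU N 0
  rw [ofReal_zero] at h
  rw [alk_eq_Sn h, Sn_zero, Sn_zero, sub_zero]

lemma bet_zero (N : ℕ) : bet N 0 * (4 * ((N : ℂ) + 1) ^ 2 - 1) = (N + 1) ^ 2 := by
  have h := real_mem_UU N 0
  rw [ofReal_zero] at h
  have h1 := ak_alk h.1 (hk0_ne h)
  have h2 := ak_alk h.2.1 (hk1_ne h)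
  have h3 := cc_sq h
  push_cast at h2
  have e1 : ak N 0 = (2 * N + 1) / 2 := by linear_combination h1 / 2
  have e2 : ak (N + 1) 0 = (2 * (N + 1) + 1) / 2 := by linear_combination h2 / 2
  rw [e1, e2, (cc_zero N).1] at h3
  linear_combination -4 * h3

/-- For real `t`, `0 < c < n`: both `c` and `d = c - n` never vanish, are continuous in `t`, and
have the right signs at `t = 0`. -/
lemma cc_bounds (N : ℕ) (t : ℝ) : ∃ r : ℝ, 0 < r ∧ r < N + 1 ∧ cc N t = r := by
  have hc : Continuous fun t : ℝ => (cc N t).re := continuous_re.comp (continuous_cc N)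
  have hre : ∀ t : ℝ, cc N t = ((cc N t).re : ℂ) := by
    intro t
    obtain ⟨r, _, hr2⟩ := cc_real N t
    rw [hr2, ofReal_re]
  have h0 : (cc N (0 : ℝ)).re = (N + 1) / 2 := by
    rw [ofReal_zero, (cc_zero N).1]
    have : ((N : ℂ) + 1) / 2 = (((N + 1) / 2 : ℝ) : ℂ) := by push_cast; rfl
    rw [this, ofReal_re]
  have hn : (0 : ℝ) < N + 1 := by positivity
  have key : ∀ y : ℝ, (∀ t : ℝ, (cc N t).re ≠ y) →
      ((cc N (0 : ℝ)).re < y ↔ (cc N t).re < y) := by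
    intro y hy
    constructor
    · intro h
      by_contra h2
      obtain ⟨u, -, hu⟩ := intermediate_value_uIcc (a := 0) (b := t) hc.continuousOn
        (Set.mem_uIcc.2 (Or.inl ⟨h.le, not_lt.1 h2⟩))
      exact hy u hu
    · intro h
      by_contra h2
      obtain ⟨u, -, hu⟩ := intermediate_value_uIcc (a := 0) (b := t) hc.continuousOn
        (Set.mem_uIcc.2 (Or.inr ⟨h.le, not_lt.1 h2⟩))
      exact hy u hu
  have hA : ∀ t : ℝ, (cc N t).re ≠ 0 := by
    intro t h
    obtain ⟨r, hr, hr2⟩ := cc_real N t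
    rw [hr2, ofReal_re] at h
    exact hr h
  have hB : ∀ t : ℝ, (cc N t).re ≠ N + 1 := by
    intro t h
    have h1 := cc_sub_dd (real_mem_UU N t)
    rw [hre t, h] at h1
    apply dd_ne N t
    push_cast at h1
    linear_combination -h1
  refine ⟨(cc N t).re, ?_, ?_, hre t⟩
  · refine lt_of_le_of_ne (not_lt.1 fun h => ?_) (hA t).symm
    have := (key 0 hA).2 h
    rw [h0] at this
    linarith
  · refine (key _ hB).1 ?_
    rw [h0]; linarith

/-- For real `t ≥ 0` the quantity `t² β` stays below `n²`. -/
lemma bet_bounds (N : ℕ) {t : ℝ} (ht : 0 ≤ t) :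
    ∃ r : ℝ, 0 < r ∧ t ^ 2 * r < (N + 1) ^ 2 ∧ bet N t = r := by
  obtain ⟨r, hr, hr2⟩ := bet_real N t
  refine ⟨r, hr, ?_, hr2⟩
  obtain ⟨c, hc, hc2, hc3⟩ := cc_bounds N t
  obtain ⟨a, ha, ha2⟩ := ak_real N t
  obtain ⟨a', ha', ha2'⟩ := ak_real (N + 1) t
  have h1 := cc_sub_dd (real_mem_UU N t)
  have h3 := dd_sq (real_mem_UU N t)
  have hd : dd N t = ((c - (N + 1) : ℝ) : ℂ) := by
    push_cast; rw [← hc3]; linear_combination -h1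
  rw [hd, ha2, ha2', hr2] at h3
  have h4 : (c - (N + 1)) ^ 2 = (a' + t) * (a + t) * r := by exact_mod_cast h3
  have h5 : (c - (N + 1)) ^ 2 < (N + 1) ^ 2 := by nlinarith
  have h6 : t ^ 2 * r ≤ (a' + t) * (a + t) * r := by
    have : t ^ 2 ≤ (a' + t) * (a + t) := by nlinarith [mul_pos ha ha', mul_nonneg ht ha.le, mul_nonneg ht ha'.le]
    exact mul_le_mul_of_nonneg_right this hr.le
  linarith

/-! ### The rescaled system, `t = n s`, `n = N + 1` -/

/-- `b = s² β(ns)`. -/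
noncomputable def bf (N : ℕ) (s : ℂ) : ℂ := s ^ 2 * bet N ((N + 1) * s)
/-- `p = b'(s) / n`. -/
noncomputable def pf (N : ℕ) (s : ℂ) : ℂ := Tn N ((N + 1) * s) / (N + 1) ^ 2
/-- `g = -σ(ns) / (ns)`. -/
noncomputable def gf (N : ℕ) (s : ℂ) : ℂ := -sig N ((N + 1) * s) / ((N + 1) * s)

lemma n_ne (N : ℕ) : (N : ℂ) + 1 ≠ 0 := by exact_mod_cast N.succ_ne_zero

lemma hasDerivAt_scale {F : ℂ → ℂ} {F' : ℂ} (N : ℕ) {s : ℂ} (h : HasDerivAt F F' ((N + 1) * s)) :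
    HasDerivAt (fun s => F ((N + 1) * s)) ((N + 1) * F') s := by
  have := h.comp s ((hasDerivAt_id s).const_mul ((N : ℂ) + 1))
  refine this.congr_deriv ?_
  ring

lemma hasDerivAt_bf {N : ℕ} {s : ℂ} (h : ((N : ℂ) + 1) * s ∈ UU N) :
    HasDerivAt (bf N) ((N + 1) * pf N s) s := by
  have h1 := (hasDerivAt_scale N (hasDerivAt_B h)).div_const (((N : ℂ) + 1) ^ 2)
  have hn := n_ne N
  have h2 : (fun s : ℂ => (((N : ℂ) + 1) * s) ^ 2 * bet N ((N + 1) * s) / ((N : ℂ) + 1) ^ 2) = bf N := by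
    ext z; rw [bf]; field_simp
  rw [h2] at h1
  refine h1.congr_deriv ?_
  rw [pf]; ring

lemma hasDerivAt_pf {N : ℕ} {s : ℂ} (h : ((N : ℂ) + 1) * s ∈ UU N) (hs : s ≠ 0) :
    HasDerivAt (pf N) ((N + 1) * (2 * (2 * gf N s - 1) * (1 - bf N s)
      - 2 * (s ^ 2 * gf N s ^ 2 - bf N s))) s := by
  have hn := n_ne N
  have h1 := (hasDerivAt_scale N (hasDerivAt_Tn h (mul_ne_zero hn hs))).div_const (((N : ℂ) + 1) ^ 2)
  refine h1.congr_deriv ?_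
  rw [gf, bf]
  field_simp
  ring

lemma hasDerivAt_gf {N : ℕ} {s : ℂ} (h : ((N : ℂ) + 1) * s ∈ UU N) (hs : s ≠ 0) :
    HasDerivAt (gf N) ((N + 1) * pf N s / s ^ 2 - gf N s / s) s := by
  have hn := n_ne N
  have h0 : HasDerivAt (sig N) (-Tn N ((N + 1) * s) / ((N + 1) * s)) ((N + 1) * s) := by
    refine ((hasDerivAt_Sn h).sub ((hasDerivAt_id _).mul (hasDerivAt_bet h))).congr_deriv ?_
    have h1 := ak_alk h.1 (hk0_ne h)
    have h2 := ak_alk h.2.1 (hk1_ne h)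
    push_cast at h2
    rw [Tn]
    rw [mul_comm ((N : ℂ) + 1) s] at *
    field_simp
    linear_combination (bet N (s * (N + 1))) * (h2 - h1)
  have h1 := ((hasDerivAt_scale N h0).neg).div
    (hasDerivAt_scale N (hasDerivAt_id (((N : ℂ) + 1) * s))) (mul_ne_zero hn hs)
  refine h1.congr_deriv ?_
  rw [gf, pf]
  simp only [id]
  field_simp
  simp only [Pi.neg_apply]

/-- The algebraic first integral of the rescaled system. -/
lemma pf_sq {N : ℕ} {s : ℂ} (h : ((N : ℂ) + 1) * s ∈ UU N) (hs : s ≠ 0) :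
    pf N s ^ 2 = 4 * (1 - bf N s) * (s ^ 2 * gf N s ^ 2 - bf N s) := by
  have hn := n_ne N
  have h1 := Tn_sq h
  rw [pf, gf, bf, div_pow, h1]
  field_simp
  ring

/-- The recurrence coefficient `α` in terms of the rescaled quantities. -/
lemma alk_scaled {N : ℕ} {s : ℂ} (h : ((N : ℂ) + 1) * s ∈ UU N) (hs : s ≠ 0) :
    s * bf N s * alk (N + 1) ((N + 1) * s) = 2 * bf N s - s ^ 2 * gf N s
      + (bf N s - s * pf N s * (N + 1) / 2) / (N + 1) := by
  have hn := n_ne N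
  have h1 := alk_rel h
  rw [pf, gf, bf]
  rw [mul_comm ((N : ℂ) + 1) s] at *
  field_simp
  linear_combination 2 * h1

/-- The real form of the rescaled system on an interval: `b' = n p` and so on,
together with its algebraic first integral and the a priori bounds. -/
structure RSys (n A B : ℝ) (b p g : ℝ → ℝ) : Prop where
  hb : ∀ s ∈ Set.Icc A B, HasDerivAt b (n * p s) s
  hp : ∀ s ∈ Set.Icc A B, HasDerivAt p
    (n * (2 * (2 * g s - 1) * (1 - b s) - 2 * (s ^ 2 * g s ^ 2 - b s))) s
  hg : ∀ s ∈ Set.Icc A B, HasDerivAt g (n * p s / s ^ 2 - g s / s) s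
  alg : ∀ s ∈ Set.Icc A B, p s ^ 2 = 4 * (1 - b s) * (s ^ 2 * g s ^ 2 - b s)
  b0 : ∀ s ∈ Set.Icc A B, 0 < b s
  b1 : ∀ s ∈ Set.Icc A B, b s < 1
  m0 : ∀ s ∈ Set.Icc A B, 0 < g s - b s / s ^ 2

lemma scale_real (N : ℕ) (s : ℝ) : ((N : ℂ) + 1) * s = (((N + 1) * s : ℝ) : ℂ) := by push_cast; rfl

lemma Sn_neg (N : ℕ) {t : ℝ} (ht : 0 < t) : (Sn N t).re < 0 := by
  have hd : ∀ u : ℝ, HasDerivAt (fun u : ℝ => (Sn N u).re) (-(bet N u)).re u := fun u =>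
    (hasDerivAt_Sn (real_mem_UU N u)).real_of_complex
  have hanti : StrictAnti (fun u : ℝ => (Sn N u).re) := by
    refine strictAnti_of_deriv_neg fun u => ?_
    rw [(hd u).deriv]
    obtain ⟨r, hr, hr2⟩ := bet_real N u
    rw [hr2, neg_re, ofReal_re]
    linarith
  have := hanti ht
  simpa [Sn_zero] using this

lemma Tn_real (N : ℕ) (t : ℝ) : ∃ r : ℝ, Tn N t = r := by
  obtain ⟨r, _, hr⟩ := bet_real N t
  obtain ⟨a, _, ha⟩ := ak_real N t
  obtain ⟨a', _, ha'⟩ := ak_real (N + 1) t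
  exact ⟨2 * t * r * (a' - a), by rw [Tn, hr, ha, ha']; push_cast; rfl⟩

lemma bf_real (N : ℕ) (s : ℝ) : ((bf N s).re : ℂ) = bf N s := by
  obtain ⟨r, _, hr⟩ := bet_real N ((N + 1) * s)
  rw [bf, scale_real, hr, ← ofReal_pow, ← ofReal_mul, ofReal_re]

lemma pf_real (N : ℕ) (s : ℝ) : ((pf N s).re : ℂ) = pf N s := by
  obtain ⟨r, hr⟩ := Tn_real N ((N + 1) * s)
  have : pf N s = ((r / (N + 1) ^ 2 : ℝ) : ℂ) := by
    rw [pf, scale_real, hr]; push_cast; rfl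
  rw [this, ofReal_re]

lemma gf_real (N : ℕ) (s : ℝ) : ((gf N s).re : ℂ) = gf N s := by
  obtain ⟨r, _, hr⟩ := bet_real N ((N + 1) * s)
  obtain ⟨r', hr'⟩ := Sn_real N ((N + 1) * s)
  have : gf N s = ((-(r' - (N + 1) * s * r) / ((N + 1) * s) : ℝ) : ℂ) := by
    rw [gf, sig, scale_real, hr, hr']; push_cast; rfl
  rw [this, ofReal_re]

/-- On the positive real axis the rescaled quantities form a real system. -/
lemma rsys (N : ℕ) {A B : ℝ} (hA : 0 < A) :
    RSys (N + 1) A B (fun s => (bf N s).re) (fun s => (pf N s).re) (fun s => (gf N s).re) := by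
  have hU : ∀ s : ℝ, ((N : ℂ) + 1) * s ∈ UU N := fun s => by
    rw [scale_real]; exact real_mem_UU N _
  have hpos : ∀ s ∈ Set.Icc A B, (0 : ℝ) < s := fun s hs => hA.trans_le hs.1
  have hne : ∀ s ∈ Set.Icc A B, (s : ℂ) ≠ 0 := fun s hs => by
    exact_mod_cast (hpos s hs).ne'
  have hn : (0 : ℝ) < N + 1 := by positivity
  refine ⟨fun s hs => ?_, fun s hs => ?_, fun s hs => ?_, fun s hs => ?_, fun s hs => ?_,
    fun s hs => ?_, fun s hs => ?_⟩
  · refine (hasDerivAt_bf (hU s)).real_of_complex.congr_deriv ?_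
    rw [← pf_real]
    exact_mod_cast ofReal_re _
  · refine (hasDerivAt_pf (hU s) (hne s hs)).real_of_complex.congr_deriv ?_
    rw [← bf_real, ← gf_real]
    exact_mod_cast ofReal_re _
  · refine (hasDerivAt_gf (hU s) (hne s hs)).real_of_complex.congr_deriv ?_
    rw [← gf_real, ← pf_real]
    exact_mod_cast ofReal_re _
  · have := pf_sq (hU s) (hne s hs)
    rw [← bf_real, ← gf_real, ← pf_real] at this
    exact_mod_cast this
  · obtain ⟨r, hr, hr2⟩ := bet_real N ((N + 1) * s)
    have h0 := hpos s hs
    simp only [bf]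
    rw [scale_real, hr2, ← ofReal_pow, ← ofReal_mul, ofReal_re]
    positivity
  · obtain ⟨r, hr, hr3, hr2⟩ := bet_bounds N (t := (N + 1) * s) (mul_nonneg hn.le (hpos s hs).le)
    simp only [bf]
    rw [scale_real, hr2, ← ofReal_pow, ← ofReal_mul, ofReal_re]
    have h3 : (N + 1 : ℝ) ^ 2 * (s ^ 2 * r) < (N + 1) ^ 2 * 1 := by linarith
    exact lt_of_mul_lt_mul_left h3 (by positivity)
  · have h0 := hpos s hs
    have h1 := Sn_neg N (t := (N + 1) * s) (by positivity)
    obtain ⟨r', hr'⟩ := Sn_real N ((N + 1) * s)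
    obtain ⟨r, _, hr⟩ := bet_real N ((N + 1) * s)
    have hb : (bf N s).re = s ^ 2 * r := by
      simp only [bf]
      rw [scale_real, hr, ← ofReal_pow, ← ofReal_mul, ofReal_re]
    have hg : (gf N s).re = -(r' - (N + 1) * s * r) / ((N + 1) * s) := by
      have : gf N s = ((-(r' - (N + 1) * s * r) / ((N + 1) * s) : ℝ) : ℂ) := by
        rw [gf, sig, scale_real, hr, hr']; push_cast; rfl
      rw [this, ofReal_re]
    rw [hr', ofReal_re] at h1
    simp only [hb, hg]
    have h2 : -(r' - (N + 1) * s * r) / ((N + 1) * s) - s ^ 2 * r / s ^ 2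
        = -r' / ((N + 1) * s) := by field_simp; ring
    rw [h2]
    have : 0 < -r' := by linarith
    positivity

/-! ### Crude asymptotics on the real axis -/

/-- Oscillator form of `RSys`: with `β = b / s²`, `m = g - β`, `r = √(1 - b)` and `r₁ = r' / n`. -/
structure OSys (n A B : ℝ) (β m r r₁ : ℝ → ℝ) : Prop where
  hr : ∀ s ∈ Set.Icc A B, HasDerivAt r (n * r₁ s) s
  hr1 : ∀ s ∈ Set.Icc A B, HasDerivAt r₁ (n * r s * (1 - 2 * (β s + m s))) s
  hM : ∀ s ∈ Set.Icc A B, HasDerivAt (fun s => s * m s) (β s) s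
  hm : ∀ s ∈ Set.Icc A B, HasDerivAt m ((β s - m s) / s) s
  cβ : ContinuousOn β (Set.Icc A B)
  sq : ∀ s ∈ Set.Icc A B, r₁ s ^ 2 = s ^ 2 * ((β s + m s - 1 / 2) ^ 2 + m s - 1 / 4)
  rsq : ∀ s ∈ Set.Icc A B, r s ^ 2 = 1 - s ^ 2 * β s
  r0 : ∀ s ∈ Set.Icc A B, 0 < r s
  r1 : ∀ s ∈ Set.Icc A B, r s < 1
  β0 : ∀ s ∈ Set.Icc A B, 0 < β s
  m0 : ∀ s ∈ Set.Icc A B, 0 < m s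

lemma RSys.osys {n A B : ℝ} {b p g : ℝ → ℝ} (hA : 0 < A) (h : RSys n A B b p g) :
    OSys n A B (fun s => b s / s ^ 2) (fun s => g s - b s / s ^ 2) (fun s => √(1 - b s))
      (fun s => -p s / (2 * √(1 - b s))) := by
  have hs0 : ∀ s ∈ Set.Icc A B, 0 < s := fun s hs => hA.trans_le hs.1
  have hr0 : ∀ s ∈ Set.Icc A B, 0 < √(1 - b s) := fun s hs =>
    Real.sqrt_pos.2 (by linarith [h.b1 s hs])
  have hrq : ∀ s ∈ Set.Icc A B, √(1 - b s) ^ 2 = 1 - b s := fun s hs =>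
    Real.sq_sqrt (by linarith [h.b1 s hs])
  have hsqrt : ∀ s ∈ Set.Icc A B, HasDerivAt (fun s => √(1 - b s))
      (n * (-p s / (2 * √(1 - b s)))) s := fun s hs => by
    have := ((h.hb s hs).const_sub 1).sqrt (by linarith [h.b1 s hs])
    refine this.congr_deriv ?_
    ring
  have hβd : ∀ s ∈ Set.Icc A B, HasDerivAt (fun s => b s / s ^ 2)
      (n * p s / s ^ 2 - 2 * b s / s ^ 3) s := fun s hs => by
    have h0 := (hs0 s hs).ne'
    refine ((h.hb s hs).div (hasDerivAt_pow 2 s) (pow_ne_zero 2 h0)).congr_deriv ?_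
    push_cast
    field_simp
  have hmd : ∀ s ∈ Set.Icc A B, HasDerivAt (fun s => g s - b s / s ^ 2)
      ((b s / s ^ 2 - (g s - b s / s ^ 2)) / s) s := fun s hs => by
    have h0 := (hs0 s hs).ne'
    refine ((h.hg s hs).sub (hβd s hs)).congr_deriv ?_
    field_simp
    ring
  refine ⟨hsqrt, fun s hs => ?_, fun s hs => ?_, hmd, fun s hs => ?_, fun s hs => ?_,
    fun s hs => ?_, hr0, fun s hs => ?_, fun s hs => ?_, h.m0⟩
  · have h1 := (h.hp s hs).neg.div ((hsqrt s hs).const_mul 2) (by have := hr0 s hs; positivity)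
    refine h1.congr_deriv ?_
    have h2 := hrq s hs
    have h3 := h.alg s hs
    have h4 := hr0 s hs
    rw [← h2] at h3
    have h5 : b s = 1 - √(1 - b s) ^ 2 := by linarith
    simp only [Pi.neg_apply]
    generalize √(1 - b s) = r at *
    field_simp
    rw [h5]
    rw [h5] at h3
    linear_combination (-n) * h3
  · have h0 := (hs0 s hs).ne'
    refine ((hasDerivAt_id s).mul (hmd s hs)).congr_deriv ?_
    simp only [id]
    field_simp
    ring
  · exact (hβd s hs).continuousAt.continuousWithinAt
  · have h0 := (hs0 s hs).ne'
    have h1 := hr0 s hs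
    have h2 := hrq s hs
    have h3 := h.alg s hs
    rw [div_pow, mul_pow, h2, neg_sq, h3]
    have h4 : (1 - b s) ≠ 0 := by rw [← h2]; positivity
    field_simp
    ring
  · have h0 := (hs0 s hs).ne'
    rw [hrq s hs]; field_simp
  · have := h.b0 s hs
    rw [Real.sqrt_lt' one_pos]; linarith
  · have := h.b0 s hs
    have := hs0 s hs
    positivity

/-- First zero of a continuous function that starts negative. -/
lemma first_zero {f : ℝ → ℝ} {x y : ℝ} (hf : ContinuousOn f (Set.Icc x y)) (hx : f x < 0)
    (hy : x ≤ y) (hfy : 0 ≤ f y) :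
    ∃ z ∈ Set.Icc x y, f z = 0 ∧ ∀ w ∈ Set.Ico x z, f w < 0 := by
  set S := Set.Icc x y ∩ f ⁻¹' {0} with hS
  have hcl : IsClosed S := hf.preimage_isClosed_of_isClosed isClosed_Icc isClosed_singleton
  have hne : S.Nonempty := by
    obtain ⟨z, hz, hz0⟩ := intermediate_value_Icc hy hf ⟨hx.le, hfy⟩
    exact ⟨z, hz, hz0⟩
  have hbd : BddBelow S := ⟨x, fun z hz => hz.1.1⟩
  have hm := hcl.csInf_mem hne hbd
  refine ⟨sInf S, hm.1, hm.2, fun w hw => ?_⟩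
  by_contra! hcon
  obtain ⟨v, hv, hv0⟩ := intermediate_value_Icc hw.1
    (hf.mono (Set.Icc_subset_Icc le_rfl (hw.2.le.trans hm.1.2))) ⟨hx.le, hcon⟩
  have hvS : v ∈ S := ⟨⟨hv.1, hv.2.trans (hw.2.le.trans hm.1.2)⟩, hv0⟩
  exact absurd (csInf_le hbd hvS) (not_le.2 (hv.2.trans_lt hw.2))

lemma last_zero {f : ℝ → ℝ} {x y : ℝ} (hf : ContinuousOn f (Set.Icc x y)) (hx : f y < 0)
    (hy : x ≤ y) (hfy : 0 ≤ f x) :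
    ∃ z ∈ Set.Icc x y, f z = 0 ∧ ∀ w ∈ Set.Ioc z y, f w < 0 := by
  have hc : ContinuousOn (fun t => f (-t)) (Set.Icc (-y) (-x)) := by
    refine hf.comp continuous_neg.continuousOn fun t ht => ?_
    exact ⟨by linarith [ht.2], by linarith [ht.1]⟩
  obtain ⟨z, hz, hz0, hz1⟩ := first_zero hc (by simpa using hx) (by linarith) (by simpa using hfy)
  refine ⟨-z, ⟨by linarith [hz.2], by linarith [hz.1]⟩, hz0, fun w hw => ?_⟩
  have := hz1 (-w) ⟨by linarith [hw.2], by linarith [hw.1]⟩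
  simpa using this

namespace OSys
variable {n A B : ℝ} {β m r r₁ : ℝ → ℝ}

/-- Since `0 < r < 1`, somewhere in each interval of length `d` the slope is at most `1 / d`. -/
lemma slope (h : OSys n A B β m r r₁) (hn : 0 < n) {x y : ℝ} (hx : A ≤ x) (hxy : x < y)
    (hy : y ≤ B) : ∃ ξ ∈ Set.Ioo x y, |r₁ ξ| * (n * (y - x)) ≤ 1 := by
  have hsub : Set.Icc x y ⊆ Set.Icc A B := Set.Icc_subset_Icc hx hy
  obtain ⟨ξ, hξ, he⟩ := exists_hasDerivAt_eq_slope r (fun s => n * r₁ s) hxy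
    (fun s hs => (h.hr s (hsub hs)).continuousAt.continuousWithinAt)
    (fun s hs => h.hr s (hsub (Set.Ioo_subset_Icc_self hs)))
  refine ⟨ξ, hξ, ?_⟩
  have hd : 0 < y - x := by linarith
  have he2 : n * r₁ ξ * (y - x) = r y - r x := by rw [he]; field_simp
  have : |r₁ ξ| * (n * (y - x)) = |r y - r x| := by
    rw [← he2, abs_mul, abs_mul, abs_of_pos hn, abs_of_pos hd]; ring
  rw [this]
  have a1 := h.r0 x (hsub ⟨le_rfl, hxy.le⟩)
  have a2 := h.r1 x (hsub ⟨le_rfl, hxy.le⟩)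
  have a3 := h.r0 y (hsub ⟨hxy.le, le_rfl⟩)
  have a4 := h.r1 y (hsub ⟨hxy.le, le_rfl⟩)
  rw [abs_le]; constructor <;> linarith

end OSys

/-- Upper bound for `m`. As `s m` is nondecreasing, a large value of `m` persists to the right and
the first integral keeps `|r₁|` bounded below there, contradicting `slope`. -/
lemma m_upper {A B δ η : ℝ} (hA : 0 < A) (hδ : 0 < δ) (hη : 0 < η) :
    ∃ K : ℝ, ∀ n ≥ K, ∀ β m r r₁ : ℝ → ℝ, OSys n A B β m r r₁ →
      ∀ x, A ≤ x → x + δ ≤ B → m x ≤ 1 / 4 + η := by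
  obtain ⟨d, hd0, hd1, hd2⟩ : ∃ d > 0, d ≤ δ ∧ d * (1 / 4 + η / 2) ≤ A * (η / 2) := by
    refine ⟨min δ (A * (η / 2) / (1 / 4 + η / 2)), lt_min hδ (by positivity), min_le_left _ _, ?_⟩
    calc _ ≤ A * (η / 2) / (1 / 4 + η / 2) * (1 / 4 + η / 2) := by gcongr; exact min_le_right _ _
      _ = _ := by field_simp
  refine ⟨1 + 2 / (d ^ 2 * A ^ 2 * η), fun n hn β m r r₁ h x hx hxB => ?_⟩
  have hn1 : 1 ≤ n := le_trans (by have : 0 < 2 / (d ^ 2 * A ^ 2 * η) := by positivity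
                                   linarith) hn
  by_contra! hcon
  obtain ⟨ξ, hξ, hs⟩ := h.slope (x := x) (y := x + d) (by linarith) hx (by linarith) (by linarith)
  have hmem : ∀ t ∈ Set.Icc x (x + d), t ∈ Set.Icc A B := fun t ht =>
    ⟨hx.trans ht.1, ht.2.trans (by linarith)⟩
  have hmono : MonotoneOn (fun s => s * m s) (Set.Icc x (x + d)) := by
    refine monotoneOn_of_hasDerivWithinAt_nonneg (f' := β) (convex_Icc _ _)
      (fun s hs => (h.hM s (hmem s hs)).continuousAt.continuousWithinAt)
      (fun s hs => (h.hM s (hmem s (interior_subset hs))).hasDerivWithinAt)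
      (fun s hs => (h.β0 s (hmem s (interior_subset hs))).le)
  have h1 := hmono ⟨le_rfl, by linarith⟩ ⟨hξ.1.le, hξ.2.le⟩ hξ.1.le
  simp only at h1
  have hξ0 : 0 < ξ := by linarith [hξ.1]
  have h2 : 1 / 4 + η / 2 ≤ m ξ := by
    have h3 : ξ * (1 / 4 + η / 2) ≤ ξ * m ξ := by
      have := hξ.2.le
      nlinarith
    exact le_of_mul_le_mul_left h3 hξ0
  have h4 := h.sq ξ (hmem ξ ⟨hξ.1.le, hξ.2.le⟩)
  have h5 : A ^ 2 * (η / 2) ≤ r₁ ξ ^ 2 := by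
    rw [h4]
    have : A ≤ ξ := by linarith [hξ.1]
    gcongr
    nlinarith [sq_nonneg (β ξ + m ξ - 1 / 2)]
  have h6 : r₁ ξ ^ 2 * (n * d) ^ 2 ≤ 1 := by
    rw [add_sub_cancel_left] at hs
    have := mul_self_le_mul_self (by positivity) hs
    rw [← sq_abs]; nlinarith
  have h7 : A ^ 2 * (η / 2) * (n * d) ^ 2 ≤ 1 := le_trans (by gcongr) h6
  have h8 : 2 / (d ^ 2 * A ^ 2 * η) < n := by linarith
  rw [div_lt_iff₀ (by positivity)] at h8
  have h9 : n * (d ^ 2 * A ^ 2 * η) ≤ n ^ 2 * (d ^ 2 * A ^ 2 * η) := by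
    have : n ≤ n ^ 2 := by nlinarith
    gcongr
  nlinarith

set_option maxHeartbeats 1600000 in
/-- Lower bound for `m`. If `m < 1/4` the sign of `β - m` cannot change while `m` stays small. If
`β < m`, then `m` decreases to the right and `r` is strongly convex there, hence unbounded. If
`β > m`, then `m` is small to the left and `r₁ / r` satisfies a Riccati inequality whose solutions
blow up within a distance `π / (n a)`. -/
lemma m_lower {A B δ a : ℝ} (hA : 0 < A) (hB : B < 2) (hδ : 0 < δ) (ha : 0 < a) :
    ∃ K : ℝ, ∀ n ≥ K, ∀ β m r r₁ : ℝ → ℝ, OSys n A B β m r r₁ →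
      ∀ x, A + δ ≤ x → x + δ ≤ B → 1 / 4 - a ^ 4 ≤ m x := by
  set η := a ^ 4 with hηdef
  have hη : 0 < η := by positivity
  set c := 1 - B ^ 2 / 4 with hc
  refine ⟨1 + |9 / (2 * η * c * δ ^ 2)| + Real.pi / (δ * a),
    fun n hn β m r r₁ h x hx hxB => ?_⟩
  have hB0 : 0 < B := by linarith
  have hc0 : 0 < c := by rw [hc]; nlinarith
  have hpa : 0 < Real.pi / (δ * a) := div_pos Real.pi_pos (by positivity)
  have hn1 : 1 ≤ n := by linarith [abs_nonneg (9 / (2 * η * c * δ ^ 2))]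
  by_contra! hcon
  have hxm : x ∈ Set.Icc A B := ⟨by linarith, by linarith⟩
  -- Where `m < 1/4` the first integral forbids `β = m`.
  have hne : ∀ s ∈ Set.Icc A B, m s < 1 / 4 → β s ≠ m s := fun s hs hm he => by
    have h1 := h.sq s hs
    have h2 := h.m0 s hs
    have hs0 : 0 < s := hA.trans_le hs.1
    have h3 : 0 ≤ (β s + m s - 1 / 2) ^ 2 + m s - 1 / 4 := by
      by_contra! hneg
      have : r₁ s ^ 2 < 0 := by rw [h1]; exact mul_neg_of_pos_of_neg (by positivity) hneg
      linarith [sq_nonneg (r₁ s)]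
    rw [he] at h3
    nlinarith
  have hfac : ∀ s ∈ Set.Icc A B, 0 ≤ (β s + m s - 1 / 2) ^ 2 + m s - 1 / 4 := fun s hs => by
    have hs0 : 0 < s := hA.trans_le hs.1
    by_contra! hneg
    have : r₁ s ^ 2 < 0 := by
      rw [h.sq s hs]; exact mul_neg_of_pos_of_neg (by positivity) hneg
    linarith [sq_nonneg (r₁ s)]
  have hcm : ContinuousOn m (Set.Icc A B) := fun s hs =>
    (h.hm s hs).continuousAt.continuousWithinAt
  rcases lt_or_gt_of_ne (hne x hxm (by linarith)) with hlt | hgt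
  · -- `β < m` persists to the right, where `r` is then strongly convex.
    have hdec : ∀ z ∈ Set.Icc x B, (∀ w ∈ Set.Ico x z, β w - m w < 0) → m z ≤ m x := by
      intro z hz hw
      have : AntitoneOn m (Set.Icc x z) := by
        refine antitoneOn_of_hasDerivWithinAt_nonpos (f' := fun s => (β s - m s) / s)
          (convex_Icc _ _) (hcm.mono (Set.Icc_subset_Icc hxm.1 hz.2))
          (fun s hs => ?_) (fun s hs => ?_)
        · have hs' := interior_subset hs
          exact (h.hm s ⟨hxm.1.trans hs'.1, hs'.2.trans hz.2⟩).hasDerivWithinAt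
        · rw [interior_Icc] at hs
          have := hw s ⟨hs.1.le, hs.2⟩
          exact div_nonpos_of_nonpos_of_nonneg this.le (by linarith [hs.1, hxm.1])
      exact this ⟨le_rfl, hz.1⟩ ⟨hz.1, le_rfl⟩ hz.1
    have hper : ∀ y ∈ Set.Icc x B, β y - m y < 0 := by
      intro y hy
      by_contra! hcon2
      obtain ⟨z, hz, hz0, hz1⟩ := first_zero (f := fun s => β s - m s) (x := x) (y := y)
        ((h.cβ.sub hcm).mono (Set.Icc_subset_Icc hxm.1 hy.2)) (by simpa using hlt) hy.1 hcon2
      have hzB : z ∈ Set.Icc x B := ⟨hz.1, hz.2.trans hy.2⟩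
      have := hdec z hzB hz1
      exact hne z ⟨hxm.1.trans hz.1, hzB.2⟩ (by linarith) (by linarith)
    have hmle : ∀ y ∈ Set.Icc x B, m y ≤ m x := fun y hy =>
      hdec y hy fun w hw => hper w ⟨hw.1, hw.2.le.trans hy.2⟩
    obtain ⟨ξ, hξ, hs1⟩ := h.slope (x := x) (y := x + δ / 3) (by linarith) (by linarith)
      (by linarith) (by linarith)
    obtain ⟨ζ, hζ, hs2⟩ := h.slope (x := x + 2 * δ / 3) (y := x + δ) (by linarith) (by linarith)
      (by linarith) (by linarith)
    have hξζ : ξ < ζ := by linarith [hξ.2, hζ.1]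
    have hsubm : ∀ s ∈ Set.Icc ξ ζ, s ∈ Set.Icc x B := fun s hs =>
      ⟨by linarith [hs.1, hξ.1], by linarith [hs.2, hζ.2]⟩
    obtain ⟨τ, hτ, he⟩ := exists_hasDerivAt_eq_slope r₁
      (fun s => n * r s * (1 - 2 * (β s + m s))) hξζ
      (fun s hs => (h.hr1 s ⟨hxm.1.trans (hsubm s hs).1, (hsubm s hs).2⟩).continuousAt.continuousWithinAt)
      (fun s hs => by
        have hs' := hsubm s (Set.Ioo_subset_Icc_self hs)
        exact h.hr1 s ⟨hxm.1.trans hs'.1, hs'.2⟩)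
    have hτ' := hsubm τ (Set.Ioo_subset_Icc_self hτ)
    have hτm : τ ∈ Set.Icc A B := ⟨hxm.1.trans hτ'.1, hτ'.2⟩
    have q1 := hper τ hτ'
    have q2 := hmle τ hτ'
    have q3 := h.r0 τ hτm
    have q4 := h.r1 τ hτm
    have q5 := h.rsq τ hτm
    have q6 := h.β0 τ hτm
    have q7 : c ≤ r τ := by
      have : τ ^ 2 * β τ ≤ B ^ 2 * (1 / 4) := by
        have : 0 < τ := hA.trans_le hτm.1
        have := hτm.2
        gcongr
        linarith
      rw [hc]; nlinarith
    have q8 : 4 * η ≤ 1 - 2 * (β τ + m τ) := by linarith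
    have q9 : n * c * (4 * η) ≤ n * r τ * (1 - 2 * (β τ + m τ)) := by gcongr
    rw [he, le_div_iff₀ (by linarith)] at q9
    have q10 : δ / 3 ≤ ζ - ξ := by linarith [hξ.2, hζ.1]
    have q11 : n * c * (4 * η) * (δ / 3) ≤ r₁ ζ - r₁ ξ := le_trans (by gcongr) q9
    have q12 : (r₁ ζ - r₁ ξ) * (n * (δ / 3)) ≤ 2 := by
      have e1 : x + δ / 3 - x = δ / 3 := by ring
      have e2 : x + δ - (x + 2 * δ / 3) = δ / 3 := by ring
      rw [e1] at hs1; rw [e2] at hs2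
      have : 0 < n * (δ / 3) := by positivity
      nlinarith [le_abs_self (r₁ ζ), neg_abs_le (r₁ ξ)]
    have q13 : n * c * (4 * η) * (δ / 3) * (n * (δ / 3)) ≤ 2 := le_trans (by gcongr) q12
    have q14 : 9 / (2 * η * c * δ ^ 2) < n := by
      linarith [le_abs_self (9 / (2 * η * c * δ ^ 2))]
    rw [div_lt_iff₀ (by positivity)] at q14
    have q15 : n * (2 * η * c * δ ^ 2) ≤ n ^ 2 * (2 * η * c * δ ^ 2) := by
      have : n ≤ n ^ 2 := le_self_pow₀ hn1 two_ne_zero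
      gcongr
    linarith
  · -- `β > m` persists to the left, where `r` must then oscillate, contradicting `r > 0`.
    have hdec : ∀ z ∈ Set.Icc A x, (∀ w ∈ Set.Ioc z x, m w - β w < 0) → m z ≤ m x := by
      intro z hz hw
      have : MonotoneOn m (Set.Icc z x) := by
        refine monotoneOn_of_hasDerivWithinAt_nonneg (f' := fun s => (β s - m s) / s)
          (convex_Icc _ _) (hcm.mono (Set.Icc_subset_Icc hz.1 hxm.2))
          (fun s hs => ?_) (fun s hs => ?_)
        · have hs' := interior_subset hs
          exact (h.hm s ⟨hz.1.trans hs'.1, hs'.2.trans hxm.2⟩).hasDerivWithinAt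
        · rw [interior_Icc] at hs
          have := hw s ⟨hs.1, hs.2.le⟩
          exact div_nonneg (by linarith) (by linarith [hs.1, hz.1])
      exact this ⟨le_rfl, hz.2⟩ ⟨hz.2, le_rfl⟩ hz.2
    have hper : ∀ y ∈ Set.Icc A x, m y - β y < 0 := by
      intro y hy
      by_contra! hcon2
      obtain ⟨z, hz, hz0, hz1⟩ := last_zero (f := fun s => m s - β s) (x := y) (y := x)
        ((hcm.sub h.cβ).mono (Set.Icc_subset_Icc hy.1 hxm.2)) (by simpa using hgt) hy.2 hcon2
      have hzB : z ∈ Set.Icc A x := ⟨hy.1.trans hz.1, hz.2⟩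
      have := hdec z hzB hz1
      exact hne z ⟨hzB.1, hz.2.trans hxm.2⟩ (by linarith) (by linarith)
    have hmle : ∀ y ∈ Set.Icc A x, m y ≤ m x := fun y hy =>
      hdec y hy fun w hw => hper w ⟨hy.1.trans hw.1.le, hw.2⟩
    have hg : ∀ y ∈ Set.Icc A x, a ^ 2 ≤ β y + m y - 1 / 2 := by
      intro y hy
      have hyB : y ∈ Set.Icc A B := ⟨hy.1, hy.2.trans hxm.2⟩
      have e1 := hper y hy
      have e2 := hmle y hy
      have e3 := hfac y hyB
      have e4 := h.m0 y hyB
      have e5 : 0 < β y + m y - 1 / 2 := by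
        by_contra! hneg
        nlinarith
      refine (sq_le_sq₀ (by positivity) e5.le).1 ?_
      nlinarith
    -- The Riccati variable `w = r₁ / r` satisfies `w' ≤ -n (a² + w²)`.
    have hd : ∀ s ∈ Set.Icc A x, HasDerivAt (fun s => Real.arctan (r₁ s / r s / a))
        (1 / (1 + (r₁ s / r s / a) ^ 2) * (((n * r s * (1 - 2 * (β s + m s))) * r s
          - r₁ s * (n * r₁ s)) / r s ^ 2 / a)) s := fun s hs => by
      have hsB : s ∈ Set.Icc A B := ⟨hs.1, hs.2.trans hxm.2⟩
      exact (((h.hr1 s hsB).div (h.hr s hsB) (h.r0 s hsB).ne').div_const a).arctan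
    obtain ⟨τ, hτ, he⟩ := exists_hasDerivAt_eq_slope _ _ (show A < x by linarith)
      (fun s hs => (hd s hs).continuousAt.continuousWithinAt)
      (fun s hs => hd s (Set.Ioo_subset_Icc_self hs))
    have hτ' := Set.Ioo_subset_Icc_self hτ
    have hτB : τ ∈ Set.Icc A B := ⟨hτ'.1, hτ'.2.trans hxm.2⟩
    have q1 := hg τ hτ'
    have q2 := h.r0 τ hτB
    have q3 : 1 / (1 + (r₁ τ / r τ / a) ^ 2) * (((n * r τ * (1 - 2 * (β τ + m τ))) * r τ
          - r₁ τ * (n * r₁ τ)) / r τ ^ 2 / a) ≤ -(n * a) := by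
      have e : 1 / (1 + (r₁ τ / r τ / a) ^ 2) * (((n * r τ * (1 - 2 * (β τ + m τ))) * r τ
          - r₁ τ * (n * r₁ τ)) / r τ ^ 2 / a) = -(n * a) *
          ((2 * (β τ + m τ - 1 / 2) * r τ ^ 2 + r₁ τ ^ 2) / (a ^ 2 * r τ ^ 2 + r₁ τ ^ 2)) := by
        have : a ^ 2 * r τ ^ 2 + r₁ τ ^ 2 ≠ 0 := by positivity
        field_simp
        ring
      rw [e]
      have : 1 ≤ (2 * (β τ + m τ - 1 / 2) * r τ ^ 2 + r₁ τ ^ 2)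
          / (a ^ 2 * r τ ^ 2 + r₁ τ ^ 2) := by
        rw [le_div_iff₀ (by positivity)]
        have := sq_nonneg (r τ)
        nlinarith [sq_nonneg a]
      nlinarith [mul_pos (show 0 < n by linarith) ha]
    rw [he, div_le_iff₀ (by linarith)] at q3
    have q4 := Real.arctan_lt_pi_div_two (r₁ A / r A / a)
    have q5 := Real.neg_pi_div_two_lt_arctan (r₁ x / r x / a)
    have q6 : Real.pi / (δ * a) < n := by linarith [abs_nonneg (9 / (2 * η * c * δ ^ 2))]
    rw [div_lt_iff₀ (by positivity)] at q6
    have q7 : n * a * δ ≤ n * a * (x - A) := by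
      have : δ ≤ x - A := by linarith
      gcongr
    linarith

/-- Near-vanishing of `r₁` pins `β` to `1/4`, once `m` is close to `1/4`. -/
lemma nu_small {ν μ s q η A : ℝ} (hA : 0 < A) (hs : A ≤ s) (hη : 0 < η) (hη1 : η ≤ 1)
    (hμ : |μ| ≤ η ^ 2 / 256) (hq : q ^ 2 = s ^ 2 * ((ν + μ) ^ 2 + μ))
    (hq2 : q ^ 2 ≤ A ^ 2 * (η ^ 2 / 256)) : |ν| ≤ η / 4 := by
  have h1 : (ν + μ) ^ 2 + μ ≤ η ^ 2 / 256 := by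
    by_contra! hcon
    have h2 : A ^ 2 * (η ^ 2 / 256) < s ^ 2 * ((ν + μ) ^ 2 + μ) := by
      calc A ^ 2 * (η ^ 2 / 256) < A ^ 2 * ((ν + μ) ^ 2 + μ) := by gcongr
        _ ≤ _ := by
          have : 0 ≤ (ν + μ) ^ 2 + μ := le_trans (by positivity) hcon.le
          gcongr
    linarith
  have h3 := abs_le.1 hμ
  have h4 : |ν + μ| ≤ η / 8 := by
    refine abs_le_of_sq_le_sq ?_ (by positivity)
    nlinarith
  have h5 := abs_le.1 h4
  rw [abs_le]
  constructor <;> nlinarith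

/-- Once `m` is close to `1/4`, so is `β`: on both sides of `x` there are points with small slope,
where `β` is near `1/4` by `nu_small`, and in between `β` is controlled at the interior extrema
of `r`. -/
lemma beta_close {A B δ η : ℝ} (hA : 0 < A) (hB : B < 2) (hδ : 0 < δ) (hη : 0 < η)
    (hη1 : η ≤ 1 / 4) :
    ∃ K : ℝ, ∀ n ≥ K, ∀ β m r r₁ : ℝ → ℝ, OSys n A B β m r r₁ →
      (∀ x, A + δ ≤ x → x + δ ≤ B → |m x - 1 / 4| ≤ η ^ 2 / 256) →
      ∀ x, A + 2 * δ ≤ x → x + 2 * δ ≤ B → |β x - 1 / 4| ≤ η := by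
  obtain ⟨d, hd0, hd1, hd2⟩ : ∃ d > 0, d ≤ δ ∧ 4 * d ≤ η * A ^ 2 := by
    refine ⟨min δ (η * A ^ 2 / 4), lt_min hδ (by positivity), min_le_left _ _, ?_⟩
    linarith [min_le_right δ (η * A ^ 2 / 4)]
  refine ⟨1 + 16 / (d * A * η), fun n hn β m r r₁ h hm x hx hxB => ?_⟩
  have hK : 0 < 16 / (d * A * η) := by positivity
  have hn1 : 1 ≤ n := by linarith
  by_contra! hcon
  have hmem : ∀ t ∈ Set.Icc (x - d) (x + d), t ∈ Set.Icc A B := fun t ht =>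
    ⟨by linarith [ht.1], by linarith [ht.2]⟩
  have hkey : ∀ t ∈ Set.Icc (x - d) (x + d), |r₁ t| * (n * d) ≤ 1 → |β t - 1 / 4| ≤ η / 4 := by
    intro t ht hr
    have ht' := hmem t ht
    refine nu_small (μ := m t - 1 / 4) (s := t) (q := r₁ t) hA ht'.1 hη (by linarith)
      (hm t (by linarith [ht.1]) (by linarith [ht.2])) ?_ ?_
    · rw [h.sq t ht']; ring
    · have h8 : 16 / (d * A * η) < n := by linarith
      rw [div_lt_iff₀ (by positivity)] at h8
      have h9 : |r₁ t| ≤ A * (η / 16) := by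
        have h10 : |r₁ t| * (n * d) ≤ (A * (η / 16)) * (n * d) := by nlinarith
        exact le_of_mul_le_mul_right h10 (by positivity)
      calc r₁ t ^ 2 = |r₁ t| ^ 2 := (sq_abs _).symm
        _ ≤ (A * (η / 16)) ^ 2 := by gcongr
        _ = _ := by ring
  obtain ⟨ξ, hξ, hs1⟩ := h.slope (x := x - d) (y := x) (by linarith) (by linarith)
      (by linarith) (by linarith)
  obtain ⟨ζ, hζ, hs2⟩ := h.slope (x := x) (y := x + d) (by linarith) (by linarith)
      (by linarith) (by linarith)
  have hβξ := hkey ξ ⟨hξ.1.le, by linarith [hξ.2]⟩ (by convert hs1 using 3; ring)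
  have hβζ := hkey ζ ⟨by linarith [hζ.1], hζ.2.le⟩ (by convert hs2 using 3; ring)
  have hsub : Set.Icc ξ ζ ⊆ Set.Icc (x - d) (x + d) :=
    Set.Icc_subset_Icc hξ.1.le hζ.2.le
  have hrc : ContinuousOn r (Set.Icc ξ ζ) := fun s hs =>
    (h.hr s (hmem s (hsub hs))).continuousAt.continuousWithinAt
  have hxm : x ∈ Set.Icc ξ ζ := ⟨hξ.2.le, hζ.1.le⟩
  -- An interior extremum of `r` has `r₁ = 0`.
  have hend : ∀ z ∈ Set.Icc ξ ζ, IsLocalExtr r z ∨ z = ξ ∨ z = ζ → |β z - 1 / 4| ≤ η / 4 := by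
    rintro z hz (hz1 | rfl | rfl)
    · have h0 := hz1.hasDerivAt_eq_zero (h.hr z (hmem z (hsub hz)))
      have h1 : r₁ z = 0 := (mul_eq_zero.1 h0).resolve_left (by linarith)
      exact hkey z (hsub hz) (by rw [h1]; simp)
    · exact hβξ
    · exact hβζ
  have hsqz : ∀ z ∈ Set.Icc ξ ζ, (1 - η) * z ^ 2 ≤ x ^ 2 ∧ x ^ 2 ≤ (1 + η) * z ^ 2 := by
    intro z hz
    have h1 := hsub hz
    have h2 := hmem z h1
    have h3 := hmem x ⟨by linarith, by linarith⟩
    have h4 : η * A ^ 2 ≤ η * z ^ 2 := by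
      have := h2.1
      gcongr
    have h5 : |x ^ 2 - z ^ 2| ≤ 4 * d := by
      rw [show x ^ 2 - z ^ 2 = (x + z) * (x - z) by ring, abs_mul]
      have e1 : |x + z| ≤ 4 := by
        rw [abs_le]; constructor <;> linarith [h2.1, h2.2, h3.1, h3.2]
      have e2 : |x - z| ≤ d := by
        rw [abs_le]; constructor <;> linarith [h1.1, h1.2]
      gcongr
    have h6 := abs_le.1 h5
    constructor <;> linarith
  have hx0 : 0 < x := by linarith
  rcases lt_abs.1 hcon with hc | hc
  · obtain ⟨z, hz, hzmin⟩ := isCompact_Icc.exists_isMinOn ⟨x, hxm⟩ hrc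
    have hz1 : |β z - 1 / 4| ≤ η / 4 := by
      refine hend z hz ?_
      rcases eq_or_lt_of_le hz.1 with he | h1
      · exact Or.inr (Or.inl he.symm)
      rcases eq_or_lt_of_le hz.2 with he | h2
      · exact Or.inr (Or.inr he)
      exact Or.inl (Or.inl (hzmin.isLocalMin (Icc_mem_nhds h1 h2)))
    have hzB := hmem z (hsub hz)
    have e1 : r z ≤ r x := hzmin hxm
    have e2 : r z ^ 2 ≤ r x ^ 2 := by
      have := (h.r0 z hzB).le
      gcongr
    rw [h.rsq z hzB, h.rsq x (hmem x ⟨by linarith, by linarith⟩)] at e2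
    have e3 := (hsqz z hz).1
    have e4 := (abs_le.1 hz1).2
    have hz0 : 0 < z := hA.trans_le hzB.1
    have e5 : x ^ 2 * (1 / 4 + η) ≤ x ^ 2 * β x := by gcongr; linarith
    have e6 : (1 - η) * z ^ 2 * (1 / 4 + η) ≤ x ^ 2 * (1 / 4 + η) := by gcongr
    have e7 : z ^ 2 * β z ≤ z ^ 2 * (1 / 4 + η / 4) := by gcongr; linarith
    have e8 : z ^ 2 * ((1 - η) * (1 / 4 + η)) ≤ z ^ 2 * (1 / 4 + η / 4) := by linarith
    have e9 := le_of_mul_le_mul_left e8 (by positivity)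
    nlinarith
  · obtain ⟨z, hz, hzmax⟩ := isCompact_Icc.exists_isMaxOn ⟨x, hxm⟩ hrc
    have hz1 : |β z - 1 / 4| ≤ η / 4 := by
      refine hend z hz ?_
      rcases eq_or_lt_of_le hz.1 with he | h1
      · exact Or.inr (Or.inl he.symm)
      rcases eq_or_lt_of_le hz.2 with he | h2
      · exact Or.inr (Or.inr he)
      exact Or.inl (Or.inr (hzmax.isLocalMax (Icc_mem_nhds h1 h2)))
    have hzB := hmem z (hsub hz)
    have e1 : r x ≤ r z := hzmax hxm
    have e2 : r x ^ 2 ≤ r z ^ 2 := by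
      have := (h.r0 x (hmem x ⟨by linarith, by linarith⟩)).le
      gcongr
    rw [h.rsq z hzB, h.rsq x (hmem x ⟨by linarith, by linarith⟩)] at e2
    have e3 := (hsqz z hz).2
    have e4 := (abs_le.1 hz1).1
    have hz0 : 0 < z := hA.trans_le hzB.1
    have e5 : x ^ 2 * β x ≤ x ^ 2 * (1 / 4 - η) := by gcongr; linarith
    have e6 : x ^ 2 * (1 / 4 - η) ≤ (1 + η) * z ^ 2 * (1 / 4 - η) := by
      have : 0 ≤ 1 / 4 - η := by linarith
      gcongr
    have e7 : z ^ 2 * (1 / 4 - η / 4) ≤ z ^ 2 * β z := by gcongr; linarith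
    have e8 : z ^ 2 * (1 / 4 - η / 4) ≤ z ^ 2 * ((1 + η) * (1 / 4 - η)) := by linarith
    have e9 := le_of_mul_le_mul_left e8 (by positivity)
    nlinarith

/-- Uniformly in the solution, `β → 1/4`, `g → 1/2`, `p → 0` in the interior as `n → ∞`. -/
theorem crude {A B δ η : ℝ} (hA : 0 < A) (hB : B < 2) (hδ : 0 < δ) (hη : 0 < η) :
    ∃ K : ℝ, ∀ n ≥ K, ∀ b p g : ℝ → ℝ, RSys n A B b p g →
      ∀ x, A + 2 * δ ≤ x → x + 2 * δ ≤ B →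
        |b x / x ^ 2 - 1 / 4| ≤ η ∧ |g x - 1 / 2| ≤ η ∧ |p x| ≤ η := by
  obtain ⟨e, he0, he1, he2, he3⟩ : ∃ e : ℝ, 0 < e ∧ e ≤ 1 / 4 ∧ 2 * e ≤ η ∧ 64 * e ≤ η ^ 2 := by
    refine ⟨min (1 / 4) (min (η / 2) (η ^ 2 / 64)), by positivity, min_le_left _ _, ?_, ?_⟩
    · linarith [(min_le_right (1 / 4) (min (η / 2) (η ^ 2 / 64))).trans (min_le_left _ _)]
    · linarith [(min_le_right (1 / 4) (min (η / 2) (η ^ 2 / 64))).trans (min_le_right _ _)]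
  obtain ⟨a, ha0, ha⟩ : ∃ a : ℝ, 0 < a ∧ a ^ 4 ≤ e ^ 2 / 256 := by
    refine ⟨e / 4, by positivity, ?_⟩
    have : (e / 4) ^ 4 = e ^ 2 / 256 * e ^ 2 := by ring
    rw [this]
    have : e ^ 2 ≤ 1 := by nlinarith
    exact mul_le_of_le_one_right (by positivity) this
  obtain ⟨K1, h1⟩ := m_upper (A := A) (B := B) (δ := δ) (η := e ^ 2 / 256) hA hδ (by positivity)
  obtain ⟨K2, h2⟩ := m_lower (A := A) (B := B) (δ := δ) (a := a) hA hB hδ ha0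
  obtain ⟨K3, h3⟩ := beta_close (A := A) (B := B) (δ := δ) (η := e) hA hB hδ he0 he1
  refine ⟨max K1 (max K2 K3), fun n hn b p g h x hx hxB => ?_⟩
  have hn1 : K1 ≤ n := (le_max_left _ _).trans hn
  have hn2 : K2 ≤ n := ((le_max_left _ _).trans (le_max_right _ _)).trans hn
  have hn3 : K3 ≤ n := ((le_max_right _ _).trans (le_max_right _ _)).trans hn
  have ho := h.osys hA
  have hm : ∀ x, A + δ ≤ x → x + δ ≤ B → |(g x - b x / x ^ 2) - 1 / 4| ≤ e ^ 2 / 256 := by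
    intro x hx hxB
    have q1 := h1 n hn1 _ _ _ _ ho x (by linarith) hxB
    have q2 := h2 n hn2 _ _ _ _ ho x hx hxB
    rw [abs_le]; constructor <;> linarith
  have hb := h3 n hn3 _ _ _ _ ho hm x hx hxB
  have hm := abs_le.1 (hm x (by linarith) (by linarith))
  have hb' := abs_le.1 hb
  have hx0 : 0 < x := by linarith
  have hxm : x ∈ Set.Icc A B := ⟨by linarith, by linarith⟩
  have he4 : e ^ 2 / 256 ≤ e := by nlinarith
  refine ⟨by linarith, by rw [abs_le]; constructor <;> linarith, ?_⟩
  have q := h.alg x hxm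
  have b0 := h.b0 x hxm
  have b1 := h.b1 x hxm
  refine abs_le_of_sq_le_sq ?_ hη.le
  have q2 : x ^ 2 * g x ^ 2 - b x
      = x ^ 2 * ((g x - 1 / 2) ^ 2 + (g x - b x / x ^ 2) - 1 / 4) := by
    field_simp; ring
  have q3 : (g x - 1 / 2) ^ 2 ≤ (2 * e) ^ 2 := by
    refine sq_le_sq' (by linarith) (by linarith)
  have q4 : x ^ 2 * g x ^ 2 - b x ≤ 4 * (3 * e) := by
    rw [q2]
    have : x ^ 2 ≤ 4 := by nlinarith
    calc _ ≤ x ^ 2 * (3 * e) := by gcongr; nlinarith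
      _ ≤ _ := by gcongr
  have q5 : (1 - b x) * (x ^ 2 * g x ^ 2 - b x) ≤ 1 * (4 * (3 * e)) := by
    calc _ ≤ (1 - b x) * (4 * (3 * e)) := by
            have : 0 ≤ 1 - b x := by linarith
            gcongr
      _ ≤ _ := by gcongr; linarith
  rw [q]; linarith

/-! ### The formal approximant -/

/-- Coefficient of `ε = n⁻²` in the expansion of `b`. -/
noncomputable def b1 (s : ℂ) : ℂ := s ^ 2 * (4 + s ^ 2) / (4 * (4 - s ^ 2) ^ 2)
/-- `b1'`. -/
noncomputable def b1d (s : ℂ) : ℂ := 2 * s * (4 + 3 * s ^ 2) / (4 - s ^ 2) ^ 3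
/-- `b1''`. -/
noncomputable def b1dd (s : ℂ) : ℂ := (32 + 112 * s ^ 2 + 18 * s ^ 4) / (4 - s ^ 2) ^ 4
/-- Coefficient of `ε²` in the expansion of `b`. -/
noncomputable def b2 (s : ℂ) : ℂ :=
  s ^ 2 * (64 + 448 * s ^ 2 + 160 * s ^ 4 + 3 * s ^ 6) / (4 * (4 - s ^ 2) ^ 5)
/-- `b2'`. -/
noncomputable def b2d (s : ℂ) : ℂ :=
  s * (256 + 3840 * s ^ 2 + 3264 * s ^ 4 + 368 * s ^ 6 + 3 * s ^ 8) / (2 * (4 - s ^ 2) ^ 6)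
/-- `b2''`. -/
noncomputable def b2dd (s : ℂ) : ℂ :=
  (256 + 3840 * s ^ 2 + 3264 * s ^ 4 + 368 * s ^ 6 + 3 * s ^ 8) / (2 * (4 - s ^ 2) ^ 6)
  + s ^ 2 * (16896 + 45312 * s ^ 2 + 17472 * s ^ 4 + 1152 * s ^ 6 + 6 * s ^ 8) / (4 - s ^ 2) ^ 7
/-- Coefficient of `ε` in the expansion of `g - 1/2`. -/
noncomputable def w1 (s : ℂ) : ℂ := 2 / (4 - s ^ 2) ^ 2
/-- Coefficient of `ε²` in the expansion of `g - 1/2`. -/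
noncomputable def w2 (s : ℂ) : ℂ :=
  (64 + 272 * s ^ 2 + 68 * s ^ 4 + s ^ 6) / (2 * (4 - s ^ 2) ^ 5)

/-- The approximant of `b`. -/
noncomputable def bt (ε s : ℂ) : ℂ := s ^ 2 / 4 + ε * b1 s + ε ^ 2 * b2 s
/-- `∂ₛ bt`. -/
noncomputable def btd (ε s : ℂ) : ℂ := s / 2 + ε * b1d s + ε ^ 2 * b2d s
/-- `∂ₛ² bt`. -/
noncomputable def btdd (ε s : ℂ) : ℂ := 1 / 2 + ε * b1dd s + ε ^ 2 * b2dd s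
/-- The approximant of `g - 1/2`. -/
noncomputable def wt (ε s : ℂ) : ℂ := ε * w1 s + ε ^ 2 * w2 s

lemma hasDerivAt_u (s : ℂ) (k : ℕ) :
    HasDerivAt (fun s : ℂ => (4 - s ^ 2) ^ k) (k * (4 - s ^ 2) ^ (k - 1) * (-(2 * s))) s := by
  have := (((hasDerivAt_pow 2 s).const_sub 4).pow k)
  refine this.congr_deriv ?_
  simp

lemma hasDerivAt_poly {P : Polynomial ℂ} {f : ℂ → ℂ} (hf : ∀ s, f s = P.eval s) (s : ℂ) :
    HasDerivAt f (P.derivative.eval s) s := by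
  have : f = fun s => P.eval s := funext hf
  rw [this]; exact P.hasDerivAt s

lemma hasDerivAt_b1 {s : ℂ} (hs : 4 - s ^ 2 ≠ 0) : HasDerivAt b1 (b1d s) s := by
  have h1 := hasDerivAt_poly (P := X ^ 2 * (4 + X ^ 2)) (f := fun s => s ^ 2 * (4 + s ^ 2))
    (fun s => by simp) s
  refine (h1.div ((hasDerivAt_u s 2).const_mul 4) (mul_ne_zero (by norm_num) (pow_ne_zero _ hs))).congr_deriv ?_
  rw [b1d]
  simp
  field_simp
  ring

lemma hasDerivAt_b1d {s : ℂ} (hs : 4 - s ^ 2 ≠ 0) : HasDerivAt b1d (b1dd s) s := by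
  have h1 := hasDerivAt_poly (P := 2 * X * (4 + 3 * X ^ 2)) (f := fun s => 2 * s * (4 + 3 * s ^ 2))
    (fun s => by simp) s
  refine (h1.div (hasDerivAt_u s 3) (by positivity)).congr_deriv ?_
  rw [b1dd]
  simp
  field_simp
  ring

lemma hasDerivAt_b2 {s : ℂ} (hs : 4 - s ^ 2 ≠ 0) : HasDerivAt b2 (b2d s) s := by
  have h1 := hasDerivAt_poly (P := X ^ 2 * (64 + 448 * X ^ 2 + 160 * X ^ 4 + 3 * X ^ 6))
    (f := fun s => s ^ 2 * (64 + 448 * s ^ 2 + 160 * s ^ 4 + 3 * s ^ 6))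
    (fun s => by simp) s
  refine (h1.div ((hasDerivAt_u s 5).const_mul 4) (mul_ne_zero (by norm_num) (pow_ne_zero _ hs))).congr_deriv ?_
  rw [b2d]
  simp
  field_simp
  ring

lemma hasDerivAt_b2d {s : ℂ} (hs : 4 - s ^ 2 ≠ 0) : HasDerivAt b2d (b2dd s) s := by
  have h1 := hasDerivAt_poly
    (P := X * (256 + 3840 * X ^ 2 + 3264 * X ^ 4 + 368 * X ^ 6 + 3 * X ^ 8))
    (f := fun s => s * (256 + 3840 * s ^ 2 + 3264 * s ^ 4 + 368 * s ^ 6 + 3 * s ^ 8))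
    (fun s => by simp) s
  refine (h1.div ((hasDerivAt_u s 6).const_mul 2) (mul_ne_zero (by norm_num) (pow_ne_zero _ hs))).congr_deriv ?_
  rw [b2dd]
  simp
  field_simp
  ring

lemma hasDerivAt_bt {s : ℂ} (ε : ℂ) (hs : 4 - s ^ 2 ≠ 0) :
    HasDerivAt (bt ε) (btd ε s) s := by
  refine ((((hasDerivAt_pow 2 s).div_const 4).add ((hasDerivAt_b1 hs).const_mul ε)).add
    ((hasDerivAt_b2 hs).const_mul (ε ^ 2))).congr_deriv ?_
  rw [btd]; simp; ring

lemma hasDerivAt_btd {s : ℂ} (ε : ℂ) (hs : 4 - s ^ 2 ≠ 0) :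
    HasDerivAt (btd ε) (btdd ε s) s :=
  (((hasDerivAt_id s).div_const 2).add ((hasDerivAt_b1d hs).const_mul ε)).add
    ((hasDerivAt_b2d hs).const_mul (ε ^ 2))

/-- Cofactor of `ε³` in the residual of the second order equation. -/
noncomputable def P1 (ε s : ℂ) : ℂ :=
  2 * (b2dd s * (1 - s ^ 2 / 4) - b1dd s * b1 s - b2 s / 2)
  - 2 * ε * (b1dd s * b2 s + b2dd s * b1 s) - 2 * ε ^ 2 * b2dd s * b2 s
  - 8 * (w1 s * (b1 s ^ 2 - 2 * (1 - s ^ 2 / 4) * b2 s) - 2 * w2 s * (1 - s ^ 2 / 4) * b1 s)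
  - 8 * ε * (2 * w1 s * b1 s * b2 s + w2 s * (b1 s ^ 2 - 2 * (1 - s ^ 2 / 4) * b2 s))
  - 8 * ε ^ 2 * (w1 s * b2 s ^ 2 + 2 * w2 s * b1 s * b2 s) - 8 * ε ^ 3 * w2 s * b2 s ^ 2
  + b1d s ^ 2 + s * b2d s + 2 * ε * b1d s * b2d s + ε ^ 2 * b2d s ^ 2

/-- Cofactor of `ε³` in the residual of the first integral. -/
noncomputable def P2 (ε s : ℂ) : ℂ :=
  (1 - s ^ 2 / 4) * (4 * s ^ 2 * (2 * w1 s * w2 s + ε * w2 s ^ 2))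
  - b1 s * (4 * s ^ 2 * (w2 s + w1 s ^ 2) - 4 * b2 s)
  - ε * b1 s * (4 * s ^ 2 * (2 * w1 s * w2 s + ε * w2 s ^ 2))
  - b2 s * (4 * s ^ 2 * w1 s - 4 * b1 s)
  - ε * b2 s * (4 * s ^ 2 * (w2 s + w1 s ^ 2) - 4 * b2 s)
  - ε ^ 2 * b2 s * (4 * s ^ 2 * (2 * w1 s * w2 s + ε * w2 s ^ 2))
  - b1d s ^ 2 - s * b2d s - 2 * ε * b1d s * b2d s - ε ^ 2 * b2d s ^ 2

/-- The approximant solves the second-order equation for `b` up to `O(ε³)`. -/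
lemma res1 {s : ℂ} (ε : ℂ) (hs : 4 - s ^ 2 ≠ 0) :
    2 * ε * btdd ε s * (1 - bt ε s) - 8 * wt ε s * (1 - bt ε s) ^ 2 + ε * btd ε s ^ 2
      = ε ^ 3 * P1 ε s := by
  have h1 : (1 - s ^ 2 / 4) - 8 * w1 s * (1 - s ^ 2 / 4) ^ 2 + s ^ 2 / 4 = 0 := by
    rw [w1]; field_simp; ring
  have h2 : 2 * b1dd s * (1 - s ^ 2 / 4) - b1 s - 8 * w2 s * (1 - s ^ 2 / 4) ^ 2
      + 16 * w1 s * (1 - s ^ 2 / 4) * b1 s + s * b1d s = 0 := by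
    rw [w1, w2, b1, b1d, b1dd]; field_simp; ring
  rw [P1, btdd, btd, bt, wt]
  linear_combination ε * h1 + ε ^ 2 * h2

/-- The approximant satisfies the first integral up to `O(ε³)`. -/
lemma res2 {s : ℂ} (ε : ℂ) (hs : 4 - s ^ 2 ≠ 0) :
    (1 - bt ε s) * (s ^ 2 * (4 * wt ε s + 4 * wt ε s ^ 2 + 1) - 4 * bt ε s) - ε * btd ε s ^ 2
      = ε ^ 3 * P2 ε s := by
  have h1 : (1 - s ^ 2 / 4) * (4 * s ^ 2 * w1 s - 4 * b1 s) - s ^ 2 / 4 = 0 := by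
    rw [w1, b1]; field_simp; ring
  have h2 : (1 - s ^ 2 / 4) * (4 * s ^ 2 * (w2 s + w1 s ^ 2) - 4 * b2 s)
      - b1 s * (4 * s ^ 2 * w1 s - 4 * b1 s) - s * b1d s = 0 := by
    rw [w1, w2, b1, b1d, b2]; field_simp; ring
  rw [P2, btd, bt, wt]
  linear_combination ε * h1 + ε ^ 2 * h2

/-! ### Linearisation around the approximant -/

/-- Exact difference of the system at `(b, p, ω)`, `ω = g - 1/2`, and at the approximant
`(bt, pt, wt)`. Here `G` is the difference of the two values of `p² / (1 - b)`, and `ρ₁`, `ρ₂` are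
the residuals. The first integral determines `D = ω - wt` from `y` and `Δ`, so that the right-hand
side of the equation for `Δ` is `(4 - s²)/s² · y` to leading order. -/
lemma diff_identity {s b bt y p pt Δ ω wt D ρ₁ ρ₂ : ℂ} (hs : s ≠ 0) (hc : 1 - b ≠ 0)
    (hct : 1 - bt ≠ 0) (hb : b = bt + y) (hp : p = pt + Δ) (hω : ω = wt + D)
    (h1 : p ^ 2 = 4 * (1 - b) * (s ^ 2 * (ω + ω ^ 2 + 1 / 4) - b))
    (h2 : (1 - bt) * (s ^ 2 * (4 * wt + 4 * wt ^ 2 + 1) - 4 * bt) - pt ^ 2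
      = 4 * s ^ 2 * (1 - bt) * ρ₂) :
    ∃ G : ℂ, G * ((1 - b) * (1 - bt)) = Δ * (2 * pt + Δ) * (1 - bt) + pt ^ 2 * y ∧
      D * (1 + ω + wt) = y / s ^ 2 + G / (4 * s ^ 2) - ρ₂ ∧
      (4 * ω * (1 - b) - p ^ 2 / (2 * (1 - b))) - (4 * wt * (1 - bt) - pt ^ 2 / (2 * (1 - bt)) + ρ₁)
        - (4 - s ^ 2) / s ^ 2 * y
      = 4 * (1 - b) * (-(D * (2 * wt + D)) + G / (4 * s ^ 2) - ρ₂)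
        - 4 * y / s ^ 2 * (y + (bt - s ^ 2 / 4)) - 4 * wt * y - G / 2 - ρ₁ := by
  refine ⟨p ^ 2 / (1 - b) - pt ^ 2 / (1 - bt), ?_, ?_, ?_⟩
  · field_simp
    rw [hp, hb]; ring
  · have e1 : p ^ 2 / (1 - b) = 4 * (s ^ 2 * (ω + ω ^ 2 + 1 / 4) - b) := by
      rw [h1]; field_simp
    have e2 : pt ^ 2 / (1 - bt) = (s ^ 2 * (4 * wt + 4 * wt ^ 2 + 1) - 4 * bt)
        - 4 * s ^ 2 * ρ₂ := by
      field_simp; linear_combination -h2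
    rw [e1, e2]; field_simp
    rw [hω, hb]; ring
  · have e1 : p ^ 2 / (1 - b) = 4 * (s ^ 2 * (ω + ω ^ 2 + 1 / 4) - b) := by
      rw [h1]; field_simp
    have e2 : pt ^ 2 / (1 - bt) = (s ^ 2 * (4 * wt + 4 * wt ^ 2 + 1) - 4 * bt)
        - 4 * s ^ 2 * ρ₂ := by
      field_simp; linear_combination -h2
    have e3 : p ^ 2 / (2 * (1 - b)) = p ^ 2 / (1 - b) / 2 := by field_simp
    have e4 : pt ^ 2 / (2 * (1 - bt)) = pt ^ 2 / (1 - bt) / 2 := by field_simp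
    rw [e3, e4, e1, e2]; field_simp
    rw [hω, hb]; ring

set_option maxHeartbeats 1600000 in
/-- Quantitative form of `diff_identity`: `M` bounds the errors `y`, `Δ` and `ρ` the residuals. -/
lemma pointwise {n Q M ρ : ℝ} {s b bt y p pt Δ ω wt D ρ₁ ρ₂ : ℂ} (hs : s ≠ 0) (hc : 1 - b ≠ 0)
    (hct : 1 - bt ≠ 0) (hb : b = bt + y) (hp : p = pt + Δ) (hω : ω = wt + D)
    (h1 : p ^ 2 = 4 * (1 - b) * (s ^ 2 * (ω + ω ^ 2 + 1 / 4) - b))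
    (h2 : (1 - bt) * (s ^ 2 * (4 * wt + 4 * wt ^ 2 + 1) - 4 * bt) - pt ^ 2
      = 4 * s ^ 2 * (1 - bt) * ρ₂)
    (hn : 1 ≤ n) (hQ : 1 ≤ Q) (hM0 : 0 ≤ M) (hM : M ≤ 1) (hρ0 : 0 ≤ ρ) (hρ : ρ ≤ 1)
    (hy : ‖y‖ ≤ M) (hΔ : ‖Δ‖ ≤ M)
    (k1 : ‖(s ^ 2)⁻¹‖ ≤ Q) (k2 : ‖1 - b‖ ≤ Q) (k3 : ‖(1 - b)⁻¹‖ ≤ Q) (k5 : ‖(1 - bt)⁻¹‖ ≤ Q)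
    (k6 : ‖pt‖ ≤ Q / n) (k7 : ‖wt‖ ≤ Q / n) (k8 : ‖bt - s ^ 2 / 4‖ ≤ Q / n)
    (k9 : ‖ρ₁‖ ≤ Q * ρ) (k10 : ‖ρ₂‖ ≤ Q * ρ) (k11 : ‖(1 + ω + wt)⁻¹‖ ≤ Q)
    (k12 : 1 + ω + wt ≠ 0) :
    ‖D‖ ≤ 10 * Q ^ 6 * (M + ρ) ∧
    ‖(4 * ω * (1 - b) - p ^ 2 / (2 * (1 - b))) - (4 * wt * (1 - bt) - pt ^ 2 / (2 * (1 - bt)) + ρ₁)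
        - (4 - s ^ 2) / s ^ 2 * y‖ ≤ 3000 * Q ^ 13 * (M / n + M ^ 2 + ρ) := by
  obtain ⟨G, g1, g2, g3⟩ := diff_identity (ρ₁ := ρ₁) hs hc hct hb hp hω h1 h2
  rw [g3]
  have hn0 : 0 < n := by linarith
  set i := 1 / n with hi
  have hi0 : 0 < i := by positivity
  have hi1 : i ≤ 1 := by rw [hi, div_le_one hn0]; exact hn
  have eQ : Q / n = Q * i := by rw [hi]; ring
  have eM : M / n = M * i := by rw [hi]; ring
  rw [eQ] at k6 k7 k8
  rw [eM]
  set κ := M * i + M ^ 2 with hκ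
  have hκ0 : 0 ≤ κ := by positivity
  have hκM : κ ≤ 2 * M := by rw [hκ]; nlinarith
  have hQp : ∀ {a c : ℕ}, a ≤ c → Q ^ a ≤ Q ^ c := fun h => pow_le_pow_right₀ hQ h
  have hG : ‖G‖ ≤ 4 * Q ^ 4 * κ := by
    have e : G = (Δ * (2 * pt + Δ)) * (1 - b)⁻¹ + pt ^ 2 * y * (1 - b)⁻¹ * (1 - bt)⁻¹ := by
      field_simp
      linear_combination g1
    rw [e]
    calc _ ≤ ‖Δ‖ * (2 * ‖pt‖ + ‖Δ‖) * ‖(1 - b)⁻¹‖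
            + ‖pt‖ ^ 2 * ‖y‖ * ‖(1 - b)⁻¹‖ * ‖(1 - bt)⁻¹‖ := by
          refine (norm_add_le _ _).trans ?_
          simp only [norm_mul, norm_pow]
          gcongr
          refine (norm_add_le _ _).trans ?_
          simp
      _ ≤ M * (2 * (Q * i) + M) * Q + (Q * i) ^ 2 * M * Q * Q := by gcongr
      _ = 2 * Q ^ 2 * (M * i) + Q ^ 1 * M ^ 2 + Q ^ 4 * (M * i) * i := by ring
      _ ≤ 2 * Q ^ 4 * (M * i) + Q ^ 4 * M ^ 2 + Q ^ 4 * (M * i) * 1 := by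
          gcongr <;> first | exact hQ | norm_num
      _ ≤ _ := by
        rw [hκ]
        have : 0 ≤ Q ^ 4 * (M * i) := by positivity
        have : 0 ≤ Q ^ 4 * M ^ 2 := by positivity
        nlinarith
  have hD : ‖D‖ ≤ 10 * Q ^ 6 * (M + ρ) := by
    have e : D = (y * (s ^ 2)⁻¹ + G * (s ^ 2)⁻¹ / 4 - ρ₂) * (1 + ω + wt)⁻¹ := by
      rw [eq_mul_inv_iff_mul_eq₀ k12, g2]; field_simp
    rw [e, norm_mul]
    calc _ ≤ (‖y‖ * ‖(s ^ 2)⁻¹‖ + ‖G‖ * ‖(s ^ 2)⁻¹‖ / 4 + ‖ρ₂‖) * ‖(1 + ω + wt)⁻¹‖ := by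
          gcongr
          refine (norm_sub_le _ _).trans ?_
          gcongr
          refine (norm_add_le _ _).trans ?_
          simp
      _ ≤ (M * Q + (4 * Q ^ 4 * (2 * M)) * Q / 4 + Q * ρ) * Q := by
          gcongr
          exact hG.trans (by gcongr)
      _ = Q ^ 2 * M + 2 * Q ^ 6 * M + Q ^ 2 * ρ := by ring
      _ ≤ Q ^ 6 * M + 2 * Q ^ 6 * M + Q ^ 6 * ρ := by
          gcongr <;> first | exact hQ | norm_num
      _ ≤ _ := by
        have : 0 ≤ Q ^ 6 * M := by positivity
        have : 0 ≤ Q ^ 6 * ρ := by positivity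
        nlinarith
  refine ⟨hD, ?_⟩
  have hDD : ‖D * (2 * wt + D)‖ ≤ 120 * Q ^ 12 * (κ + 4 * ρ) := by
    rw [norm_mul]
    have h3 : ‖2 * wt + D‖ ≤ 12 * Q ^ 6 * (i + M + ρ) := by
      calc _ ≤ 2 * ‖wt‖ + ‖D‖ := by
            refine (norm_add_le _ _).trans ?_
            simp
        _ ≤ 2 * (Q ^ 1 * i) + 10 * Q ^ 6 * (M + ρ) := by rw [pow_one]; gcongr
        _ ≤ 2 * (Q ^ 6 * i) + 10 * Q ^ 6 * (M + ρ) := by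
          gcongr <;> first | exact hQ | norm_num
        _ ≤ _ := by
          have : 0 ≤ Q ^ 6 * i := by positivity
          have : 0 ≤ Q ^ 6 * (M + ρ) := by positivity
          nlinarith
    calc _ ≤ (10 * Q ^ 6 * (M + ρ)) * (12 * Q ^ 6 * (i + M + ρ)) := by gcongr
      _ = 120 * Q ^ 12 * ((M + ρ) * (i + M + ρ)) := by ring
      _ ≤ _ := by
        gcongr
        rw [hκ]
        nlinarith [mul_nonneg hM0 hρ0, mul_nonneg hi0.le hρ0, mul_nonneg hρ0 hρ0,
          mul_nonneg hρ0 (sub_nonneg.2 hM), mul_nonneg hρ0 (sub_nonneg.2 hi1),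
          mul_nonneg hρ0 (sub_nonneg.2 hρ)]
  have t1 : ‖4 * (1 - b) * (-(D * (2 * wt + D)) + G / (4 * s ^ 2) - ρ₂)‖
      ≤ 4 * Q * (120 * Q ^ 12 * (κ + 4 * ρ) + Q ^ 5 * κ + Q * ρ) := by
    have e : G / (4 * s ^ 2) = G * (s ^ 2)⁻¹ / 4 := by field_simp
    rw [e, norm_mul, norm_mul]
    have h4 : ‖(4 : ℂ)‖ = 4 := by simp
    rw [h4]
    gcongr
    refine (norm_sub_le _ _).trans ?_
    gcongr
    refine (norm_add_le _ _).trans ?_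
    rw [norm_neg]
    gcongr
    rw [norm_div, norm_mul, h4]
    calc _ ≤ (4 * Q ^ 4 * κ) * Q / 4 := by gcongr
      _ = _ := by ring
  have t2 : ‖4 * y / s ^ 2 * (y + (bt - s ^ 2 / 4))‖ ≤ 4 * Q ^ 2 * κ := by
    have e : 4 * y / s ^ 2 * (y + (bt - s ^ 2 / 4))
      = 4 * (y * (s ^ 2)⁻¹ * (y + (bt - s ^ 2 / 4))) := by field_simp
    rw [e, norm_mul, norm_mul, norm_mul]
    have h4 : ‖(4 : ℂ)‖ = 4 := by simp
    rw [h4, mul_assoc 4 (Q ^ 2)]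
    refine mul_le_mul_of_nonneg_left ?_ (by norm_num)
    calc _ ≤ M * Q * (M + Q * i) := by
          gcongr
          exact (norm_add_le _ _).trans (by gcongr)
      _ = Q ^ 1 * M ^ 2 + Q ^ 2 * (M * i) := by ring
      _ ≤ Q ^ 2 * M ^ 2 + Q ^ 2 * (M * i) := by gcongr <;> first | exact hQ | norm_num
      _ = _ := by rw [hκ]; ring
  have t3 : ‖4 * wt * y‖ ≤ 4 * Q * κ := by
    rw [norm_mul, norm_mul]
    have h4 : ‖(4 : ℂ)‖ = 4 := by simp
    rw [h4]
    calc _ ≤ 4 * (Q * i) * M := by gcongr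
      _ = 4 * Q * (M * i) := by ring
      _ ≤ _ := by rw [hκ]; gcongr; nlinarith
  have t4 : ‖G / 2‖ ≤ 2 * Q ^ 4 * κ := by
    rw [norm_div]; simp; linarith
  calc _ ≤ 4 * Q * (120 * Q ^ 12 * (κ + 4 * ρ) + Q ^ 5 * κ + Q * ρ) + 4 * Q ^ 2 * κ
        + 4 * Q * κ + 2 * Q ^ 4 * κ + Q * ρ := by
        refine (norm_sub_le _ _).trans (add_le_add ?_ k9)
        refine (norm_sub_le _ _).trans (add_le_add ?_ t4)
        refine (norm_sub_le _ _).trans (add_le_add ?_ t3)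
        exact (norm_sub_le _ _).trans (add_le_add t1 t2)
    _ = 480 * Q ^ 13 * (κ + 4 * ρ) + 4 * Q ^ 6 * κ + 4 * Q ^ 2 * ρ + 4 * Q ^ 2 * κ
        + 4 * Q ^ 1 * κ + 2 * Q ^ 4 * κ + Q ^ 1 * ρ := by ring
    _ ≤ 480 * Q ^ 13 * (κ + 4 * ρ) + 4 * Q ^ 13 * κ + 4 * Q ^ 13 * ρ + 4 * Q ^ 13 * κ
        + 4 * Q ^ 13 * κ + 2 * Q ^ 13 * κ + Q ^ 13 * ρ := by
        gcongr <;> first | exact hQ | norm_num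
    _ ≤ _ := by
      have : 0 ≤ Q ^ 13 * κ := by positivity
      have : 0 ≤ Q ^ 13 * ρ := by positivity
      nlinarith

/-- `ε = n⁻²`, `n = N + 1`. -/
noncomputable def ep (N : ℕ) : ℂ := 1 / ((N : ℂ) + 1) ^ 2
/-- The error `b - bt`. -/
noncomputable def yf (N : ℕ) (s : ℂ) : ℂ := bf N s - bt (ep N) s
/-- The error `p - bt' / n`. -/
noncomputable def df (N : ℕ) (s : ℂ) : ℂ := pf N s - btd (ep N) s / (N + 1)

lemma norm_n (N : ℕ) : ‖(N : ℂ) + 1‖ = N + 1 := by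
  have : (N : ℂ) + 1 = ((N + 1 : ℝ) : ℂ) := by push_cast; rfl
  rw [this, norm_real, Real.norm_of_nonneg (by positivity)]

lemma norm_ep (N : ℕ) : ‖ep N‖ = 1 / ((N : ℝ) + 1) ^ 2 := by
  rw [ep, norm_div, norm_pow, norm_n, norm_one]

lemma one_le_n (N : ℕ) : (1 : ℝ) ≤ N + 1 := by linarith [(Nat.cast_nonneg N : (0 : ℝ) ≤ N)]

lemma norm_ep_le (N : ℕ) : ‖ep N‖ ≤ 1 / ((N : ℝ) + 1) := by
  rw [norm_ep]
  have := one_le_n N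
  gcongr
  exact le_self_pow₀ this two_ne_zero

lemma norm_ep_le_one (N : ℕ) : ‖ep N‖ ≤ 1 := by
  refine (norm_ep_le N).trans ?_
  have := one_le_n N
  rw [div_le_one (by linarith)]; exact this

/-- A compact set avoiding the singular points `0, ±2`. -/
structure Adm (K : Set ℂ) : Prop where
  cpt : IsCompact K
  ne0 : ∀ s ∈ K, s ≠ 0
  ne2 : ∀ s ∈ K, 4 - s ^ 2 ≠ 0

/-- Bound on `K`, uniform in the parameter `ε`. -/
lemma bound_pair {K : Set ℂ} (hK : Adm K) {F : ℂ → ℂ → ℂ}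
    (hF : ContinuousOn (fun z : ℂ × ℂ => F z.1 z.2) (Set.univ ×ˢ K)) :
    ∃ Q : ℝ, ∀ ε, ‖ε‖ ≤ 1 → ∀ s ∈ K, ‖F ε s‖ ≤ Q := by
  have hc : IsCompact (Metric.closedBall (0 : ℂ) 1 ×ˢ K) := (isCompact_closedBall 0 1).prod hK.cpt
  obtain ⟨Q, hQ⟩ := hc.exists_bound_of_continuousOn
    (hF.mono (Set.prod_mono (Set.subset_univ _) le_rfl))
  exact ⟨Q, fun ε hε s hs => hQ (ε, s) ⟨by simpa using hε, hs⟩⟩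

lemma coef_cont {K : Set ℂ} (hK : Adm K) :
    ContinuousOn b1 K ∧ ContinuousOn b1d K ∧ ContinuousOn b1dd K ∧ ContinuousOn b2 K ∧
    ContinuousOn b2d K ∧ ContinuousOn b2dd K ∧ ContinuousOn w1 K ∧ ContinuousOn w2 K := by
  have h1 : ∀ k, ∀ s ∈ K, (4 - s ^ 2) ^ k ≠ 0 := fun k s hs => pow_ne_zero k (hK.ne2 s hs)
  have h2 : ∀ k, ∀ s ∈ K, 2 * (4 - s ^ 2) ^ k ≠ 0 := fun k s hs =>
    mul_ne_zero two_ne_zero (h1 k s hs)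
  have h4 : ∀ k, ∀ s ∈ K, 4 * (4 - s ^ 2) ^ k ≠ 0 := fun k s hs =>
    mul_ne_zero (by norm_num) (h1 k s hs)
  refine ⟨?_, ?_, ?_, ?_, ?_, ?_, ?_, ?_⟩
  · exact ContinuousOn.div (by fun_prop) (by fun_prop) (h4 2)
  · exact ContinuousOn.div (by fun_prop) (by fun_prop) (h1 3)
  · exact ContinuousOn.div (by fun_prop) (by fun_prop) (h1 4)
  · exact ContinuousOn.div (by fun_prop) (by fun_prop) (h4 5)
  · exact ContinuousOn.div (by fun_prop) (by fun_prop) (h2 6)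
  · exact (ContinuousOn.div (by fun_prop) (by fun_prop) (h2 6)).add
      (ContinuousOn.div (by fun_prop) (by fun_prop) (h1 7))
  · exact ContinuousOn.div (by fun_prop) (by fun_prop) (h1 2)
  · exact ContinuousOn.div (by fun_prop) (by fun_prop) (h2 5)

/-- Uniform bounds on the approximant and on the residual cofactors. -/
lemma approx_bounds {K : Set ℂ} (hK : Adm K) :
    ∃ Q : ℝ, 1 ≤ Q ∧ ∀ N : ℕ, ∀ s ∈ K,
      ‖bt (ep N) s - s ^ 2 / 4‖ ≤ Q / (N + 1) ∧ ‖btd (ep N) s‖ ≤ Q ∧ ‖wt (ep N) s‖ ≤ Q / (N + 1) ∧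
      ‖P1 (ep N) s‖ ≤ Q ∧ ‖P2 (ep N) s‖ ≤ Q := by
  obtain ⟨c1, c2, c3, c4, c5, c6, c7, c8⟩ := coef_cont hK
  have lift : ∀ {f : ℂ → ℂ}, ContinuousOn f K →
      ContinuousOn (fun z : ℂ × ℂ => f z.2) (Set.univ ×ˢ K) := fun h =>
    h.comp continuous_snd.continuousOn fun z hz => hz.2
  have d1 := lift c1; have d2 := lift c2; have d3 := lift c3; have d4 := lift c4
  have d5 := lift c5; have d6 := lift c6; have d7 := lift c7; have d8 := lift c8
  obtain ⟨Q1, q1⟩ := bound_pair hK (F := fun ε s => b1 s + ε * b2 s) (by fun_prop)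
  obtain ⟨Q2, q2⟩ := bound_pair hK (F := btd) (by unfold btd; fun_prop)
  obtain ⟨Q3, q3⟩ := bound_pair hK (F := fun ε s => w1 s + ε * w2 s) (by fun_prop)
  obtain ⟨Q4, q4⟩ := bound_pair hK (F := P1) (by unfold P1; fun_prop)
  obtain ⟨Q5, q5⟩ := bound_pair hK (F := P2) (by unfold P2; fun_prop)
  have a1 := abs_nonneg Q1; have a2 := abs_nonneg Q2; have a3 := abs_nonneg Q3
  have a4 := abs_nonneg Q4; have a5 := abs_nonneg Q5
  have l1 := le_abs_self Q1; have l2 := le_abs_self Q2; have l3 := le_abs_self Q3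
  have l4 := le_abs_self Q4; have l5 := le_abs_self Q5
  refine ⟨1 + |Q1| + |Q2| + |Q3| + |Q4| + |Q5|, by linarith, fun N s hs => ?_⟩
  have he := norm_ep_le_one N
  have hn := one_le_n N
  refine ⟨?_, (q2 _ he s hs).trans (by linarith), ?_, (q4 _ he s hs).trans (by linarith),
    (q5 _ he s hs).trans (by linarith)⟩
  · have e : bt (ep N) s - s ^ 2 / 4 = ep N * (b1 s + ep N * b2 s) := by rw [bt]; ring
    rw [e, norm_mul]
    calc _ ≤ 1 / ((N : ℝ) + 1) * (1 + |Q1| + |Q2| + |Q3| + |Q4| + |Q5|) := by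
          gcongr
          · exact norm_ep_le N
          · exact (q1 _ he s hs).trans (by linarith)
      _ = _ := by ring
  · have e : wt (ep N) s = ep N * (w1 s + ep N * w2 s) := by rw [wt]; ring
    rw [e, norm_mul]
    calc _ ≤ 1 / ((N : ℝ) + 1) * (1 + |Q1| + |Q2| + |Q3| + |Q4| + |Q5|) := by
          gcongr
          · exact norm_ep_le N
          · exact (q3 _ he s hs).trans (by linarith)
      _ = _ := by ring

lemma inv_norm_le {z : ℂ} {c : ℝ} (hc : 0 < c) (h : c ≤ ‖z‖) : ‖z⁻¹‖ ≤ 1 / c := by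
  rw [norm_inv, inv_eq_one_div]
  gcongr

lemma hasDerivAt_yf {N : ℕ} {s : ℂ} (h : ((N : ℂ) + 1) * s ∈ UU N) (hs : 4 - s ^ 2 ≠ 0) :
    HasDerivAt (yf N) ((N + 1) * df N s) s := by
  refine ((hasDerivAt_bf h).sub (hasDerivAt_bt (ep N) hs)).congr_deriv ?_
  have := n_ne N
  rw [df]; field_simp

set_option maxHeartbeats 1600000 in
/-- The error `(b - bt, p - bt'/n)` solves the linearised system up to a controlled remainder. -/
theorem est {K : Set ℂ} (hK : Adm K) :
    ∃ Q : ℝ, 1 ≤ Q ∧ ∃ δ₀ : ℝ, 0 < δ₀ ∧ δ₀ ≤ 1 ∧ ∃ n₀ : ℕ, ∀ N ≥ n₀, ∀ s ∈ K,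
      ((N : ℂ) + 1) * s ∈ UU N → ∀ M : ℝ, 0 ≤ M → M ≤ δ₀ → ‖yf N s‖ ≤ M → ‖df N s‖ ≤ M →
      ‖gf N s - 1 / 2‖ ≤ 1 / 4 →
      ‖gf N s - 1 / 2 - wt (ep N) s‖ ≤ Q * (M + 1 / ((N : ℝ) + 1) ^ 6) ∧
      ∃ R : ℂ, HasDerivAt (df N) ((N + 1) * ((4 - s ^ 2) / s ^ 2 * yf N s) + R) s ∧
        ‖R‖ ≤ Q * (M + ((N : ℝ) + 1) * M ^ 2 + 1 / ((N : ℝ) + 1) ^ 5) := by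
  obtain ⟨Q0, hQ0, hb⟩ := approx_bounds hK
  obtain ⟨Q1, hQ1⟩ := hK.cpt.exists_bound_of_continuousOn (f := fun s : ℂ => (s ^ 2)⁻¹)
    (ContinuousOn.inv₀ (by fun_prop) fun s hs => pow_ne_zero 2 (hK.ne0 s hs))
  obtain ⟨Q2, hQ2⟩ := hK.cpt.exists_bound_of_continuousOn (f := fun s : ℂ => (4 - s ^ 2)⁻¹)
    (ContinuousOn.inv₀ (by fun_prop) fun s hs => hK.ne2 s hs)
  obtain ⟨Q3, hQ3⟩ := hK.cpt.exists_bound_of_continuousOn (f := fun s : ℂ => 1 - s ^ 2 / 4)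
    (by fun_prop)
  -- `c` is a lower bound for `|1 - s²/4| / 2`.
  obtain ⟨c, hc⟩ : ∃ c : ℝ, c = 1 / (8 * (1 + |Q2|)) := ⟨_, rfl⟩
  have hQ2a := abs_nonneg Q2
  have hQ1a := abs_nonneg Q1
  have hQ3a := abs_nonneg Q3
  have hc0 : 0 < c := by rw [hc]; positivity
  have hc2 : ∀ s ∈ K, 2 * c ≤ ‖1 - s ^ 2 / 4‖ := by
    intro s hs
    have h1 := (hQ2 s hs).trans (le_abs_self Q2)
    have h2 : (1 : ℂ) - s ^ 2 / 4 = (4 - s ^ 2) / 4 := by ring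
    have h3 : 0 < ‖4 - s ^ 2‖ := norm_pos_iff.2 (hK.ne2 s hs)
    rw [norm_inv] at h1
    have h4 : 1 ≤ (1 + |Q2|) * ‖4 - s ^ 2‖ := by
      have : ‖4 - s ^ 2‖⁻¹ * ‖4 - s ^ 2‖ = 1 := inv_mul_cancel₀ h3.ne'
      nlinarith
    rw [h2, norm_div, hc]
    have h5 : ‖(4 : ℂ)‖ = 4 := by simp
    rw [h5, le_div_iff₀ (by norm_num)]
    have h6 : 2 * (1 / (8 * (1 + |Q2|))) * 4 = 1 / (1 + |Q2|) := by field_simp; norm_num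
    rw [h6, div_le_iff₀ (by positivity)]; linarith
  obtain ⟨δ₀, hδ⟩ : ∃ d : ℝ, d = min 1 (c / 2) := ⟨_, rfl⟩
  have hδ0 : 0 < δ₀ := by rw [hδ]; positivity
  have hδ1 : δ₀ ≤ 1 := hδ ▸ min_le_left _ _
  have hδ2 : δ₀ ≤ c / 2 := hδ ▸ min_le_right _ _
  obtain ⟨n₀, hn₀⟩ := exists_nat_ge (Q0 / (c / 2) + 4 * Q0)
  obtain ⟨T, hT⟩ : ∃ T : ℝ, T = Q0 * (1 / c) * (1 + |Q1|) := ⟨_, rfl⟩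
  have hT0 : 0 ≤ T := by rw [hT]; positivity
  obtain ⟨d, hd'⟩ : ∃ d : ℝ, d = 1 / c := ⟨_, rfl⟩
  obtain ⟨Q, hQ⟩ : ∃ Q : ℝ, Q = T + d + (|Q1| + Q0 + 1) + (|Q3| + 2) + 4 := ⟨_, rfl⟩
  have h1c : 0 < d := by rw [hd']; positivity
  have hQ1' : 1 ≤ Q := by
    linarith
  refine ⟨3000 * Q ^ 13, ?_, δ₀, hδ0, hδ1, n₀, ?_⟩
  · have := one_le_pow₀ hQ1' (n := 13); linarith
  intro N hN s hs hU M hM0 hM hy hd hg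
  obtain ⟨k8, k6, k7, p1, p2⟩ := hb N s hs
  have hn := one_le_n N
  have hn0 : (0 : ℝ) < N + 1 := by linarith
  have hNn : Q0 / (c / 2) + 4 * Q0 ≤ N + 1 :=
    hn₀.trans ((Nat.cast_le.2 hN).trans (by linarith))
  have hq1 : Q0 / (N + 1) ≤ c / 2 := by
    rw [div_le_iff₀ hn0]
    have : Q0 / (c / 2) ≤ N + 1 := by linarith
    rw [div_le_iff₀ (by positivity)] at this
    linarith
  have hq2 : Q0 / (N + 1) ≤ 1 / 4 := by
    rw [div_le_iff₀ hn0]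
    have : 0 ≤ Q0 / (c / 2) := by positivity
    linarith
  have hMc : M ≤ c / 2 := hM.trans hδ2
  have hM1 : M ≤ 1 := hM.trans hδ1
  obtain ⟨ε, hε⟩ : ∃ ε, ε = ep N := ⟨_, rfl⟩
  rw [← hε] at k8 k6 k7 p1 p2 ⊢
  have e1 : bf N s = bt ε s + yf N s := by rw [yf, hε]; ring
  have e2 : pf N s = btd ε s / (N + 1) + df N s := by rw [df, hε]; ring
  have hct : c ≤ ‖1 - bt ε s‖ := by
    have e : 1 - bt ε s = (1 - s ^ 2 / 4) - (bt ε s - s ^ 2 / 4) := by ring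
    rw [e]
    have := norm_sub_norm_le (1 - s ^ 2 / 4) (bt ε s - s ^ 2 / 4)
    linarith [hc2 s hs]
  have hcb : c ≤ ‖1 - bf N s‖ := by
    have e : 1 - bf N s = (1 - s ^ 2 / 4) - ((bt ε s - s ^ 2 / 4) + yf N s) := by rw [e1]; ring
    rw [e]
    have h1 := norm_sub_norm_le (1 - s ^ 2 / 4) ((bt ε s - s ^ 2 / 4) + yf N s)
    have h2 := norm_add_le (bt ε s - s ^ 2 / 4) (yf N s)
    linarith [hc2 s hs]
  have hct0 : 1 - bt ε s ≠ 0 := norm_pos_iff.1 (hc0.trans_le hct)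
  have hcb0 : 1 - bf N s ≠ 0 := norm_pos_iff.1 (hc0.trans_le hcb)
  have hs0 := hK.ne0 s hs
  have hs2 := hK.ne2 s hs
  have hnc := n_ne N
  have hεn : ε * ((N : ℂ) + 1) ^ 2 = 1 := by rw [hε, ep]; field_simp
  have hω : ‖1 + (gf N s - 1 / 2) + wt ε s‖ ≥ 1 / 2 := by
    have h1 := norm_sub_norm_le (1 : ℂ) (-((gf N s - 1 / 2) + wt ε s))
    have h2 := norm_add_le (gf N s - 1 / 2) (wt ε s)
    rw [norm_neg, norm_one, sub_neg_eq_add, ← add_assoc] at h1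
    linarith
  have hQb : 1 / c ≤ Q := by
    rw [← hd']
    linarith
  have hQa : Q0 ≤ Q := by
    linarith
  have hQc : Q0 * (1 / c) * (1 + |Q1|) ≤ Q := by rw [← hT]; linarith
  have hεnorm : ‖ε‖ ^ 3 = 1 / ((N : ℝ) + 1) ^ 6 := by
    rw [hε, norm_ep, div_pow, ← pow_mul, one_pow]
  have hρ1 : 1 / ((N : ℝ) + 1) ^ 6 ≤ 1 := by
    rw [div_le_one (by positivity)]; exact one_le_pow₀ hn
  obtain ⟨c1, c2⟩ := pointwise (n := (N : ℝ) + 1) (Q := Q) (M := M) (ρ := 1 / ((N : ℝ) + 1) ^ 6)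
    (s := s) (b := bf N s) (bt := bt ε s) (y := yf N s) (p := pf N s)
    (pt := btd ε s / (N + 1)) (Δ := df N s) (ω := gf N s - 1 / 2) (wt := wt ε s)
    (D := gf N s - 1 / 2 - wt ε s) (ρ₁ := ε ^ 3 * P1 ε s / (2 * (1 - bt ε s)))
    (ρ₂ := ε ^ 3 * P2 ε s / (4 * s ^ 2 * (1 - bt ε s)))
    hs0 hcb0 hct0 e1 e2 (by ring)
    (by rw [pf_sq hU hs0]; ring)
    (by
      rw [mul_div_cancel₀ _ (mul_ne_zero (mul_ne_zero (by norm_num) (pow_ne_zero 2 hs0)) hct0),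
        ← res2 ε hs2, div_pow]
      have : ε = 1 / ((N : ℂ) + 1) ^ 2 := hε
      rw [this]; ring)
    hn hQ1' hM0 hM1 (by positivity) hρ1 hy hd
    ((hQ1 s hs).trans ((le_abs_self Q1).trans (by
      linarith)))
    (by
      have e : 1 - bf N s = (1 - s ^ 2 / 4) - ((bt ε s - s ^ 2 / 4) + yf N s) := by rw [e1]; ring
      rw [e]
      have h1 := norm_sub_le (1 - s ^ 2 / 4) ((bt ε s - s ^ 2 / 4) + yf N s)
      have h2 := norm_add_le (bt ε s - s ^ 2 / 4) (yf N s)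
      have h3 := (hQ3 s hs).trans (le_abs_self Q3)
      linarith)
    ((inv_norm_le hc0 hcb).trans hQb) ((inv_norm_le hc0 hct).trans hQb)
    (by rw [norm_div, norm_n]; gcongr; linarith)
    (k7.trans (by gcongr)) (k8.trans (by gcongr))
    (by
      have e : ε ^ 3 * P1 ε s / (2 * (1 - bt ε s)) = P1 ε s * (1 - bt ε s)⁻¹ / 2 * ε ^ 3 := by
        field_simp
      rw [e, norm_mul, norm_pow, hεnorm]
      gcongr
      rw [norm_div, norm_mul]
      have h2 : ‖(2 : ℂ)‖ = 2 := by simp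
      rw [h2]
      have h3 : ‖P1 ε s‖ * ‖(1 - bt ε s)⁻¹‖ ≤ Q0 * (1 / c) := by
        have := inv_norm_le hc0 hct
        gcongr
      have h4 : Q0 * (1 / c) ≤ Q0 * (1 / c) * (1 + |Q1|) :=
        le_mul_of_one_le_right (by positivity) (by linarith)
      have h5 : 0 ≤ Q0 * (1 / c) := by positivity
      linarith)
    (by
      have e : ε ^ 3 * P2 ε s / (4 * s ^ 2 * (1 - bt ε s))
          = P2 ε s * (1 - bt ε s)⁻¹ * (s ^ 2)⁻¹ / 4 * ε ^ 3 := by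
        field_simp
      rw [e, norm_mul, norm_pow, hεnorm]
      gcongr
      rw [norm_div, norm_mul, norm_mul]
      have h2 : ‖(4 : ℂ)‖ = 4 := by simp
      rw [h2]
      have h3 : ‖P2 ε s‖ * ‖(1 - bt ε s)⁻¹‖ * ‖(s ^ 2)⁻¹‖ ≤ Q0 * (1 / c) * (1 + |Q1|) := by
        have := inv_norm_le hc0 hct
        have h6 := (hQ1 s hs).trans (le_abs_self Q1)
        gcongr
        linarith
      have h5 : 0 ≤ Q0 * (1 / c) * (1 + |Q1|) := by positivity
      linarith)
    ((inv_norm_le (by norm_num) hω).trans (by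
      linarith))
    (norm_pos_iff.1 (lt_of_lt_of_le (by norm_num) hω))
  refine ⟨c1.trans ?_, ?_⟩
  · gcongr
    · norm_num
    · norm_num
  refine ⟨((N : ℂ) + 1) * ((4 * (gf N s - 1 / 2) * (1 - bf N s) - pf N s ^ 2 / (2 * (1 - bf N s)))
    - (4 * wt ε s * (1 - bt ε s) - (btd ε s / (N + 1)) ^ 2 / (2 * (1 - bt ε s))
      + ε ^ 3 * P1 ε s / (2 * (1 - bt ε s))) - (4 - s ^ 2) / s ^ 2 * yf N s), ?_, ?_⟩
  rotate_left
  · rw [norm_mul, norm_n]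
    refine (mul_le_mul_of_nonneg_left c2 hn0.le).trans_eq ?_
    field_simp
  · have hdf : df N = fun s => pf N s - btd ε s / (N + 1) := by rw [hε]; rfl
    rw [hdf]
    refine ((hasDerivAt_pf hU hs0).sub ((hasDerivAt_btd ε hs2).div_const _)).congr_deriv ?_
    have a1 : pf N s ^ 2 / (2 * (1 - bf N s)) = 2 * (s ^ 2 * gf N s ^ 2 - bf N s) := by
      rw [pf_sq hU hs0]; field_simp; ring
    have a2 : 4 * wt ε s * (1 - bt ε s)
        - (btd ε s / (N + 1)) ^ 2 / (2 * (1 - bt ε s)) + ε ^ 3 * P1 ε s / (2 * (1 - bt ε s))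
        = ε * btdd ε s := by
      rw [← res1 ε hs2]
      have : ε = 1 / ((N : ℂ) + 1) ^ 2 := hε
      field_simp
      rw [this]
      field_simp
      ring
    rw [a1, a2]
    have a3 : btdd ε s / ((N : ℂ) + 1) = (N + 1) * (ε * btdd ε s) := by
      have : ε = 1 / ((N : ℂ) + 1) ^ 2 := hε
      rw [this]; field_simp
    rw [a3]; ring

/-! ### Sharp asymptotics on the real axis -/

/-- Grönwall's inequality from below. -/
lemma gron_lower {f f' : ℝ → ℝ} {a b k : ℝ} (hab : a ≤ b)
    (hd : ∀ x ∈ Set.Icc a b, HasDerivAt f (f' x) x) (h : ∀ x ∈ Set.Icc a b, k * f x ≤ f' x) :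
    f a * Real.exp (k * (b - a)) ≤ f b := by
  have hd2 : ∀ x ∈ Set.Icc a b, HasDerivAt (fun x => f x * Real.exp (-k * (x - a)))
      (f' x * Real.exp (-k * (x - a)) + f x * (Real.exp (-k * (x - a)) * (-k * 1))) x :=
    fun x hx => (hd x hx).mul ((((hasDerivAt_id x).sub_const a).const_mul (-k)).exp)
  have hm : MonotoneOn (fun x => f x * Real.exp (-k * (x - a))) (Set.Icc a b) := by
    refine monotoneOn_of_hasDerivWithinAt_nonneg (convex_Icc _ _)
      (fun x hx => (hd2 x hx).continuousAt.continuousWithinAt)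
      (fun x hx => (hd2 x (interior_subset hx)).hasDerivWithinAt) (fun x hx => ?_)
    have := h x (interior_subset hx)
    have h2 : f' x * Real.exp (-k * (x - a)) + f x * (Real.exp (-k * (x - a)) * (-k * 1))
      = (f' x - k * f x) * Real.exp (-k * (x - a)) := by ring
    rw [h2]
    exact mul_nonneg (by linarith) (Real.exp_pos _).le
  have h1 := hm ⟨le_rfl, hab⟩ ⟨hab, le_rfl⟩ hab
  simp only [sub_self, mul_zero, Real.exp_zero, mul_one] at h1
  calc _ ≤ f b * Real.exp (-k * (b - a)) * Real.exp (k * (b - a)) := by gcongr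
    _ = f b := by rw [mul_assoc, ← Real.exp_add]; simp

/-- Grönwall's inequality from above. -/
lemma gron_upper {f f' : ℝ → ℝ} {a b k : ℝ} (hab : a ≤ b)
    (hd : ∀ x ∈ Set.Icc a b, HasDerivAt f (f' x) x) (h : ∀ x ∈ Set.Icc a b, f' x ≤ k * f x) :
    f b ≤ f a * Real.exp (k * (b - a)) := by
  have := gron_lower (f := fun x => -f x) (f' := fun x => -f' x) (k := k) hab
    (fun x hx => (hd x hx).neg) (fun x hx => by linarith [h x hx])
  linarith

lemma exp_neg_le_pow {κ n : ℝ} (hκ : 0 < κ) (hn : 0 < n) :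
    Real.exp (-(κ * n)) ≤ (Nat.factorial 12 : ℝ) / κ ^ 12 * (1 / n ^ 12) := by
  have h := Real.pow_div_factorial_le_exp (x := κ * n) (by positivity) 12
  rw [Real.exp_neg]
  have : (Nat.factorial 12 : ℝ) / κ ^ 12 * (1 / n ^ 12)
      = ((κ * n) ^ 12 / (Nat.factorial 12 : ℝ))⁻¹ := by
    rw [inv_div]; field_simp
  rw [this]
  exact inv_anti₀ (by positivity) h

set_option maxHeartbeats 1600000 in
/-- A small solution of a hyperbolic linear system with small forcing, on a long (in the fast
time) interval, is as small as the forcing: the product `W = Y D` satisfies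
`W' ≥ k n (Y² + D²) - (forcing)²`, so it would otherwise grow exponentially. -/
lemma hyper {d c Q Λ : ℝ} (hd : 0 < d) (hc : 0 < c) (hQ : 0 < Q) (hΛ : 0 < Λ) :
    ∃ C : ℝ, 0 < C ∧ ∀ n A B δ : ℝ, 1 ≤ n → 1 / n ≤ d → Q ≤ n * (c / 4) → 0 < δ → δ ≤ 1 →
      Q * δ ≤ c / 4 → ∀ Y D R L : ℝ → ℝ,
      (∀ s ∈ Set.Icc A B, HasDerivAt Y (n * D s) s ∧ HasDerivAt D (n * (L s * Y s) + R s) s ∧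
        c ≤ 1 ∧ c ≤ L s ∧ L s ≤ Λ ∧ Y s ^ 2 + D s ^ 2 ≤ δ ^ 2 ∧
        |R s| ≤ Q * (√(Y s ^ 2 + D s ^ 2) + n * √(Y s ^ 2 + D s ^ 2) ^ 2 + n * (1 / n ^ 6))) →
      ∀ x, A + 2 * d ≤ x → x + d ≤ B → Y x ^ 2 + D x ^ 2 ≤ C * (1 / n ^ 6) ^ 2 := by
  obtain ⟨C1, hC1⟩ : ∃ C1, C1 = Q ^ 2 / c := ⟨_, rfl⟩
  obtain ⟨C2, hC2⟩ : ∃ C2, C2 = 2 * C1 / c + (Nat.factorial 12 : ℝ) / (c / 2 * d) ^ 12 := ⟨_, rfl⟩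
  obtain ⟨C3, hC3⟩ : ∃ C3, C3 = 4 / c * (C1 + 2 * C2) := ⟨_, rfl⟩
  have hC10 : 0 < C1 := by rw [hC1]; positivity
  have hC20 : 0 < C2 := by rw [hC2]; positivity
  have hC30 : 0 < C3 := by rw [hC3]; positivity
  refine ⟨Real.exp (1 + Λ + c + Q) * (C3 + 1), by positivity, ?_⟩
  intro n A B δ hn hnd hQn hδ hδ1 hQδ Y D R L H x hx hxB
  have hn0 : 0 < n := by linarith
  obtain ⟨ρ, hρ⟩ : ∃ ρ, ρ = 1 / n ^ 6 := ⟨_, rfl⟩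
  have hρ0 : 0 < ρ := by rw [hρ]; positivity
  rw [← hρ]
  simp only [← hρ] at H
  have hM : ∀ s ∈ Set.Icc A B, ∃ M : ℝ, 0 ≤ M ∧ M ^ 2 = Y s ^ 2 + D s ^ 2 ∧ M ≤ δ ∧
      |R s| * M ≤ n * (c / 2) * M ^ 2 + n * Q * ρ * M := by
    intro s hs
    obtain ⟨-, -, -, -, -, h5, h6⟩ := H s hs
    obtain ⟨M, hMd⟩ : ∃ M, M = √(Y s ^ 2 + D s ^ 2) := ⟨_, rfl⟩
    have hM0 : 0 ≤ M := hMd ▸ Real.sqrt_nonneg _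
    have hM2 : M ^ 2 = Y s ^ 2 + D s ^ 2 := by rw [hMd]; exact Real.sq_sqrt (by positivity)
    have hMδ : M ≤ δ := by
      rw [← hM2] at h5
      exact (sq_le_sq₀ hM0 hδ.le).1 h5
    refine ⟨M, hM0, hM2, hMδ, ?_⟩
    rw [← hMd] at h6
    calc |R s| * M ≤ Q * (M + n * M ^ 2 + n * ρ) * M := by gcongr
      _ = Q * M ^ 2 + n * (Q * M) * M ^ 2 + n * Q * ρ * M := by ring
      _ ≤ n * (c / 4) * M ^ 2 + n * (c / 4) * M ^ 2 + n * Q * ρ * M := by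
        have : Q * M ≤ c / 4 := le_trans (by gcongr) hQδ
        gcongr
      _ = _ := by ring
  have hYM : ∀ {a b M : ℝ}, 0 ≤ M → M ^ 2 = a ^ 2 + b ^ 2 → |a| ≤ M ∧ |b| ≤ M := by
    intro a b M hM0 h
    constructor <;> refine abs_le_of_sq_le_sq ?_ hM0 <;> nlinarith [sq_nonneg a, sq_nonneg b]
  obtain ⟨W', hW'⟩ : ∃ W' : ℝ → ℝ, W' = fun s => n * D s * D s + Y s * (n * (L s * Y s) + R s) :=
    ⟨_, rfl⟩
  have hWd : ∀ s ∈ Set.Icc A B, HasDerivAt (fun s => Y s * D s) (W' s) s := fun s hs => by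
    rw [hW']; exact (H s hs).1.mul (H s hs).2.1
  have hWlow : ∀ s ∈ Set.Icc A B, n * (c / 4) * (Y s ^ 2 + D s ^ 2) - n * C1 * ρ ^ 2 ≤ W' s := by
    intro s hs
    obtain ⟨M, hM0, hM2, hMδ, hRM⟩ := hM s hs
    obtain ⟨-, -, h3, h4, -, -, -⟩ := H s hs
    have e1 : |Y s * R s| ≤ n * (c / 2) * M ^ 2 + n * Q * ρ * M := by
      rw [abs_mul, mul_comm]
      exact le_trans (by gcongr; exact (hYM hM0 hM2).1) hRM
    have e2 : Q * ρ * M ≤ c / 4 * M ^ 2 + C1 * ρ ^ 2 := by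
      have : c / 4 * M ^ 2 + C1 * ρ ^ 2 - Q * ρ * M = (c / 2 * M - Q * ρ) ^ 2 / c := by
        rw [hC1]; field_simp; ring
      have : 0 ≤ (c / 2 * M - Q * ρ) ^ 2 / c := by positivity
      linarith
    have e3 : n * c * M ^ 2 ≤ n * D s ^ 2 + n * L s * Y s ^ 2 := by
      rw [hM2]
      have a1 : c * D s ^ 2 ≤ 1 * D s ^ 2 := by gcongr
      have a2 : c * Y s ^ 2 ≤ L s * Y s ^ 2 := by gcongr
      have : c * (Y s ^ 2 + D s ^ 2) ≤ D s ^ 2 + L s * Y s ^ 2 := by linarith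
      calc n * c * (Y s ^ 2 + D s ^ 2) = n * (c * (Y s ^ 2 + D s ^ 2)) := by ring
        _ ≤ n * (D s ^ 2 + L s * Y s ^ 2) := by gcongr
        _ = _ := by ring
    have e4 := neg_abs_le (Y s * R s)
    have e5 : n * (Q * ρ * M) ≤ n * (c / 4 * M ^ 2 + C1 * ρ ^ 2) := by gcongr
    rw [hW', ← hM2]
    simp only
    linarith
  have hWabs : ∀ s, |Y s * D s| ≤ (Y s ^ 2 + D s ^ 2) / 2 := fun s => by
    rw [abs_le]; constructor <;> nlinarith [sq_nonneg (Y s + D s), sq_nonneg (Y s - D s)]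
  have hk : 0 < n * (c / 2) := by positivity
  have hWk : ∀ s ∈ Set.Icc A B, n * (c / 2) * |Y s * D s| - n * C1 * ρ ^ 2 ≤ W' s := fun s hs => by
    refine le_trans ?_ (hWlow s hs)
    have : n * (c / 2) * |Y s * D s| ≤ n * (c / 2) * ((Y s ^ 2 + D s ^ 2) / 2) := by
      gcongr; exact hWabs s
    linarith
  have hexp : Real.exp (-(n * (c / 2) * d)) ≤ (Nat.factorial 12 : ℝ) / (c / 2 * d) ^ 12 * ρ ^ 2 := by
    have := exp_neg_le_pow (κ := c / 2 * d) (n := n) (by positivity) hn0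
    have e : ρ ^ 2 = 1 / n ^ 12 := by rw [hρ]; field_simp
    rw [e]
    convert this using 3; ring
  have hW1 : ∀ s ∈ Set.Icc A B, |Y s * D s| ≤ 1 := fun s hs => by
    have h5 := (H s hs).2.2.2.2.2.1
    have : δ ^ 2 ≤ 1 := by nlinarith
    have := hWabs s
    have := sq_nonneg (Y s)
    linarith [sq_nonneg (D s)]
  have hW : ∀ y, A + d ≤ y → y + d ≤ B → |Y y * D y| ≤ C2 * ρ ^ 2 := by
    intro y hy hyB
    have hcc : n * (c / 2) * (2 * C1 / c * ρ ^ 2) = n * C1 * ρ ^ 2 := by field_simp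
    rw [abs_le]
    constructor
    · have h1 := gron_upper (f := fun s => -(Y s * D s) - 2 * C1 / c * ρ ^ 2)
        (f' := fun s => -W' s) (k := -(n * (c / 2))) (a := A) (b := y) (by linarith)
        (fun s hs => ((hWd s ⟨hs.1, by linarith [hs.2]⟩).neg.sub_const _))
        (fun s hs => by
          have := hWk s ⟨hs.1, by linarith [hs.2]⟩
          have h2 : n * (c / 2) * (-(Y s * D s)) ≤ n * (c / 2) * |Y s * D s| := by
            gcongr; exact neg_le_abs _
          linarith)
      have h3 : (-(Y A * D A) - 2 * C1 / c * ρ ^ 2) * Real.exp (-(n * (c / 2)) * (y - A))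
          ≤ 1 * Real.exp (-(n * (c / 2) * d)) := by
        have b1 : -(Y A * D A) - 2 * C1 / c * ρ ^ 2 ≤ 1 := by
          have := hW1 A ⟨le_rfl, by linarith⟩
          have := neg_le_abs (Y A * D A)
          have : 0 ≤ 2 * C1 / c * ρ ^ 2 := by positivity
          linarith
        have b2 : Real.exp (-(n * (c / 2)) * (y - A)) ≤ Real.exp (-(n * (c / 2) * d)) := by
          rw [Real.exp_le_exp]
          have : n * (c / 2) * d ≤ n * (c / 2) * (y - A) := by gcongr; linarith
          linarith
        exact mul_le_mul b1 b2 (Real.exp_pos _).le zero_le_one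
      rw [hC2]
      linarith
    · have h1 := gron_lower (f := fun s => Y s * D s - 2 * C1 / c * ρ ^ 2)
        (f' := fun s => W' s) (k := n * (c / 2)) (a := y) (b := B) (by linarith)
        (fun s hs => ((hWd s ⟨by linarith [hs.1], hs.2⟩).sub_const _))
        (fun s hs => by
          have := hWk s ⟨by linarith [hs.1], hs.2⟩
          have h2 : n * (c / 2) * (Y s * D s) ≤ n * (c / 2) * |Y s * D s| := by
            gcongr; exact le_abs_self _
          linarith)
      have b1 : Y B * D B - 2 * C1 / c * ρ ^ 2 ≤ 1 := by
        have := hW1 B ⟨by linarith, le_rfl⟩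
        have := le_abs_self (Y B * D B)
        have : 0 ≤ 2 * C1 / c * ρ ^ 2 := by positivity
        linarith
      have b2 : Real.exp (-(n * (c / 2) * (B - y))) ≤ Real.exp (-(n * (c / 2) * d)) := by
        rw [Real.exp_le_exp]
        have : n * (c / 2) * d ≤ n * (c / 2) * (B - y) := by gcongr; linarith
        linarith
      have b3 : Y y * D y - 2 * C1 / c * ρ ^ 2 ≤ Real.exp (-(n * (c / 2) * (B - y))) := by
        rw [Real.exp_neg, ← one_div, le_div_iff₀ (Real.exp_pos _)]
        exact h1.trans b1
      rw [hC2]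
      linarith
  -- By the mean value theorem there is a point within `1 / n` of `x` where the energy is small.
  have hlt : x - 1 / n < x := by have : 0 < 1 / n := by positivity
                                 linarith
  have hsubI : Set.Icc (x - 1 / n) x ⊆ Set.Icc A B := Set.Icc_subset_Icc (by linarith) (by linarith)
  obtain ⟨ξ, hξ, he⟩ := exists_hasDerivAt_eq_slope _ _ hlt
    (fun s hs => (hWd s (hsubI hs)).continuousAt.continuousWithinAt)
    (fun s hs => hWd s (hsubI (Set.Ioo_subset_Icc_self hs)))
  have hξ' := hsubI (Set.Ioo_subset_Icc_self hξ)
  have hE : Y ξ ^ 2 + D ξ ^ 2 ≤ C3 * ρ ^ 2 := by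
    have e1 := hWlow ξ hξ'
    have e2 : W' ξ = n * (Y x * D x - Y (x - 1 / n) * D (x - 1 / n)) := by
      rw [he, sub_sub_cancel]; field_simp
    have e3 := (abs_le.1 (hW x (by linarith) (by linarith))).2
    have e4 := (abs_le.1 (hW (x - 1 / n) (by linarith) (by linarith))).1
    have e5 : W' ξ ≤ n * (2 * C2 * ρ ^ 2) := by rw [e2]; gcongr; linarith
    have e6 : n * (c / 4 * (Y ξ ^ 2 + D ξ ^ 2)) ≤ n * (C1 * ρ ^ 2 + 2 * C2 * ρ ^ 2) := by linarith
    have e7 := le_of_mul_le_mul_left e6 hn0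
    rw [hC3, show 4 / c * (C1 + 2 * C2) * ρ ^ 2 = (C1 * ρ ^ 2 + 2 * C2 * ρ ^ 2) / (c / 4) by
      field_simp, le_div_iff₀ (by positivity)]
    linarith
  have hfin := gron_upper (f := fun s => Y s ^ 2 + D s ^ 2 + ρ ^ 2)
    (f' := fun s => 2 * Y s * (n * D s) + 2 * D s * (n * (L s * Y s) + R s))
    (k := n * (1 + Λ + c + Q)) (a := ξ) (b := x) hξ.2.le
    (fun s hs => by
      have hs' : s ∈ Set.Icc A B := hsubI ⟨hξ.1.le.trans hs.1, hs.2⟩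
      refine ((((H s hs').1.pow 2).add ((H s hs').2.1.pow 2)).add_const _).congr_deriv ?_
      simp)
    (fun s hs => by
      have hs' : s ∈ Set.Icc A B := hsubI ⟨hξ.1.le.trans hs.1, hs.2⟩
      obtain ⟨M, hM0, hM2, hMδ, hRM⟩ := hM s hs'
      obtain ⟨-, -, -, h4, h5, -, -⟩ := H s hs'
      obtain ⟨y1, y2⟩ := hYM hM0 hM2
      have e1 : D s * R s ≤ n * (c / 2) * M ^ 2 + n * Q * ρ * M := by
        refine (le_abs_self _).trans ?_
        rw [abs_mul, mul_comm]
        exact le_trans (by gcongr) hRM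
      have e2 : 2 * (Y s * D s) * (1 + L s) ≤ M ^ 2 * (1 + Λ) := by
        have a1 := (le_abs_self _).trans (hWabs s)
        have a2 : 0 ≤ 1 + L s := by linarith
        calc _ ≤ M ^ 2 * (1 + L s) := by gcongr; rw [hM2]; linarith
          _ ≤ _ := by gcongr
      have e3 : 2 * (ρ * M) ≤ ρ ^ 2 + M ^ 2 := by nlinarith [sq_nonneg (ρ - M)]
      have e4 : n * Q * (2 * (ρ * M)) ≤ n * Q * (ρ ^ 2 + M ^ 2) := by gcongr
      have e5 : n * (2 * (Y s * D s) * (1 + L s)) ≤ n * (M ^ 2 * (1 + Λ)) := by gcongr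
      rw [← hM2]
      have e6 : 0 ≤ n * (1 + Λ + c) * ρ ^ 2 := by positivity
      linarith)
  have hlen : n * (1 + Λ + c + Q) * (x - ξ) ≤ 1 + Λ + c + Q := by
    have : x - ξ ≤ 1 / n := by linarith [hξ.1]
    calc _ ≤ n * (1 + Λ + c + Q) * (1 / n) := by gcongr
      _ = _ := by field_simp
  have : Y x ^ 2 + D x ^ 2 + ρ ^ 2 ≤ (C3 * ρ ^ 2 + ρ ^ 2) * Real.exp (1 + Λ + c + Q) := by
    refine hfin.trans ?_
    gcongr
  have h0 := sq_nonneg ρ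
  calc _ ≤ (C3 * ρ ^ 2 + ρ ^ 2) * Real.exp (1 + Λ + c + Q) := by linarith
    _ = _ := by ring

lemma yf_real (N : ℕ) (s : ℝ) : ((yf N s).re : ℂ) = yf N s := by
  rw [← conj_eq_iff_re, yf, map_sub, conj_eq_iff_re.2 (bf_real N s)]
  congr 1
  simp [bt, b1, b2, ep, map_ofNat (starRingEnd ℂ)]

lemma df_real (N : ℕ) (s : ℝ) : ((df N s).re : ℂ) = df N s := by
  rw [← conj_eq_iff_re, df, map_sub, conj_eq_iff_re.2 (pf_real N s)]
  congr 1
  simp [btd, b1d, b2d, ep, map_ofNat (starRingEnd ℂ)]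

lemma norm_eq_abs_re {z : ℂ} (h : (z.re : ℂ) = z) : ‖z‖ = |z.re| := by
  rw [← h, norm_real, Real.norm_eq_abs, ofReal_re]

lemma adm_real {a b : ℝ} (ha : 0 < a) (hb : b < 2) : Adm (((↑) : ℝ → ℂ) '' Set.Icc a b) where
  cpt := isCompact_Icc.image continuous_ofReal
  ne0 := by
    rintro _ ⟨x, hx, rfl⟩
    exact_mod_cast (ha.trans_le hx.1).ne'
  ne2 := by
    rintro _ ⟨x, hx, rfl⟩
    have : 0 < 4 - x ^ 2 := by nlinarith [hx.1, hx.2]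
    exact_mod_cast this.ne'

lemma re_mul_real {a b : ℂ} (n L : ℝ) (x : ℂ) (ha : a = n) (hb : b = L) :
    (a * (b * x)).re = n * (L * x.re) := by
  subst ha hb
  rw [re_ofReal_mul, re_ofReal_mul]

set_option maxHeartbeats 1600000 in
/-- Sharp estimate on the real segment: `crude` supplies the smallness required by `hyper`. -/
theorem real_sharp {s1 : ℝ} (h0 : 0 < s1) (h2 : s1 < 2) :
    ∃ C : ℝ, 0 < C ∧ ∃ n₀ : ℕ, ∀ N ≥ n₀,
      ‖yf N s1‖ ^ 2 + ‖df N s1‖ ^ 2 ≤ C * (1 / ((N : ℝ) + 1) ^ 6) ^ 2 ∧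
      ‖gf N s1 - 1 / 2‖ ≤ 1 / 8 := by
  obtain ⟨r, hr, hr1, hr2⟩ : ∃ r : ℝ, 0 < r ∧ 10 * r ≤ s1 ∧ 10 * r ≤ 2 - s1 :=
    ⟨min s1 (2 - s1) / 10, by have := lt_min h0 (sub_pos.2 h2); positivity,
      by linarith [min_le_left s1 (2 - s1)], by linarith [min_le_right s1 (2 - s1)]⟩
  have ha : 0 < s1 - 6 * r := by linarith
  have hb : s1 + 6 * r < 2 := by linarith
  have hK := adm_real ha hb
  obtain ⟨Qa, hQa, happ⟩ := approx_bounds hK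
  obtain ⟨Q, hQ, δ₀, hδ₀, hδ₀1, n₁, hest⟩ := est hK
  obtain ⟨c, hcdef⟩ : ∃ c, c = min 1 ((4 - (s1 + 6 * r) ^ 2) / 4) := ⟨_, rfl⟩
  have hc : 0 < c := by
    rw [hcdef]; apply lt_min one_pos; nlinarith
  have hc1 : c ≤ 1 := hcdef ▸ min_le_left _ _
  have hc2 : c ≤ (4 - (s1 + 6 * r) ^ 2) / 4 := hcdef ▸ min_le_right _ _
  obtain ⟨δ, hδdef⟩ : ∃ δ, δ = min δ₀ (c / (4 * Q)) := ⟨_, rfl⟩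
  have hδ : 0 < δ := by rw [hδdef]; apply lt_min hδ₀; positivity
  have hδ1 : δ ≤ δ₀ := hδdef ▸ min_le_left _ _
  have hδ2 : Q * δ ≤ c / 4 := by
    have : δ ≤ c / (4 * Q) := hδdef ▸ min_le_right _ _
    rw [le_div_iff₀ (by positivity)] at this
    linarith
  obtain ⟨η, hη, hη1, hη2⟩ : ∃ η : ℝ, 0 < η ∧ 32 * η ≤ δ ∧ η ≤ 1 / 8 :=
    ⟨min (δ / 32) (1 / 8), by apply lt_min <;> positivity,
      by linarith [min_le_left (δ / 32) (1 / 8)], min_le_right _ _⟩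
  obtain ⟨K, hcr⟩ := crude (A := s1 - 8 * r) (B := s1 + 8 * r) (by linarith) (by linarith) hr hη
  obtain ⟨C, hC, hhyp⟩ := hyper (Λ := 4 / (s1 - 6 * r) ^ 2) hr hc (by linarith : 0 < Q)
    (by positivity)
  obtain ⟨m, hm⟩ := exists_nat_ge (max K (max (1 / r) (max (4 * Q / c) (8 * Qa / δ))))
  refine ⟨C, hC, max m n₁, fun N hN => ?_⟩
  have hNm : (m : ℝ) ≤ N := by exact_mod_cast (le_max_left _ _).trans hN
  have hN1 : n₁ ≤ N := (le_max_right _ _).trans hN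
  obtain ⟨n, hn⟩ : ∃ n : ℝ, n = (N : ℝ) + 1 := ⟨_, rfl⟩
  have hnm : (m : ℝ) ≤ n := by linarith
  have hmn := hm.trans hnm
  simp only [max_le_iff] at hmn
  obtain ⟨k1, k2, k3, k4⟩ := hmn
  have hn1 : 1 ≤ n := hn ▸ one_le_n N
  have hnC : (n : ℂ) = (N : ℂ) + 1 := by rw [hn]; push_cast; rfl
  have hU : ∀ s : ℝ, ((N : ℂ) + 1) * s ∈ UU N := fun s => by rw [scale_real]; exact real_mem_UU N _
  have k4' : Qa / n ≤ δ / 8 := by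
    rw [div_le_iff₀ (by positivity)] at k4 ⊢; linarith
  have hsys := rsys N (A := s1 - 8 * r) (B := s1 + 8 * r) (by linarith)
  rw [← hn] at hsys
  have hcrN := hcr n k1 _ _ _ hsys
  have small : ∀ s : ℝ, s1 - 6 * r ≤ s → s ≤ s1 + 6 * r →
      ‖yf N s‖ ≤ δ / 2 ∧ ‖df N s‖ ≤ δ / 2 ∧ ‖gf N s - 1 / 2‖ ≤ 1 / 8 := by
    intro s hs hs'
    obtain ⟨e1, e2, e3⟩ := hcrN s (by linarith) (by linarith)
    obtain ⟨f1, f2, -⟩ := happ N s ⟨s, ⟨hs, hs'⟩, rfl⟩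
    rw [← hn] at f1
    have hspos : 0 < s := by linarith
    refine ⟨?_, ?_, ?_⟩
    · have e : yf N s = s ^ 2 * (((bf N s).re / s ^ 2 - 1 / 4 : ℝ) : ℂ) - (bt (ep N) s - s ^ 2 / 4) := by
        have : (s : ℂ) ≠ 0 := by exact_mod_cast hspos.ne'
        push_cast
        rw [bf_real, yf]
        field_simp
        ring
      rw [e]
      refine (norm_sub_le _ _).trans ?_
      rw [norm_mul, norm_pow, norm_real, norm_real, Real.norm_eq_abs, Real.norm_eq_abs, sq_abs]
      have : s ^ 2 * |(bf N s).re / s ^ 2 - 1 / 4| ≤ 4 * η := by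
        have : s ^ 2 ≤ 4 := by nlinarith
        gcongr
      linarith
    · rw [df]
      refine (norm_sub_le _ _).trans ?_
      rw [norm_eq_abs_re (pf_real N s), norm_div, norm_n, ← hn]
      have : ‖btd (ep N) s‖ / n ≤ Qa / n := by gcongr
      linarith
    · have : gf N s - 1 / 2 = (((gf N s).re - 1 / 2 : ℝ) : ℂ) := by
        push_cast; rw [gf_real]
      rw [this, norm_real, Real.norm_eq_abs]; linarith
  have hsq : ∀ s : ℝ, ‖yf N s‖ ^ 2 + ‖df N s‖ ^ 2 = (yf N s).re ^ 2 + (df N s).re ^ 2 := fun s => by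
    rw [norm_eq_abs_re (yf_real N s), norm_eq_abs_re (df_real N s), sq_abs, sq_abs]
  refine ⟨?_, (small s1 (by linarith) (by linarith)).2.2⟩
  rw [hsq, ← hn]
  refine hhyp n (s1 - 4 * r) (s1 + 4 * r) δ hn1 ?_ ?_ hδ (hδ1.trans hδ₀1) hδ2
    (fun s => (yf N s).re) (fun s => (df N s).re)
    (fun s => (deriv (df N) s).re - n * ((4 - s ^ 2) / s ^ 2 * (yf N s).re))
    (fun s => (4 - s ^ 2) / s ^ 2) ?_ s1 (by linarith) (by linarith)
  · rw [div_le_iff₀ (by linarith)]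
    rw [div_le_iff₀ hr] at k2; linarith
  · rw [div_le_iff₀ hc] at k3; linarith
  intro s hs
  have hs1 : s1 - 6 * r ≤ s := by linarith [hs.1]
  have hs2 : s ≤ s1 + 6 * r := by linarith [hs.2]
  have hspos : 0 < s := by linarith
  have hsK : (s : ℂ) ∈ ((↑) : ℝ → ℂ) '' Set.Icc (s1 - 6 * r) (s1 + 6 * r) := ⟨s, ⟨hs1, hs2⟩, rfl⟩
  obtain ⟨g1, g2, g3⟩ := small s hs1 hs2
  have hle : (yf N s).re ^ 2 + (df N s).re ^ 2 ≤ δ ^ 2 := by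
    rw [← hsq]
    have q1 := pow_le_pow_left₀ (norm_nonneg _) g1 2
    have q2 := pow_le_pow_left₀ (norm_nonneg _) g2 2
    linarith [sq_nonneg δ]
  have hMδ : √((yf N s).re ^ 2 + (df N s).re ^ 2) ≤ δ := Real.sqrt_le_iff.2 ⟨hδ.le, hle⟩
  obtain ⟨-, R, hR, hRb⟩ := hest N hN1 s hsK (hU s) _ (Real.sqrt_nonneg _) (hMδ.trans hδ1)
    (by rw [norm_eq_abs_re (yf_real N s)]; exact Real.abs_le_sqrt (by linarith [sq_nonneg (df N s).re]))
    (by rw [norm_eq_abs_re (df_real N s)]; exact Real.abs_le_sqrt (by linarith [sq_nonneg (yf N s).re]))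
    (by linarith)
  rw [← hn] at hRb
  have hre : (((N : ℂ) + 1) * ((4 - (s : ℂ) ^ 2) / s ^ 2 * yf N s) + R).re
      = n * ((4 - s ^ 2) / s ^ 2 * (yf N s).re) + R.re := by
    rw [add_re, re_mul_real n ((4 - s ^ 2) / s ^ 2) _ hnC.symm (by push_cast; rfl)]
  have hd := hR.deriv
  refine ⟨?_, ?_, hc1, ?_, ?_, hle, ?_⟩
  · refine (hasDerivAt_yf (hU s) (hK.ne2 s hsK)).real_of_complex.congr_deriv ?_
    rw [← hnC, re_ofReal_mul]
  · refine hR.real_of_complex.congr_deriv ?_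
    simp only [hd]; ring
  · refine hc2.trans ?_
    have i1 : s ^ 2 ≤ (s1 + 6 * r) ^ 2 := by gcongr
    have i2 : 0 < 4 - (s1 + 6 * r) ^ 2 := by nlinarith
    have i3 : s ^ 2 ≤ 4 := by linarith
    gcongr
  · have i1 : (s1 - 6 * r) ^ 2 ≤ s ^ 2 := by gcongr
    calc (4 - s ^ 2) / s ^ 2 ≤ 4 / s ^ 2 := by gcongr; linarith [sq_nonneg s]
      _ ≤ _ := by gcongr
  · simp only [hd, hre]
    have : n * ((4 - s ^ 2) / s ^ 2 * (yf N s).re) + R.re - n * ((4 - s ^ 2) / s ^ 2 * (yf N s).re)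
      = R.re := by ring
    rw [this]
    refine (abs_re_le_norm R).trans (hRb.trans (le_of_eq ?_))
    have : n ≠ 0 := by linarith
    field_simp

/-! ### The genus-zero region and the function `ψ` -/

/-- The principal square root. -/
noncomputable def csq (w : ℂ) : ℂ := w ^ ((1 : ℂ) / 2)

lemma csq_sq (w : ℂ) : csq w ^ 2 = w := by
  rw [csq]
  simp

lemma csq_eq {w : ℂ} (hw : w ≠ 0) : csq w = exp (log w / 2) := by
  rw [csq, cpow_def_of_ne_zero hw]; congr 1; ring

lemma csq_re_nonneg (w : ℂ) : 0 ≤ (csq w).re := by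
  rcases eq_or_ne w 0 with rfl | hw
  · simp [csq]
  rw [csq_eq hw, exp_re]
  refine mul_nonneg (Real.exp_pos _).le (Real.cos_nonneg_of_mem_Icc ?_)
  have h1 := neg_pi_lt_arg w
  have h2 := arg_le_pi w
  have : (log w / 2).im = arg w / 2 := by
    rw [show log w / 2 = log w / (2 : ℝ) by norm_num, div_ofReal_im, log_im]
  rw [this]; constructor <;> linarith

lemma csq_re_pos {w : ℂ} (hw : w ∈ slitPlane) : 0 < (csq w).re := by
  refine (csq_re_nonneg w).lt_of_ne' fun h => ?_
  have h2 := csq_sq w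
  rw [mem_slitPlane_iff] at hw
  have hr : w.re = (csq w).re ^ 2 - (csq w).im ^ 2 := by
    have := congrArg re h2
    rw [sq, mul_re] at this; rw [← this]; ring
  have hi : w.im = 2 * (csq w).re * (csq w).im := by
    have := congrArg im h2
    rw [sq, mul_im] at this; rw [← this]; ring
  rw [h] at hr hi
  rcases hw with hw | hw
  · nlinarith [sq_nonneg (csq w).im]
  · apply hw; rw [hi]; ring

lemma two_add_csq_re (w : ℂ) : 2 ≤ (2 + csq w).re := by
  have := csq_re_nonneg w
  rw [add_re]; norm_num; exact this

lemma two_le_norm (w : ℂ) : 2 ≤ ‖2 + csq w‖ := (two_add_csq_re w).trans (re_le_norm _)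

lemma two_add_ne (w : ℂ) : 2 + csq w ≠ 0 := fun h => by
  have := two_le_norm w; rw [h, norm_zero] at this; linarith

lemma csq_hasDeriv {w : ℂ} (hw : w ∈ slitPlane) : HasStrictDerivAt csq (1 / (2 * csq w)) w := by
  have h0 := slitPlane_ne_zero hw
  have h1 : HasStrictDerivAt (fun z => exp (log z / 2)) (exp (log w / 2) * (w⁻¹ / 2)) w :=
    ((hasStrictDerivAt_log hw).div_const 2).cexp
  have h2 : HasStrictDerivAt csq (exp (log w / 2) * (w⁻¹ / 2)) w := by
    refine h1.congr_of_eventuallyEq ?_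
    filter_upwards [isOpen_ne.mem_nhds h0] with z hz
    exact (csq_eq hz).symm
  refine h2.congr_deriv ?_
  rw [← csq_eq h0]
  have h3 : csq w ≠ 0 := fun h => by have := csq_re_pos hw; rw [h] at this; simp at this
  have h4 := csq_sq w
  field_simp
  rw [h4]

/-- The function whose modulus is `1` on the breaking curves. -/
noncomputable def psi (s : ℂ) : ℂ := s * exp (csq (4 - s ^ 2) / 2) / (2 + csq (4 - s ^ 2))

lemma norm_psi (s : ℂ) :
    ‖psi s‖ = ‖s‖ * Real.exp ((csq (4 - s ^ 2)).re / 2) / ‖2 + csq (4 - s ^ 2)‖ := by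
  rw [psi, norm_div, norm_mul, norm_exp]
  congr 4
  rw [show csq (4 - s ^ 2) / 2 = csq (4 - s ^ 2) / (2 : ℝ) by norm_num, div_ofReal_re]

lemma log_norm_psi {s : ℂ} (hs : s ≠ 0) :
    Real.log ‖psi s‖ =
      Real.log ‖s‖ + (csq (4 - s ^ 2)).re / 2 - Real.log ‖2 + csq (4 - s ^ 2)‖ := by
  have h1 : ‖s‖ ≠ 0 := norm_ne_zero_iff.2 hs
  have h2 : ‖2 + csq (4 - s ^ 2)‖ ≠ 0 := norm_ne_zero_iff.2 (two_add_ne _)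
  rw [norm_psi, Real.log_div (by positivity) h2, Real.log_mul h1 (Real.exp_pos _).ne', Real.log_exp]

/-- Up to the sign coming from the choice of branches, `Re H = -2 log |ψ|`. -/
lemma Hfun_re {s : ℂ} (hs : s ≠ 0) :
    (Hfun s).re = -2 * Real.log ‖psi s‖ ∨ (Hfun s).re = 2 * Real.log ‖psi s‖ := by
  obtain ⟨q, hq⟩ : ∃ q, q = csq (4 - s ^ 2) := ⟨_, rfl⟩
  obtain ⟨R, hR⟩ : ∃ R, R = csq (4 / s ^ 2 - 1) := ⟨_, rfl⟩
  have h1 : R ^ 2 = 4 / s ^ 2 - 1 := hR ▸ csq_sq _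
  have h2 : q ^ 2 = 4 - s ^ 2 := hq ▸ csq_sq _
  have h3 : (s * R) ^ 2 = q ^ 2 := by
    rw [mul_pow, h1, h2]; field_simp
  have hH : (Hfun s).re = 2 * Real.log ‖(2 + s * R) / s‖ - (s * R).re := by
    have : Hfun s = (2 : ℝ) * log (2 / s + R) - s * R := by rw [Hfun, hR, csq]; norm_num
    rw [this, sub_re, re_ofReal_mul, log_re]
    congr 4
    field_simp
  have hs' : ‖s‖ ≠ 0 := norm_ne_zero_iff.2 hs
  have hn : ‖2 + q‖ ≠ 0 := norm_ne_zero_iff.2 (hq ▸ two_add_ne _)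
  rw [hH, log_norm_psi hs, ← hq]
  rcases sq_eq_sq_iff_eq_or_eq_neg.1 h3 with h | h
  · left
    rw [h, norm_div, Real.log_div hn hs']; ring
  · right
    have h4 : (2 + -q) / s = s / (2 + q) := by
      rw [div_eq_div_iff hs (hq ▸ two_add_ne _)]
      linear_combination -h2
    rw [h, h4, norm_div, Real.log_div hs' hn, neg_re]; ring

/-- On the cuts `s² ≥ 4` the root is purely imaginary and `|ψ| = 1`. -/
lemma norm_psi_slit {s : ℂ} (hs : 4 - s ^ 2 ∉ slitPlane) : ‖psi s‖ = 1 := by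
  obtain ⟨w, hw⟩ : ∃ w, w = 4 - s ^ 2 := ⟨_, rfl⟩
  rw [norm_psi, ← hw]
  rw [← hw, mem_slitPlane_iff] at hs
  push Not at hs
  obtain ⟨hre, him⟩ := hs
  have h2 := csq_sq w
  have hr : w.re = (csq w).re ^ 2 - (csq w).im ^ 2 := by
    have := congrArg re h2
    rw [sq, mul_re] at this; rw [← this]; ring
  have hi : w.im = 2 * (csq w).re * (csq w).im := by
    have := congrArg im h2
    rw [sq, mul_im] at this; rw [← this]; ring
  have h0 : (csq w).re = 0 := by
    rw [him] at hi
    rcases mul_eq_zero.1 hi.symm with h | h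
    · linarith
    · rw [h] at hr
      nlinarith [sq_nonneg (csq w).re]
  rw [h0]
  have hs2 : ‖s‖ ^ 2 = 4 - w.re := by
    rw [← norm_pow, show s ^ 2 = ((4 - w.re : ℝ) : ℂ) from ?_, norm_real, Real.norm_of_nonneg (by linarith)]
    apply Complex.ext
    · simp [hw]
    · have := congrArg im hw
      rw [him, sub_im] at this
      norm_num at this ⊢
      linarith
  have hn2 : ‖2 + csq w‖ ^ 2 = 4 - w.re := by
    rw [← normSq_eq_norm_sq, normSq_apply, add_re, add_im, h0, hr, h0]; norm_num; ring
  have : ‖s‖ = ‖2 + csq w‖ := by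
    rw [← sq_eq_sq₀ (norm_nonneg _) (norm_nonneg _), hs2, hn2]
  rw [this]
  simp
  exact two_add_ne w

lemma continuousAt_psi {s : ℂ} (hs : 4 - s ^ 2 ∈ slitPlane) : ContinuousAt psi s := by
  have h1 : ContinuousAt (fun s : ℂ => csq (4 - s ^ 2)) s :=
    ContinuousAt.comp (f := fun s : ℂ => 4 - s ^ 2) (csq_hasDeriv hs).hasDerivAt.continuousAt
      (by fun_prop)
  unfold psi
  refine ContinuousAt.div (continuousAt_id.mul (h1.div_const 2).cexp)
    (continuousAt_const.add h1) (two_add_ne _)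

/-- On the genus-zero region `|ψ| < 1`. -/
theorem G0_sub {s : ℂ} (hs : s ∈ G0) : 4 - s ^ 2 ∈ slitPlane ∧ ‖psi s‖ < 1 := by
  have hΩ : IsOpen {s : ℂ | 4 - s ^ 2 ∈ slitPlane} := isOpen_slitPlane.preimage (by fun_prop)
  have hc : ContinuousOn (fun s => ‖psi s‖) {s : ℂ | 4 - s ^ 2 ∈ slitPlane} := fun s hs =>
    (continuousAt_psi hs).norm.continuousWithinAt
  have hU := hc.isOpen_inter_preimage hΩ (isOpen_Iio (a := 1))
  have hV := hc.isOpen_inter_preimage hΩ (isOpen_Ioi (a := 1))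
  have h0 : (0 : ℂ) ∈ Breakingᶜ := fun h => h.1 rfl
  have hpre : IsPreconnected G0 := isPreconnected_connectedComponentIn
  have hsub : G0 ⊆ Breakingᶜ := connectedComponentIn_subset _ _
  refine hpre.subset_left_of_subset_union hU hV ?_ (fun z hz => ?_) ⟨0, mem_connectedComponentIn h0, ?_⟩ hs
  · rw [Set.disjoint_left]
    rintro z ⟨-, h1⟩ ⟨-, h2⟩
    exact lt_asymm (show ‖psi z‖ < 1 from h1) (show 1 < ‖psi z‖ from h2)
  · have hzB := hsub hz
    rcases eq_or_ne z 0 with rfl | hz0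
    · left
      refine ⟨by simp [mem_slitPlane_iff], ?_⟩
      simp [psi]
    have hne : ‖psi z‖ ≠ 1 := fun h => by
      apply hzB
      refine ⟨hz0, ?_⟩
      rcases Hfun_re hz0 with h' | h' <;> rw [h', h] <;> simp
    have hzΩ : 4 - z ^ 2 ∈ slitPlane := by
      by_contra h; exact hne (norm_psi_slit h)
    rcases lt_or_gt_of_ne hne with h | h
    · exact Or.inl ⟨hzΩ, h⟩
    · exact Or.inr ⟨hzΩ, h⟩
  · refine ⟨by simp [mem_slitPlane_iff], ?_⟩
    simp [psi]

/-! ### Level curves of `log |ψ|` -/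

/-- `√(4 - s²)` in the logarithmic coordinate `s = exp u`. -/
noncomputable def qu (u : ℂ) : ℂ := csq (4 - exp u ^ 2)
/-- `log ψ` in the logarithmic coordinate. -/
noncomputable def Psi (u : ℂ) : ℂ := u + qu u / 2 - log (2 + qu u)

lemma qu_sq (u : ℂ) : qu u ^ 2 = 4 - exp u ^ 2 := csq_sq _

lemma Psi_re (u : ℂ) : (Psi u).re = u.re + (qu u).re / 2 - Real.log ‖2 + qu u‖ := by
  rw [Psi, sub_re, add_re, log_re]
  congr 2
  rw [show qu u / 2 = qu u / (2 : ℝ) by norm_num, div_ofReal_re]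

lemma Psi_re_psi (u : ℂ) : (Psi u).re = Real.log ‖psi (exp u)‖ := by
  rw [Psi_re, log_norm_psi (exp_ne_zero u), norm_exp, Real.log_exp, qu]

lemma qu_ne {u : ℂ} (h : 4 - exp u ^ 2 ∈ slitPlane) : qu u ≠ 0 := fun h0 => by
  have := csq_re_pos h
  rw [qu] at h0
  rw [h0] at this; simp at this

lemma hasStrictDerivAt_qu {u : ℂ} (h : 4 - exp u ^ 2 ∈ slitPlane) :
    HasStrictDerivAt qu (-exp u ^ 2 / qu u) u := by
  have h1 : HasStrictDerivAt (fun u : ℂ => 4 - exp u ^ 2) (-(2 * exp u ^ 1 * exp u)) u := by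
    simpa using ((Complex.hasStrictDerivAt_exp u).pow 2).const_sub 4
  refine (HasStrictDerivAt.comp u (csq_hasDeriv h) h1).congr_deriv ?_
  have := qu_ne h
  rw [qu] at this ⊢
  field_simp

lemma hasStrictDerivAt_Psi {u : ℂ} (h : 4 - exp u ^ 2 ∈ slitPlane) :
    HasStrictDerivAt Psi (qu u / 2) u := by
  have hq := hasStrictDerivAt_qu h
  have hq0 := qu_ne h
  have hsl : 2 + qu u ∈ slitPlane := by
    rw [mem_slitPlane_iff]; left; have := two_add_csq_re (4 - exp u ^ 2); rw [qu]; linarith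
  have h2 : 2 + qu u ≠ 0 := slitPlane_ne_zero hsl
  refine (((hasStrictDerivAt_id u).add (hq.div_const 2)).sub ((hq.const_add 2).clog hsl)).congr_deriv ?_
  have h3 := qu_sq u
  field_simp
  linear_combination (-qu u) * h3

lemma exp_sq_re_im (x φ : ℝ) : (exp ((x : ℂ) + φ * I) ^ 2).re = Real.exp x ^ 2 * Real.cos (2 * φ) ∧
    (exp ((x : ℂ) + φ * I) ^ 2).im = Real.exp x ^ 2 * Real.sin (2 * φ) := by
  rw [← Complex.exp_nat_mul, exp_re, exp_im, ← Real.exp_nat_mul]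
  have h1 : (((2 : ℕ) : ℂ) * (x + φ * I)).re = (2 : ℕ) * x := by simp
  have h2 : (((2 : ℕ) : ℂ) * (x + φ * I)).im = 2 * φ := by simp
  rw [h1, h2]
  exact ⟨rfl, rfl⟩

lemma slit_iff (x φ : ℝ) : 4 - exp ((x : ℂ) + φ * I) ^ 2 ∈ slitPlane ↔
    Real.exp x ^ 2 * Real.cos (2 * φ) < 4 ∨ Real.sin (2 * φ) ≠ 0 := by
  rw [mem_slitPlane_iff, sub_re, sub_im, (exp_sq_re_im x φ).1, (exp_sq_re_im x φ).2]
  have : (4 : ℂ).re = 4 ∧ (4 : ℂ).im = 0 := by norm_num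
  rw [this.1, this.2]
  constructor
  · rintro (h | h)
    · left; linarith
    · right; intro h'; apply h; rw [h']; ring
  · rintro (h | h)
    · left; linarith
    · right; intro h'; apply h
      have : Real.exp x ^ 2 ≠ 0 := by positivity
      have h3 : Real.exp x ^ 2 * Real.sin (2 * φ) = 0 := by linarith
      exact (mul_eq_zero.1 h3).resolve_left this

/-- The cut plane is star-shaped about `0`. -/
lemma slit_mono {a b φ : ℝ} (hab : a ≤ b) (h : 4 - exp ((b : ℂ) + φ * I) ^ 2 ∈ slitPlane) :
    4 - exp ((a : ℂ) + φ * I) ^ 2 ∈ slitPlane := by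
  rw [slit_iff] at h ⊢
  refine h.imp_left fun h => ?_
  rcases le_total 0 (Real.cos (2 * φ)) with hc | hc
  · refine lt_of_le_of_lt ?_ h; gcongr
  · have : Real.exp a ^ 2 * Real.cos (2 * φ) ≤ 0 := mul_nonpos_of_nonneg_of_nonpos (by positivity) hc
    linarith

/-- Along a ray from the origin, `log |ψ|` has derivative `Re qu / 2` in `x = log |s|`. -/
lemma hasDerivAt_Psi_x {x φ : ℝ} (h : 4 - exp ((x : ℂ) + φ * I) ^ 2 ∈ slitPlane) :
    HasDerivAt (fun x : ℝ => (Psi ((x : ℂ) + φ * I)).re) ((qu ((x : ℂ) + φ * I)).re / 2) x := by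
  have h1 : HasDerivAt (fun z : ℂ => Psi (z + φ * I)) (qu ((x : ℂ) + φ * I) / 2) (x : ℂ) :=
    HasDerivAt.comp_add_const _ _ (hasStrictDerivAt_Psi h).hasDerivAt
  refine h1.real_of_complex.congr_deriv ?_
  rw [show qu ((x : ℂ) + φ * I) / 2 = qu ((x : ℂ) + φ * I) / (2 : ℝ) by norm_num, div_ofReal_re]

/-- `log |ψ|` is strictly increasing along rays from the origin. -/
lemma Psi_strict {a b φ : ℝ} (hab : a < b) (h : 4 - exp ((b : ℂ) + φ * I) ^ 2 ∈ slitPlane) :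
    (Psi ((a : ℂ) + φ * I)).re < (Psi ((b : ℂ) + φ * I)).re := by
  have hd : ∀ x ∈ Set.Icc a b, HasDerivAt (fun x : ℝ => (Psi ((x : ℂ) + φ * I)).re)
      ((qu ((x : ℂ) + φ * I)).re / 2) x := fun x hx => hasDerivAt_Psi_x (slit_mono hx.2 h)
  refine strictMonoOn_of_deriv_pos (convex_Icc a b)
    (fun x hx => (hd x hx).continuousAt.continuousWithinAt) (fun x hx => ?_)
    (Set.left_mem_Icc.2 hab.le) (Set.right_mem_Icc.2 hab.le) hab
  have hx' := interior_subset hx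
  rw [(hd x hx').deriv]
  have := csq_re_pos (slit_mono hx'.2 h)
  rw [qu]; linarith

lemma Psi_unique {a b φ : ℝ} (ha : 4 - exp ((a : ℂ) + φ * I) ^ 2 ∈ slitPlane)
    (hb : 4 - exp ((b : ℂ) + φ * I) ^ 2 ∈ slitPlane)
    (h : (Psi ((a : ℂ) + φ * I)).re = (Psi ((b : ℂ) + φ * I)).re) : a = b := by
  rcases lt_trichotomy a b with h' | h' | h'
  · exact absurd h (Psi_strict h' hb).ne
  · exact h'
  · exact absurd h (Psi_strict h' ha).ne'

lemma re_csq_sq (w : ℂ) : 2 * (csq w).re ^ 2 = ‖w‖ + w.re := by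
  have h1 : ‖w‖ = ‖csq w‖ ^ 2 := by rw [← norm_pow, csq_sq]
  have h2 : w.re = (csq w).re ^ 2 - (csq w).im ^ 2 := by
    have := congrArg re (csq_sq w)
    rw [sq, mul_re] at this; rw [← this]; ring
  rw [h1, h2, ← normSq_eq_norm_sq, normSq_apply]; ring

lemma norm_exp_sq (x φ : ℝ) : ‖exp ((x : ℂ) + φ * I) ^ 2‖ = Real.exp x ^ 2 := by
  rw [norm_pow, norm_exp]; simp

/-- Far to the left, `log|ψ|` is very negative. -/
lemma Psi_left (c φ : ℝ) (hc : c ≤ 0) : 4 - exp (((c - 2 : ℝ) : ℂ) + φ * I) ^ 2 ∈ slitPlane ∧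
    (Psi (((c - 2 : ℝ) : ℂ) + φ * I)).re < c := by
  have he : Real.exp (c - 2) ≤ 1 := Real.exp_le_one_iff.2 (by linarith)
  have he0 := Real.exp_pos (c - 2)
  have he2 : Real.exp (c - 2) ^ 2 ≤ 1 := pow_le_one₀ he0.le he
  constructor
  · rw [slit_iff]; left
    nlinarith [Real.cos_le_one (2 * φ), sq_nonneg (Real.exp (c - 2))]
  · rw [Psi_re]
    have h1 : Real.log 2 ≤ Real.log ‖2 + qu (((c - 2 : ℝ) : ℂ) + φ * I)‖ :=
      Real.log_le_log two_pos (two_le_norm _)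
    have h2 : ‖qu (((c - 2 : ℝ) : ℂ) + φ * I)‖ ^ 2 ≤ 5 := by
      rw [← norm_pow, qu_sq]
      refine (norm_sub_le _ _).trans ?_
      rw [norm_exp_sq]; norm_num; linarith
    have h3 := re_le_norm (qu (((c - 2 : ℝ) : ℂ) + φ * I))
    have h4 : ‖qu (((c - 2 : ℝ) : ℂ) + φ * I)‖ ≤ 3 := by nlinarith [norm_nonneg (qu (((c - 2 : ℝ) : ℂ) + φ * I))]
    have h5 := Real.log_two_gt_d9
    have h6 : ((((c - 2 : ℝ) : ℂ) + φ * I)).re = c - 2 := by simp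
    rw [h6]; linarith

/-- In a non-real direction, `log|ψ|` is positive far to the right. -/
lemma Psi_right {φ : ℝ} (hφ : Real.sin φ ≠ 0) : ∃ x : ℝ,
    4 - exp ((x : ℂ) + φ * I) ^ 2 ∈ slitPlane ∧ 0 < (Psi ((x : ℂ) + φ * I)).re := by
  obtain ⟨r, hr⟩ : ∃ r, r = max 4 (2 / |Real.sin φ|) := ⟨_, rfl⟩
  have hs : 0 < |Real.sin φ| := abs_pos.2 hφ
  have hr4 : 4 ≤ r := hr ▸ le_max_left _ _
  have hrs : 2 ≤ r * |Real.sin φ| := by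
    have : 2 / |Real.sin φ| ≤ r := hr ▸ le_max_right _ _
    rwa [div_le_iff₀ hs] at this
  have hex : Real.exp (Real.log r) = r := Real.exp_log (by linarith)
  refine ⟨Real.log r, ?_, ?_⟩
  · rw [slit_iff, hex]
    by_contra h
    push Not at h
    obtain ⟨h1, h2⟩ := h
    have h3 := Real.sin_sq_add_cos_sq (2 * φ)
    have h4 := Real.cos_sq' φ
    have h5 := Real.cos_two_mul φ
    have hs2 : 0 < Real.sin φ ^ 2 := by positivity
    rw [h2] at h3
    have h6 : Real.cos (2 * φ) < 1 := by nlinarith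
    have h7 : 0 < Real.cos (2 * φ) := by
      by_contra h
      nlinarith [sq_nonneg r]
    nlinarith
  · obtain ⟨u, hu⟩ : ∃ u, u = ((Real.log r : ℝ) : ℂ) + φ * I := ⟨_, rfl⟩
    have hns : ‖exp u ^ 2‖ = r ^ 2 := by rw [hu, norm_exp_sq, hex]
    have hre : (exp u ^ 2).re = r ^ 2 * Real.cos (2 * φ) := by rw [hu, (exp_sq_re_im _ _).1, hex]
    rw [← hu, Psi_re]
    have hure : u.re = Real.log r := by rw [hu]; simp
    have hq : 2 ≤ (qu u).re := by
      have h1 := re_csq_sq (4 - exp u ^ 2)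
      have h2 : r ^ 2 - 4 ≤ ‖4 - exp u ^ 2‖ := by
        have := norm_sub_norm_le (exp u ^ 2) 4
        rw [hns, norm_sub_rev] at this
        norm_num at this; linarith
      rw [sub_re, hre] at h1
      norm_num at h1
      have h3 : r ^ 2 * Real.sin φ ^ 2 ≤ (qu u).re ^ 2 := by
        have h5 := Real.cos_two_mul φ
        have h4 := Real.cos_sq' φ
        rw [qu]; rw [h5, h4] at h1; linarith
      have h4 : (r * |Real.sin φ|) ^ 2 ≤ (qu u).re ^ 2 := by rw [mul_pow, sq_abs]; exact h3
      have h5 : 0 ≤ (qu u).re := csq_re_nonneg _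
      exact hrs.trans ((sq_le_sq₀ (by positivity) h5).1 h4)
    have hn : ‖2 + qu u‖ ≤ 2 * r := by
      have h1 : ‖qu u‖ ^ 2 ≤ 4 + r ^ 2 := by
        rw [← norm_pow, qu_sq]
        refine (norm_sub_le _ _).trans ?_
        rw [hns]; norm_num
      have h2 : ‖qu u‖ ≤ r + 2 := by nlinarith [norm_nonneg (qu u)]
      refine (norm_add_le _ _).trans ?_
      norm_num; linarith
    have hl : Real.log ‖2 + qu u‖ ≤ Real.log 2 + Real.log r := by
      rw [← Real.log_mul two_ne_zero (by linarith)]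
      exact Real.log_le_log (by linarith [two_le_norm (4 - exp u ^ 2), show ‖2 + qu u‖ = ‖2 + csq (4 - exp u ^ 2)‖ from rfl]) hn
    have := Real.log_two_lt_d9
    rw [hure]; linarith

lemma csq_ofReal {r : ℝ} (hr : 0 ≤ r) : csq r = (√r : ℝ) := by
  rw [csq, Real.sqrt_eq_rpow, ofReal_cpow hr]; norm_num

/-- Every ray meets every level `c < 0` of `log |ψ|`. -/
lemma exists_level (c φ : ℝ) (hc : c < 0) : ∃ x : ℝ, 4 - exp ((x : ℂ) + φ * I) ^ 2 ∈ slitPlane ∧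
    (Psi ((x : ℂ) + φ * I)).re = c := by
  obtain ⟨l1, l2⟩ := Psi_left c φ hc.le
  by_cases hφ : Real.sin φ = 0
  · -- here `exp u ^ 2` is real and everything is explicit
    have hcos : Real.cos (2 * φ) = 1 := by
      rw [Real.cos_two_mul, Real.cos_sq', hφ]; norm_num
    have hsin : Real.sin (2 * φ) = 0 := by rw [Real.sin_two_mul, hφ]; ring
    have hex : ∀ x : ℝ, exp ((x : ℂ) + φ * I) ^ 2 = ((Real.exp x ^ 2 : ℝ) : ℂ) := fun x => by
      obtain ⟨h1, h2⟩ := exp_sq_re_im x φ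
      apply Complex.ext
      · rw [h1, hcos, ofReal_re, mul_one]
      · rw [h2, hsin, ofReal_im, mul_zero]
    obtain ⟨G, hG⟩ : ∃ G : ℝ → ℝ, G = fun x => x + √(4 - Real.exp x ^ 2) / 2
      - Real.log (2 + √(4 - Real.exp x ^ 2)) := ⟨_, rfl⟩
    have hGc : Continuous G := by
      rw [hG]
      refine Continuous.sub (by fun_prop) (Continuous.log (by fun_prop) fun x => ?_)
      have := Real.sqrt_nonneg (4 - Real.exp x ^ 2); linarith
    have hGP : ∀ x : ℝ, Real.exp x ^ 2 ≤ 4 → (Psi ((x : ℂ) + φ * I)).re = G x := fun x hx => by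
      have : qu ((x : ℂ) + φ * I) = (√(4 - Real.exp x ^ 2) : ℝ) := by
        rw [← csq_ofReal (by linarith), qu, hex]; push_cast; rfl
      have h2 : ‖2 + qu ((x : ℂ) + φ * I)‖ = 2 + √(4 - Real.exp x ^ 2) := by
        rw [this, show (2 : ℂ) + ((√(4 - Real.exp x ^ 2) : ℝ) : ℂ) = ((2 + √(4 - Real.exp x ^ 2) : ℝ) : ℂ) by push_cast; rfl,
          norm_real, Real.norm_of_nonneg (by positivity)]
      rw [Psi_re, h2, this, hG, ofReal_re]; simp
    have hlog : Real.exp (Real.log 2) = 2 := Real.exp_log two_pos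
    have hG2 : G (Real.log 2) = 0 := by
      rw [hG]; simp only [hlog]; norm_num
    have hlt : c - 2 ≤ Real.log 2 := by linarith [Real.log_two_gt_d9]
    have hmem : c ∈ Set.Icc (G (c - 2)) (G (Real.log 2)) := by
      refine ⟨?_, by rw [hG2]; exact hc.le⟩
      rw [← hGP]
      · exact l2.le
      · have he : Real.exp (c - 2) ≤ 1 := Real.exp_le_one_iff.2 (by linarith)
        have := pow_le_one₀ (n := 2) (Real.exp_pos (c - 2)).le he
        linarith
    obtain ⟨x, ⟨hx1, hx2⟩, hx⟩ := intermediate_value_Icc hlt hGc.continuousOn hmem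
    have hxl : x < Real.log 2 := hx2.lt_of_ne fun h => by rw [h, hG2] at hx; linarith
    have he : Real.exp x ^ 2 < 4 := by
      have : Real.exp x < 2 := by rw [← hlog]; exact Real.exp_lt_exp.2 hxl
      nlinarith [Real.exp_pos x]
    refine ⟨x, ?_, ?_⟩
    · rw [slit_iff, hcos]; left; linarith
    · rw [hGP x he.le]; exact hx
  · obtain ⟨x1, r1, r2⟩ := Psi_right hφ
    have hlt : c - 2 ≤ x1 := by
      by_contra h
      push Not at h
      have := Psi_strict h l1
      linarith
    have hcont : ContinuousOn (fun x : ℝ => (Psi ((x : ℂ) + φ * I)).re) (Set.Icc (c - 2) x1) :=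
      fun x hx => (hasDerivAt_Psi_x (slit_mono hx.2 r1)).continuousAt.continuousWithinAt
    obtain ⟨x, hx, hx'⟩ := intermediate_value_Icc hlt hcont ⟨l2.le, by linarith⟩
    exact ⟨x, slit_mono hx.2 r1, hx'⟩

/-- Implicit function theorem for the level curves of `log|ψ|`. -/
lemma local_level {x φ : ℝ} (h : 4 - exp ((x : ℂ) + φ * I) ^ 2 ∈ slitPlane) :
    ∃ g : ℝ → ℝ, g φ = x ∧ DifferentiableAt ℝ g φ ∧
      ∀ᶠ t in nhds φ, (Psi ((g t : ℂ) + t * I)).re = (Psi ((x : ℂ) + φ * I)).re := by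
  obtain ⟨lin, hlin⟩ : ∃ lin : ℝ × ℝ →L[ℝ] ℂ, ∀ v, lin v = (v.2 : ℂ) + v.1 * I :=
    ⟨(ofRealCLM.comp (ContinuousLinearMap.snd ℝ ℝ ℝ)) +
      (ofRealCLM.comp (ContinuousLinearMap.fst ℝ ℝ ℝ)).smulRight I, fun v => by simp⟩
  have hpt : 4 - exp (lin (φ, x)) ^ 2 ∈ slitPlane := by rw [hlin]; exact h
  have h1 : HasStrictFDerivAt Psi
      ((ContinuousLinearMap.toSpanSingleton ℂ (qu (lin (φ, x)) / 2)).restrictScalars ℝ) (lin (φ, x)) :=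
    (hasStrictDerivAt_Psi hpt).hasStrictFDerivAt.restrictScalars ℝ
  have h2 : HasStrictFDerivAt (fun v => (Psi (lin v)).re) _ (φ, x) :=
    reCLM.hasStrictFDerivAt.comp (φ, x) (h1.comp (φ, x) lin.hasStrictFDerivAt)
  have hinv : ((reCLM.comp (((ContinuousLinearMap.toSpanSingleton ℂ (qu (lin (φ, x)) / 2)).restrictScalars
      ℝ).comp lin)).comp (ContinuousLinearMap.inr ℝ ℝ ℝ)).IsInvertible := by
    have hq : (qu (lin (φ, x))).re / 2 ≠ 0 := by
      have := csq_re_pos hpt; rw [qu]; positivity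
    refine ⟨ContinuousLinearEquiv.unitsEquivAut ℝ (Units.mk0 _ hq), ?_⟩
    ext
    simp [hlin]
  refine ⟨h2.implicitFunctionOfProdDomain hinv, ?_, ?_, ?_⟩
  · exact (h2.eventually_apply_eq_iff_implicitFunctionOfProdDomain hinv).self_of_nhds.mp rfl
  · exact (h2.hasStrictFDerivAt_implicitFunctionOfProdDomain hinv).hasFDerivAt.differentiableAt
  · have := h2.eventually_apply_implicitFunctionOfProdDomain hinv
    simpa only [hlin] using this

lemma isOpen_slit_u : IsOpen {u : ℂ | 4 - exp u ^ 2 ∈ slitPlane} :=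
  isOpen_slitPlane.preimage (by fun_prop)

/-- The level curve `log |ψ| = c` is a graph over the argument `φ`. -/
lemma level_curve {c : ℝ} (hc : c < 0) : ∃ X : ℝ → ℝ, ∀ φ : ℝ,
    4 - exp ((X φ : ℂ) + φ * I) ^ 2 ∈ slitPlane ∧ (Psi ((X φ : ℂ) + φ * I)).re = c ∧
    HasDerivAt X ((qu ((X φ : ℂ) + φ * I)).im / (qu ((X φ : ℂ) + φ * I)).re) φ := by
  choose X hX1 hX2 using fun φ => exists_level c φ hc
  refine ⟨X, fun φ => ⟨hX1 φ, hX2 φ, ?_⟩⟩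
  obtain ⟨g, hg0, hgd, hg⟩ := local_level (hX1 φ)
  have hgd' := hgd.hasDerivAt
  have hev : X =ᶠ[nhds φ] g := by
    have hcont : ContinuousAt (fun t : ℝ => (g t : ℂ) + t * I) φ :=
      (continuous_ofReal.continuousAt.comp hgd.continuousAt).add (by fun_prop)
    have hsl := hcont.preimage_mem_nhds (isOpen_slit_u.mem_nhds (by
      simp only [Set.mem_ofPred_eq, hg0]; exact hX1 φ))
    filter_upwards [hsl, hg] with t ht1 ht2
    exact Psi_unique (hX1 t) ht1 (by rw [hX2, ht2, hX2])
  have hXd : HasDerivAt X (deriv g φ) φ := hgd'.congr_of_eventuallyEq hev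
  refine hXd.congr_deriv ?_
  have hu : HasDerivAt (fun t : ℝ => (X t : ℂ) + t * I) ((deriv g φ : ℝ) + 1 * I) φ :=
    hXd.ofReal_comp.add (HasDerivAt.mul_const (hasDerivAt_id φ).ofReal_comp I)
  have hP : HasDerivAt (fun t : ℝ => Psi ((X t : ℂ) + t * I))
      (qu ((X φ : ℂ) + φ * I) / 2 * ((deriv g φ : ℝ) + 1 * I)) φ :=
    HasDerivAt.comp (h₂ := Psi) (h := fun t : ℝ => (X t : ℂ) + t * I) φ
      (hasStrictDerivAt_Psi (hX1 φ)).hasDerivAt hu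
  have hre : HasDerivAt (fun t : ℝ => (Psi ((X t : ℂ) + t * I)).re)
      (qu ((X φ : ℂ) + φ * I) / 2 * ((deriv g φ : ℝ) + 1 * I)).re φ :=
    reCLM.hasFDerivAt.comp_hasDerivAt φ hP
  simp only [hX2] at hre
  have h0 := hre.unique (hasDerivAt_const φ c)
  have hq := csq_re_pos (hX1 φ)
  have e : qu ((X φ : ℂ) + φ * I) / 2 = qu ((X φ : ℂ) + φ * I) / (2 : ℝ) := by norm_num
  rw [e] at h0
  rw [mul_re, div_ofReal_re, div_ofReal_im] at h0
  rw [eq_div_iff (by rw [qu]; exact hq.ne')]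
  simp at h0
  linarith

/-- A point of the genus-zero region is joined to the real segment `(0, 2)` by a level curve
of `log|ψ|`. -/
theorem level_path {s : ℂ} (hs : s ∈ G0) (hs0 : s ≠ 0) :
    ∃ u u' : ℝ → ℂ, (∀ θ, HasDerivAt u (u' θ) θ ∧ 4 - exp (u θ) ^ 2 ∈ slitPlane ∧
      (qu (u θ) * u' θ).re = 0) ∧ exp (u 1) = s ∧
      (∃ s1 : ℝ, 0 < s1 ∧ s1 < 2 ∧ exp (u 0) = s1) ∧
      ∃ B : ℝ, ∀ θ ∈ Set.Icc (0 : ℝ) 1, ‖u' θ‖ ≤ B := by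
  obtain ⟨h1, h2⟩ := G0_sub hs
  have hl : ((log s).re : ℂ) + (log s).im * I = log s := re_add_im _
  have hexp : exp (log s) = s := exp_log hs0
  obtain ⟨c, hcdef⟩ : ∃ c, c = (Psi (log s)).re := ⟨_, rfl⟩
  have hc : c < 0 := by
    rw [hcdef, Psi_re_psi, hexp]
    refine Real.log_neg (norm_pos_iff.2 ?_) h2
    rw [psi]
    exact div_ne_zero (mul_ne_zero hs0 (exp_ne_zero _)) (two_add_ne _)
  obtain ⟨X, hX⟩ := level_curve hc
  obtain ⟨φ0, hφ0⟩ : ∃ φ0, φ0 = (log s).im := ⟨_, rfl⟩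
  have hend : X φ0 = (log s).re := by
    refine Psi_unique (hX φ0).1 ?_ ?_ (φ := φ0)
    · rw [hφ0, hl, hexp]; exact h1
    · rw [(hX φ0).2.1, hφ0, hl, hcdef]
  obtain ⟨u, hu⟩ : ∃ u : ℝ → ℂ, u = fun θ => (X (θ * φ0) : ℂ) + ((θ * φ0 : ℝ) : ℂ) * I := ⟨_, rfl⟩
  have hu_at : ∀ θ, u θ = (X (θ * φ0) : ℂ) + ((θ * φ0 : ℝ) : ℂ) * I := fun θ => by rw [hu]
  have hsl : ∀ θ, 4 - exp (u θ) ^ 2 ∈ slitPlane := fun θ => by rw [hu_at]; exact (hX _).1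
  obtain ⟨u', hu'⟩ : ∃ u' : ℝ → ℂ, u' = fun θ => φ0 * (((qu (u θ)).im / (qu (u θ)).re : ℝ) + I) :=
    ⟨_, rfl⟩
  have hd : ∀ θ, HasDerivAt u (u' θ) θ := fun θ => by
    have hm : HasDerivAt (fun θ : ℝ => θ * φ0) φ0 θ := by simpa using (hasDerivAt_id θ).mul_const φ0
    have hx := (hX (θ * φ0)).2.2
    rw [← hu_at] at hx
    have h3 : HasDerivAt (fun θ => X (θ * φ0)) ((qu (u θ)).im / (qu (u θ)).re * φ0) θ :=
      HasDerivAt.comp θ hx hm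
    rw [hu, hu']
    refine (h3.ofReal_comp.add (hm.ofReal_comp.mul_const I)).congr_deriv ?_
    simp only [hu]
    push_cast; ring
  have hqp : ∀ θ, 0 < (qu (u θ)).re := fun θ => csq_re_pos (hsl θ)
  refine ⟨u, u', fun θ => ⟨hd θ, hsl θ, ?_⟩, ?_, ⟨Real.exp (X 0), Real.exp_pos _, ?_, ?_⟩, ?_⟩
  · have := hqp θ
    rw [hu']
    simp
    field_simp
    ring
  · rw [hu_at, one_mul, hend, hφ0, hl, hexp]
  · have h3 := (hX 0).1
    rw [slit_iff] at h3
    simp at h3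
    nlinarith [Real.exp_pos (X 0)]
  · rw [hu_at]; simp
  · have hqc : Continuous fun θ => qu (u θ) := continuous_iff_continuousAt.2 fun θ =>
      ContinuousAt.comp (g := qu) (f := u) (hasStrictDerivAt_qu (hsl θ)).hasDerivAt.continuousAt (hd θ).continuousAt
    have hc' : Continuous u' := by
      rw [hu']
      refine continuous_const.mul (Continuous.add (continuous_ofReal.comp ?_) continuous_const)
      exact (continuous_im.comp hqc).div (continuous_re.comp hqc) fun θ => (hqp θ).ne'
    exact isCompact_Icc.exists_bound_of_continuousOn hc'.continuousOn

/-! ### Energy estimate along a level curve -/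

/-- A path in the logarithmic coordinate along a level curve of `log|ψ|`. -/
def LPath (u u' : ℝ → ℂ) : Prop :=
  ∀ θ, HasDerivAt u (u' θ) θ ∧ 4 - exp (u θ) ^ 2 ∈ slitPlane ∧ (qu (u θ) * u' θ).re = 0

/-- The normalized derivative error `d / λ`, `λ = √(4 - s²) / s`, along the path. -/
noncomputable def Zf (N : ℕ) (u : ℝ → ℂ) (θ : ℝ) : ℂ :=
  df N (exp (u θ)) * (exp (u θ) / qu (u θ))

/-- The energy along the path. -/
noncomputable def En (N : ℕ) (u : ℝ → ℂ) (θ : ℝ) : ℝ := ‖yf N (exp (u θ))‖ ^ 2 + ‖Zf N u θ‖ ^ 2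

lemma LPath.cont_q {u u' : ℝ → ℂ} (h : LPath u u') : Continuous fun θ => qu (u θ) :=
  continuous_iff_continuousAt.2 fun θ => ContinuousAt.comp (g := qu) (f := u)
    (hasStrictDerivAt_qu (h θ).2.1).hasDerivAt.continuousAt (h θ).1.continuousAt

lemma LPath.cont_u {u u' : ℝ → ℂ} (h : LPath u u') : Continuous u :=
  continuous_iff_continuousAt.2 fun θ => (h θ).1.continuousAt

lemma LPath.adm {u u' : ℝ → ℂ} (h : LPath u u') : Adm ((fun θ => exp (u θ)) '' Set.Icc (0 : ℝ) 1) where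
  cpt := isCompact_Icc.image h.cont_u.cexp
  ne0 := by rintro _ ⟨θ, -, rfl⟩; exact exp_ne_zero _
  ne2 := by rintro _ ⟨θ, -, rfl⟩; exact slitPlane_ne_zero (h θ).2.1

lemma LPath.bounds {u u' : ℝ → ℂ} (h : LPath u u') {B : ℝ}
    (hB : ∀ θ ∈ Set.Icc (0 : ℝ) 1, ‖u' θ‖ ≤ B) : ∃ P : ℝ, 1 ≤ P ∧ ∀ θ ∈ Set.Icc (0 : ℝ) 1,
      ‖u' θ‖ ≤ P ∧ ‖exp (u θ)‖ ≤ P ∧ ‖(exp (u θ))⁻¹‖ ≤ P ∧ ‖qu (u θ) / exp (u θ)‖ ≤ P ∧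
      ‖exp (u θ) / qu (u θ)‖ ≤ P ∧
      ‖exp (u θ) ^ 2 * u' θ / qu (u θ)‖ ≤ P ∧ ‖4 * u' θ / qu (u θ) ^ 2‖ ≤ P := by
  have hq := h.cont_q
  have hu := h.cont_u
  have he := hu.cexp
  have hq0 : ∀ θ, qu (u θ) ≠ 0 := fun θ => qu_ne (h θ).2.1
  have he0 : ∀ θ, exp (u θ) ≠ 0 := fun θ => exp_ne_zero _
  have hc : ∀ {f : ℝ → ℂ}, Continuous f → ∃ C, ∀ θ ∈ Set.Icc (0 : ℝ) 1, ‖f θ‖ ≤ C := fun hf =>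
    isCompact_Icc.exists_bound_of_continuousOn hf.continuousOn
  obtain ⟨P1, p1⟩ := hc he
  obtain ⟨P2, p2⟩ := hc (he.inv₀ he0)
  obtain ⟨P3, p3⟩ := hc (hq.div he he0)
  obtain ⟨P4, p4⟩ := hc (he.div hq hq0)
  obtain ⟨P5, p5⟩ := hc ((he.pow 2).div hq hq0)
  obtain ⟨P6, p6⟩ := hc (continuous_const (y := (4 : ℂ)) |>.div (hq.pow 2) fun θ => pow_ne_zero 2 (hq0 θ))
  refine ⟨|B| + |P1| + |P2| + |P3| + |P4| + |P5| * |B| + |P6| * |B| + 1, ?_, fun θ hθ => ?_⟩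
  · have : 0 ≤ |B| + |P1| + |P2| + |P3| + |P4| + |P5| * |B| + |P6| * |B| := by positivity
    linarith
  have a0 := (hB θ hθ).trans (le_abs_self _)
  have a1 := (p1 θ hθ).trans (le_abs_self _)
  have a2 : ‖(exp (u θ))⁻¹‖ ≤ |P2| := (p2 θ hθ).trans (le_abs_self _)
  have a3 : ‖qu (u θ) / exp (u θ)‖ ≤ |P3| := (p3 θ hθ).trans (le_abs_self _)
  have a4 : ‖exp (u θ) / qu (u θ)‖ ≤ |P4| := (p4 θ hθ).trans (le_abs_self _)
  have a5 : ‖exp (u θ) ^ 2 / qu (u θ)‖ ≤ |P5| := (p5 θ hθ).trans (le_abs_self _)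
  have a6 : ‖4 / qu (u θ) ^ 2‖ ≤ |P6| := (p6 θ hθ).trans (le_abs_self _)
  have b5 : ‖exp (u θ) ^ 2 * u' θ / qu (u θ)‖ ≤ |P5| * |B| := by
    rw [show exp (u θ) ^ 2 * u' θ / qu (u θ) = exp (u θ) ^ 2 / qu (u θ) * u' θ by ring, norm_mul]
    gcongr
  have b6 : ‖4 * u' θ / qu (u θ) ^ 2‖ ≤ |P6| * |B| := by
    rw [show 4 * u' θ / qu (u θ) ^ 2 = 4 / qu (u θ) ^ 2 * u' θ by ring, norm_mul]
    gcongr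
  have := abs_nonneg B
  have := abs_nonneg P1
  have := abs_nonneg P2
  have := abs_nonneg P3
  have := abs_nonneg P4
  have : 0 ≤ |P5| * |B| := by positivity
  have : 0 ≤ |P6| * |B| := by positivity
  refine ⟨?_, ?_, ?_, ?_, ?_, ?_, ?_⟩ <;> linarith

/-- The oscillatory terms do not contribute to the energy. -/
lemma inner_cancel {m Y Z r : ℂ} (n : ℝ) (hm : m.re = 0) :
    inner ℝ Y (n * m * Z) + inner ℝ Z (n * m * Y + r) = inner ℝ Z r := by
  simp only [Complex.inner, mul_re, add_re, mul_im, add_im, conj_re, conj_im, ofReal_re, ofReal_im, hm]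
  ring

lemma hasDerivAt_Zf {N : ℕ} {u u' : ℝ → ℂ} (h : LPath u u') {θ : ℝ} {R : ℂ}
    (hd : HasDerivAt (df N) ((N + 1) * ((4 - exp (u θ) ^ 2) / exp (u θ) ^ 2 * yf N (exp (u θ))) + R)
      (exp (u θ))) :
    HasDerivAt (Zf N u) (((N + 1 : ℝ) : ℂ) * (qu (u θ) * u' θ) * yf N (exp (u θ)) +
      (exp (u θ) ^ 2 * u' θ / qu (u θ) * R + 4 * u' θ / qu (u θ) ^ 2 * Zf N u θ)) θ := by
  obtain ⟨h1, h2, h3⟩ := h θ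
  have hq0 := qu_ne h2
  have he0 := exp_ne_zero (u θ)
  have e1 : HasDerivAt (fun θ => exp (u θ)) (exp (u θ) * u' θ) θ := h1.cexp
  have e2 : HasDerivAt (fun θ => qu (u θ)) (-exp (u θ) ^ 2 / qu (u θ) * u' θ) θ :=
    HasDerivAt.comp (h₂ := qu) (h := u) θ (hasStrictDerivAt_qu h2).hasDerivAt h1
  have e3 : HasDerivAt (fun θ => df N (exp (u θ))) _ θ :=
    HasDerivAt.comp (h₂ := df N) (h := fun θ => exp (u θ)) θ hd e1
  refine (e3.mul (e1.div e2 hq0)).congr_deriv ?_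
  have hsq := qu_sq (u θ)
  rw [← hsq, Zf]
  push_cast
  have h4 : exp (u θ) ^ 2 = 4 - qu (u θ) ^ 2 := by rw [hsq]; ring
  have e5 : -exp (u θ) ^ 2 = qu (u θ) ^ 2 - 4 := by rw [h4]; ring
  rw [e5]
  simp only [Pi.div_apply]
  field_simp
  ring

lemma hasDerivAt_yf_path {N : ℕ} {u u' : ℝ → ℂ} (h : LPath u u') {θ : ℝ}
    (hU : ((N : ℂ) + 1) * exp (u θ) ∈ UU N) :
    HasDerivAt (fun θ => yf N (exp (u θ))) (((N + 1 : ℝ) : ℂ) * (qu (u θ) * u' θ) * Zf N u θ) θ := by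
  obtain ⟨h1, h2, h3⟩ := h θ
  have hq0 := qu_ne h2
  have he0 := exp_ne_zero (u θ)
  have e1 : HasDerivAt (fun θ => exp (u θ)) (exp (u θ) * u' θ) θ := h1.cexp
  refine (HasDerivAt.comp (h₂ := yf N) (h := fun θ => exp (u θ)) θ
    (hasDerivAt_yf hU (slitPlane_ne_zero h2)) e1).congr_deriv ?_
  rw [Zf]
  push_cast
  field_simp

/-- The bootstrap hypothesis at a point of the path: nonvanishing Hankel determinants, energy at
most `n⁻⁸`, and `g` within `1/4` of its limit `1/2`. -/
def Good (N : ℕ) (u : ℝ → ℂ) (θ : ℝ) : Prop :=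
  ((N : ℂ) + 1) * exp (u θ) ∈ UU N ∧ En N u θ ≤ (1 / ((N : ℝ) + 1) ^ 4) ^ 2 ∧
    ‖gf N (exp (u θ)) - 1 / 2‖ ≤ 1 / 4

set_option maxHeartbeats 1600000 in
/-- Under the bootstrap hypothesis the energy satisfies a Grönwall inequality with constant
independent of `n`: the terms of order `n` cancel by `inner_cancel`, because `qu · u'` is purely
imaginary along a level curve. -/
lemma energy {u u' : ℝ → ℂ} (h : LPath u u') {B : ℝ}
    (hB : ∀ θ ∈ Set.Icc (0 : ℝ) 1, ‖u' θ‖ ≤ B) : ∃ K : ℝ, 1 ≤ K ∧ ∃ n₁ : ℕ, ∀ N ≥ n₁,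
    ∀ θ ∈ Set.Icc (0 : ℝ) 1, Good N u θ →
      (∃ E', HasDerivAt (En N u) E' θ ∧ E' ≤ K * (En N u θ + (1 / ((N : ℝ) + 1) ^ 5) ^ 2)) ∧
      ‖gf N (exp (u θ)) - 1 / 2 - wt (ep N) (exp (u θ))‖ ≤ K * (√(En N u θ) + 1 / ((N : ℝ) + 1) ^ 6) := by
  obtain ⟨P, hP, hb⟩ := h.bounds hB
  obtain ⟨Q, hQ, δ₀, hδ₀, hδ₀1, n₀, hest⟩ := est h.adm
  obtain ⟨m, hm⟩ := exists_nat_ge (P / δ₀)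
  have hPQ : 0 < P * Q := by positivity
  have hPQ1 : Q ≤ P * Q := le_mul_of_one_le_left (by linarith) hP
  refine ⟨2 * P * Q * (P + P ^ 2) + P * Q + 2 * P, ?_, max n₀ m, fun N hN θ hθ hG => ?_⟩
  · have : 0 ≤ 2 * P * Q * (P + P ^ 2) := by positivity
    linarith
  obtain ⟨hU, hE, hg⟩ := hG
  obtain ⟨b1, b2, b3, b4, b5, b6, b7⟩ := hb θ hθ
  obtain ⟨n, hn⟩ : ∃ n : ℝ, n = (N : ℝ) + 1 := ⟨_, rfl⟩
  have hn1 : 1 ≤ n := hn ▸ one_le_n N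
  have hn0 : 0 < n := by linarith
  rw [← hn] at hE ⊢
  obtain ⟨e, he⟩ : ∃ e, e = √(En N u θ) := ⟨_, rfl⟩
  have hEn0 : 0 ≤ En N u θ := by unfold En; positivity
  have he0 : 0 ≤ e := he ▸ Real.sqrt_nonneg _
  have he2 : e ^ 2 = En N u θ := by rw [he, Real.sq_sqrt hEn0]
  have hen : e ≤ 1 / n ^ 4 := by
    rw [he]; exact Real.sqrt_le_iff.2 ⟨by positivity, hE⟩
  have hen1 : n * e ≤ 1 := by
    have : n * e ≤ n * (1 / n ^ 4) := by gcongr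
    refine this.trans ?_
    rw [mul_one_div, div_le_one (by positivity)]
    exact le_self_pow₀ hn1 (by norm_num)
  have hy : ‖yf N (exp (u θ))‖ ≤ e := by
    rw [he]; apply Real.le_sqrt_of_sq_le; unfold En; linarith [sq_nonneg ‖Zf N u θ‖]
  have hz : ‖Zf N u θ‖ ≤ e := by
    rw [he]; apply Real.le_sqrt_of_sq_le; unfold En; linarith [sq_nonneg ‖yf N (exp (u θ))‖]
  have hq0 := qu_ne (h θ).2.1
  have hd : ‖df N (exp (u θ))‖ ≤ P * e := by
    have : df N (exp (u θ)) = qu (u θ) / exp (u θ) * Zf N u θ := by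
      have := exp_ne_zero (u θ)
      rw [Zf]; field_simp
    rw [this, norm_mul]; gcongr
  have hNm : (m : ℝ) ≤ N := by exact_mod_cast (le_max_right _ _).trans hN
  have hMδ : P * e ≤ δ₀ := by
    have h1 : P ≤ n * δ₀ := by
      have : P / δ₀ ≤ n := by rw [hn]; linarith
      rwa [div_le_iff₀ hδ₀] at this
    calc P * e ≤ n * δ₀ * e := by gcongr
      _ = δ₀ * (n * e) := by ring
      _ ≤ δ₀ * 1 := by gcongr
      _ = δ₀ := mul_one _
  have hPe : e ≤ P * e := le_mul_of_one_le_left he0 hP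
  obtain ⟨r1, R, hR, hRb⟩ := hest N ((le_max_left _ _).trans hN) (exp (u θ)) ⟨θ, hθ, rfl⟩ hU (P * e)
    (by positivity) hMδ (hy.trans hPe) hd hg
  rw [← hn] at r1 hRb
  have hRb' : ‖R‖ ≤ Q * ((P + P ^ 2) * e + 1 / n ^ 5) := by
    refine hRb.trans ?_
    have : n * (P * e) ^ 2 ≤ P ^ 2 * e := by
      calc n * (P * e) ^ 2 = P ^ 2 * e * (n * e) := by ring
        _ ≤ P ^ 2 * e * 1 := by gcongr
        _ = _ := mul_one _
    gcongr
    linarith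
  refine ⟨⟨_, (hasDerivAt_yf_path h hU).norm_sq.add (hasDerivAt_Zf h hR).norm_sq, ?_⟩, ?_⟩
  · rw [← mul_add, inner_cancel _ (h θ).2.2]
    have i1 := real_inner_le_norm (Zf N u θ)
      (exp (u θ) ^ 2 * u' θ / qu (u θ) * R + 4 * u' θ / qu (u θ) ^ 2 * Zf N u θ)
    have i2 : ‖exp (u θ) ^ 2 * u' θ / qu (u θ) * R + 4 * u' θ / qu (u θ) ^ 2 * Zf N u θ‖
        ≤ P * (Q * ((P + P ^ 2) * e + 1 / n ^ 5)) + P * e := by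
      refine (norm_add_le _ _).trans ?_
      rw [norm_mul, norm_mul]
      gcongr
    have i3 : ‖Zf N u θ‖ * ‖exp (u θ) ^ 2 * u' θ / qu (u θ) * R + 4 * u' θ / qu (u θ) ^ 2 * Zf N u θ‖
        ≤ e * (P * (Q * ((P + P ^ 2) * e + 1 / n ^ 5)) + P * e) := by gcongr
    obtain ⟨t, ht⟩ : ∃ t, t = 1 / n ^ 5 := ⟨_, rfl⟩
    rw [← he2, ← ht]
    rw [← ht] at i3
    have i4 : P * Q * (2 * e * t) ≤ P * Q * (e ^ 2 + t ^ 2) := by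
      have := two_mul_le_add_sq e t
      gcongr
    have i5 : 0 ≤ (2 * P * Q * (P + P ^ 2) + 2 * P) * t ^ 2 := by positivity
    linarith
  · refine r1.trans ?_
    rw [← he]
    have h1 : (0 : ℝ) ≤ 1 / n ^ 6 := by positivity
    have h2 : Q * (P * e + 1 / n ^ 6) ≤ P * Q * (e + 1 / n ^ 6) := by
      have : Q * (1 / n ^ 6) ≤ P * Q * (1 / n ^ 6) := by gcongr
      linarith
    refine h2.trans ?_
    gcongr
    have : 0 ≤ 2 * P * Q * (P + P ^ 2) := by positivity
    linarith

/-! ### Continuation along the level curve -/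

open Filter Topology in
/-- Continuous induction on `[0, 1]`. -/
lemma cont_induct {P : ℝ → Prop} (h0 : P 0)
    (hopen : ∀ θ ∈ Set.Ico (0 : ℝ) 1, (∀ τ ∈ Set.Icc 0 θ, P τ) → ∀ᶠ τ in 𝓝[>] θ, P τ)
    (hclose : ∀ θ ∈ Set.Ioc (0 : ℝ) 1, (∀ τ ∈ Set.Ico 0 θ, P τ) → P θ) :
    ∀ θ ∈ Set.Icc (0 : ℝ) 1, P θ := by
  have key : Set.Icc (0 : ℝ) 1 ⊆ {θ | ∀ τ ∈ Set.Icc 0 θ, P τ} := by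
    refine IsClosed.Icc_subset_of_forall_mem_nhdsWithin ?_ ?_ ?_
    · refine isClosed_of_closure_subset fun x hx => ?_
      have hx01 : x ∈ Set.Icc (0 : ℝ) 1 := by
        have := closure_mono (Set.inter_subset_right) hx
        rwa [isClosed_Icc.closure_eq] at this
      have hlt : ∀ τ ∈ Set.Ico 0 x, P τ := fun τ hτ => by
        obtain ⟨y, hy, hyS⟩ := mem_closure_iff.1 hx (Set.Ioi τ) isOpen_Ioi hτ.2
        exact hyS.1 τ ⟨hτ.1, le_of_lt hy⟩
      refine ⟨fun τ hτ => ?_, hx01⟩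
      rcases hτ.2.lt_or_eq with h | h
      · exact hlt τ ⟨hτ.1, h⟩
      · subst h
        rcases hτ.1.lt_or_eq with h | h
        · exact hclose τ ⟨h, hx01.2⟩ hlt
        · rw [← h]; exact h0
    · intro τ hτ
      rw [Set.Icc_self] at hτ
      rw [Set.mem_singleton_iff.1 hτ]; exact h0
    · rintro x ⟨hx, hx01⟩
      obtain ⟨y, hy, hsub⟩ := mem_nhdsGT_iff_exists_Ioo_subset.1 (hopen x hx01 hx)
      refine mem_nhdsGT_iff_exists_Ioo_subset.2 ⟨y, hy, fun z hz τ hτ => ?_⟩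
      rcases le_or_gt τ x with h | h
      · exact hx τ ⟨hτ.1, h⟩
      · exact hsub ⟨h, hτ.2.trans_lt hz.2⟩
  exact fun θ hθ => key hθ θ ⟨hθ.1, le_rfl⟩

lemma cont_En {N : ℕ} {u u' : ℝ → ℂ} (h : LPath u u') {θ : ℝ}
    (hU : ((N : ℂ) + 1) * exp (u θ) ∈ UU N) : ContinuousAt (En N u) θ := by
  have hs := slitPlane_ne_zero (h θ).2.1
  have he := h.cont_u.cexp.continuousAt (x := θ)
  have h1 : ContinuousAt (fun θ => yf N (exp (u θ))) θ := (hasDerivAt_yf_path h hU).continuousAt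
  have h2 : ContinuousAt (df N) (exp (u θ)) := by
    have a := (hasDerivAt_pf hU (exp_ne_zero _)).continuousAt
    have b := (hasDerivAt_btd (ε := ep N) hs).continuousAt
    exact a.sub (b.div_const _)
  have h3 : ContinuousAt (fun θ => df N (exp (u θ))) θ :=
    ContinuousAt.comp (g := df N) (f := fun θ => exp (u θ)) h2 he
  have h4 : ContinuousAt (Zf N u) θ := h3.mul (he.div h.cont_q.continuousAt (qu_ne (h θ).2.1))
  exact (h1.norm.pow 2).add (h4.norm.pow 2)

lemma cont_gf {N : ℕ} {u u' : ℝ → ℂ} (h : LPath u u') {θ : ℝ}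
    (hU : ((N : ℂ) + 1) * exp (u θ) ∈ UU N) : ContinuousAt (fun θ => gf N (exp (u θ))) θ :=
  ContinuousAt.comp (g := gf N) (f := fun θ => exp (u θ))
    (hasDerivAt_gf hU (exp_ne_zero _)).continuousAt h.cont_u.cexp.continuousAt

/-- Small energy keeps `β` near `1/4`. -/
lemma bet_near {u u' : ℝ → ℂ} (h : LPath u u') {B : ℝ}
    (hB : ∀ θ ∈ Set.Icc (0 : ℝ) 1, ‖u' θ‖ ≤ B) : ∃ n₁ : ℕ, ∀ N ≥ n₁,
    ∀ θ ∈ Set.Icc (0 : ℝ) 1, En N u θ ≤ (1 / ((N : ℝ) + 1) ^ 4) ^ 2 →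
      ‖bet N (((N : ℂ) + 1) * exp (u θ)) - 1 / 4‖ ≤ 1 / 8 := by
  obtain ⟨P, hP, hb⟩ := h.bounds hB
  obtain ⟨Q, hQ, happ⟩ := approx_bounds h.adm
  obtain ⟨m, hm⟩ := exists_nat_ge (8 * P ^ 2 * (Q + 1))
  refine ⟨m, fun N hN θ hθ hE => ?_⟩
  have hNm : (m : ℝ) ≤ N := by exact_mod_cast hN
  obtain ⟨b1, b2, b3, -⟩ := hb θ hθ
  obtain ⟨f1, -⟩ := happ N (exp (u θ)) ⟨θ, hθ, rfl⟩
  obtain ⟨n, hn⟩ : ∃ n : ℝ, n = (N : ℝ) + 1 := ⟨_, rfl⟩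
  have hn1 : 1 ≤ n := hn ▸ one_le_n N
  rw [← hn] at f1 hE
  have hy : ‖yf N (exp (u θ))‖ ≤ 1 / n := by
    have h1 : ‖yf N (exp (u θ))‖ ^ 2 ≤ (1 / n ^ 4) ^ 2 := by
      unfold En at hE; linarith [sq_nonneg ‖Zf N u θ‖]
    refine ((le_abs_self _).trans (abs_le_of_sq_le_sq h1 (by positivity))).trans ?_
    gcongr
    exact le_self_pow₀ hn1 (by norm_num)
  have he : bet N (((N : ℂ) + 1) * exp (u θ)) - 1 / 4
      = (exp (u θ))⁻¹ ^ 2 * (yf N (exp (u θ)) + (bt (ep N) (exp (u θ)) - exp (u θ) ^ 2 / 4)) := by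
    have := exp_ne_zero (u θ)
    rw [yf, bf]; field_simp; ring
  rw [he, norm_mul, norm_pow]
  have : ‖(exp (u θ))⁻¹‖ ^ 2 * ‖yf N (exp (u θ)) + (bt (ep N) (exp (u θ)) - exp (u θ) ^ 2 / 4)‖
      ≤ P ^ 2 * (1 / n + Q / n) := by
    gcongr
    exact (norm_add_le _ _).trans (add_le_add hy f1)
  refine this.trans ?_
  rw [← add_div, mul_div_assoc', div_le_iff₀ (by linarith)]
  have : 8 * P ^ 2 * (Q + 1) ≤ n := by rw [hn]; linarith
  linarith

open Filter Topology in
/-- Nonvanishing of the Hankel determinants passes to the end of a good interval: the logarithmic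
derivative of `D_{N+1}` is bounded there, and `D_{N+2} D_N = β D_{N+1}²` with `β` near `1/4`. -/
lemma UU_close {N : ℕ} {u u' : ℝ → ℂ} (h : LPath u u') {B : ℝ}
    (hB : ∀ θ ∈ Set.Icc (0 : ℝ) 1, ‖u' θ‖ ≤ B)
    (hnear : ∀ θ ∈ Set.Icc (0 : ℝ) 1, En N u θ ≤ (1 / ((N : ℝ) + 1) ^ 4) ^ 2 →
      ‖bet N (((N : ℂ) + 1) * exp (u θ)) - 1 / 4‖ ≤ 1 / 8) {θ : ℝ} (hθ : θ ∈ Set.Ioc (0 : ℝ) 1)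
    (hG : ∀ τ ∈ Set.Ico 0 θ, Good N u τ) : ((N : ℂ) + 1) * exp (u θ) ∈ UU N := by
  obtain ⟨P, hP, hb⟩ := h.bounds hB
  obtain ⟨n, hn⟩ : ∃ n : ℝ, n = (N : ℝ) + 1 := ⟨_, rfl⟩
  have hn1 : 1 ≤ n := hn ▸ one_le_n N
  obtain ⟨t, ht⟩ : ∃ t : ℝ → ℂ, t = fun τ => ((N : ℂ) + 1) * exp (u τ) := ⟨_, rfl⟩
  have ht_at : ∀ τ, t τ = ((N : ℂ) + 1) * exp (u τ) := fun τ => by rw [ht]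
  have htc : Continuous t := by rw [ht]; exact continuous_const.mul h.cont_u.cexp
  have hDc : ∀ k, Continuous fun τ => Dk k (t τ) := fun k => (differentiable_Dk k).continuous.comp htc
  have hd : ∀ τ ∈ Set.Ico 0 θ, HasDerivAt (fun τ => Dk (N + 1) (t τ))
      (-Sn N (t τ) * Dk (N + 1) (t τ) * (((N : ℂ) + 1) * (exp (u τ) * u' τ))) τ := fun τ hτ => by
    have e1 : HasDerivAt t (((N : ℂ) + 1) * (exp (u τ) * u' τ)) τ := by
      rw [ht]; exact (h τ).1.cexp.const_mul _
    have hU := (hG τ hτ).1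
    rw [← ht_at] at hU
    exact HasDerivAt.comp (h₂ := Dk (N + 1)) (h := t) τ (hasDerivAt_Dk hU.2.1) e1
  have hS : ∀ τ ∈ Set.Ico 0 θ, ‖Sn N (t τ)‖ * ‖((N : ℂ) + 1) * (exp (u τ) * u' τ)‖
      ≤ 2 * n ^ 2 * P ^ 3 := fun τ hτ => by
    have hτ1 : τ ∈ Set.Icc (0 : ℝ) 1 := ⟨hτ.1, hτ.2.le.trans hθ.2⟩
    obtain ⟨b1, b2, -⟩ := hb τ hτ1
    obtain ⟨g1, g2, g3⟩ := hG τ hτ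
    have k1 := hnear τ hτ1 g2
    have e : Sn N (t τ) = t τ * ((bet N (t τ) - 1 / 4) - (gf N (exp (u τ)) - 1 / 2) - 1 / 4) := by
      have := exp_ne_zero (u τ)
      have := n_ne N
      rw [gf, ← ht_at, sig]
      have : t τ ≠ 0 := by rw [ht_at]; positivity
      field_simp; ring
    have k2 : ‖(bet N (t τ) - 1 / 4) - (gf N (exp (u τ)) - 1 / 2) - 1 / 4‖ ≤ 2 := by
      rw [← ht_at] at k1
      refine (norm_sub_le _ _).trans ?_
      have := norm_sub_le (bet N (t τ) - 1 / 4) (gf N (exp (u τ)) - 1 / 2)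
      norm_num at this k1 g3 ⊢
      linarith
    have k3 : ‖t τ‖ ≤ n * P := by rw [ht_at, norm_mul, norm_n, ← hn]; gcongr
    rw [e, norm_mul, norm_mul, norm_mul, norm_n, ← hn]
    calc _ ≤ n * P * 2 * (n * (P * P)) := by gcongr
      _ = _ := by ring
  obtain ⟨G, hGdef⟩ : ∃ G, G = 2 * n ^ 2 * P ^ 3 := ⟨_, rfl⟩
  have hG0 : 0 ≤ G := by rw [hGdef]; positivity
  obtain ⟨f, hf⟩ : ∃ f : ℝ → ℂ, f = fun τ => Dk (N + 1) (t τ) := ⟨_, rfl⟩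
  obtain ⟨c, hc⟩ : ∃ c, c = ‖f 0‖ ^ 2 * Real.exp (-(2 * G)) := ⟨_, rfl⟩
  have hc0 : 0 < c := by
    have hU := (hG 0 ⟨le_rfl, hθ.1⟩).1
    have : 0 < ‖f 0‖ := by rw [hf, norm_pos_iff]; simp only [ht_at]; exact hU.2.1
    rw [hc]; positivity
  have hlow : ∀ τ ∈ Set.Ico 0 θ, c ≤ ‖f τ‖ ^ 2 := fun τ hτ => by
    have := gron_lower (f := fun τ => ‖f τ‖ ^ 2)
      (f' := fun τ => 2 * inner ℝ (f τ) (-Sn N (t τ) * f τ * (((N : ℂ) + 1) * (exp (u τ) * u' τ))))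
      (k := -(2 * G)) hτ.1
      (fun x hx => by
        have := (hd x ⟨hx.1, hx.2.trans_lt hτ.2⟩).norm_sq
        rw [hf]; exact this)
      (fun x hx => by
        have h1 := hS x ⟨hx.1, hx.2.trans_lt hτ.2⟩
        have h2 := abs_le.1 (abs_real_inner_le_norm (f x)
          (-Sn N (t x) * f x * (((N : ℂ) + 1) * (exp (u x) * u' x))))
        have h3 : ‖f x‖ * ‖-Sn N (t x) * f x * (((N : ℂ) + 1) * (exp (u x) * u' x))‖ ≤ G * ‖f x‖ ^ 2 := by
          rw [norm_mul, norm_mul, norm_neg]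
          calc _ = ‖Sn N (t x)‖ * ‖((N : ℂ) + 1) * (exp (u x) * u' x)‖ * ‖f x‖ ^ 2 := by ring
            _ ≤ G * ‖f x‖ ^ 2 := by rw [hGdef]; gcongr
        linarith [h2.1])
    refine le_trans ?_ this
    rw [hc]
    have : -(2 * G) ≤ -(2 * G) * (τ - 0) := by
      have : τ ≤ 1 := hτ.2.le.trans hθ.2
      nlinarith
    gcongr
  have hev : ∀ᶠ τ in 𝓝[<] θ, τ ∈ Set.Ico 0 θ := by
    filter_upwards [Ioo_mem_nhdsLT hθ.1] with τ hτ using ⟨hτ.1.le, hτ.2⟩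
  have hfc : Continuous f := by rw [hf]; exact hDc _
  have hcθ : c ≤ ‖f θ‖ ^ 2 :=
    ge_of_tendsto ((hfc.norm.pow 2).continuousAt.tendsto.mono_left nhdsWithin_le_nhds)
      (hev.mono hlow)
  have hprod : c / 8 ≤ ‖Dk (N + 2) (t θ) * Dk N (t θ)‖ := by
    refine ge_of_tendsto ((((hDc (N + 2)).mul (hDc N)).norm).continuousAt.tendsto.mono_left
      nhdsWithin_le_nhds) (hev.mono fun τ hτ => ?_)
    have hτ1 : τ ∈ Set.Icc (0 : ℝ) 1 := ⟨hτ.1, hτ.2.le.trans hθ.2⟩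
    obtain ⟨g1, g2, -⟩ := hG τ hτ
    have k1 := hnear τ hτ1 g2
    rw [← ht_at] at k1 g1
    have hb8 : 1 / 8 ≤ ‖bet N (t τ)‖ := by
      have h1 := norm_sub_norm_le (1 / 4 : ℂ) (bet N (t τ))
      rw [norm_sub_rev] at h1
      norm_num at h1 k1 ⊢
      linarith
    have h2 := hlow τ hτ
    have h3 : Dk (N + 2) (t τ) * Dk N (t τ) = bet N (t τ) * f τ ^ 2 := by
      have : f τ ≠ 0 := by rw [hf]; exact g1.2.1
      rw [bet_eq g1]; rw [hf] at this ⊢; field_simp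
    show c / 8 ≤ ‖Dk (N + 2) (t τ) * Dk N (t τ)‖
    rw [h3, norm_mul, norm_pow]
    calc c / 8 = 1 / 8 * c := by ring
      _ ≤ ‖bet N (t τ)‖ * ‖f τ‖ ^ 2 := by gcongr
  have hp0 : Dk (N + 2) (t θ) * Dk N (t θ) ≠ 0 := norm_pos_iff.1 (by linarith)
  rw [← ht_at]
  refine ⟨right_ne_zero_of_mul hp0, ?_, left_ne_zero_of_mul hp0⟩
  intro h0
  have : f θ = 0 := by rw [hf]; exact h0
  rw [this] at hcθ
  norm_num at hcθ
  linarith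

/-- Grönwall's inequality with the inhomogeneity `K t²`. -/
lemma gron_apriori {f : ℝ → ℝ} {K t A θ : ℝ} (hK : 0 ≤ K) (hA : 0 ≤ A)
    (hθ : θ ∈ Set.Icc (0 : ℝ) 1)
    (hd : ∀ τ ∈ Set.Icc 0 θ, ∃ E', HasDerivAt f E' τ ∧ E' ≤ K * (f τ + t ^ 2))
    (h0 : f 0 ≤ A * t ^ 2) : f θ ≤ (A + 1) * Real.exp K * t ^ 2 := by
  have hd' : ∀ τ, ∃ E', τ ∈ Set.Icc 0 θ → HasDerivAt f E' τ ∧ E' ≤ K * (f τ + t ^ 2) := fun τ => by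
    by_cases h : τ ∈ Set.Icc 0 θ
    · obtain ⟨E', h'⟩ := hd τ h
      exact ⟨E', fun _ => h'⟩
    · exact ⟨0, fun h' => absurd h' h⟩
  choose E' hE' using hd'
  have h1 := gron_upper (f := fun τ => f τ + t ^ 2) (f' := E') (k := K) hθ.1
    (fun x hx => (hE' x hx).1.add_const _) (fun x hx => (hE' x hx).2)
  have h2 : Real.exp (K * (θ - 0)) ≤ Real.exp K := by
    apply Real.exp_le_exp.2
    have := hθ.2
    nlinarith
  calc f θ ≤ f θ + t ^ 2 := by linarith [sq_nonneg t]
    _ ≤ (f 0 + t ^ 2) * Real.exp (K * (θ - 0)) := h1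
    _ ≤ ((A + 1) * t ^ 2) * Real.exp (K * (θ - 0)) := by gcongr; linarith
    _ ≤ ((A + 1) * t ^ 2) * Real.exp K := by gcongr
    _ = _ := by ring

/-- Elementary comparison: a constant is eventually absorbed by one power of `n`. -/
lemma absorb {n A : ℝ} (hn : 1 ≤ n) (hA : A < n) : A * (1 / n ^ 5) ^ 2 < (1 / n ^ 4) ^ 2 := by
  have hn0 : 0 < n := by linarith
  have e : (1 / n ^ 4) ^ 2 = n ^ 2 * (1 / n ^ 5) ^ 2 := by field_simp
  rw [e]
  have : A < n ^ 2 := by nlinarith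
  gcongr

/-- The bootstrap hypothesis at the real starting point, from `real_sharp`. -/
lemma Good_zero {u u' : ℝ → ℂ} (h : LPath u u') {B : ℝ}
    (hB : ∀ θ ∈ Set.Icc (0 : ℝ) 1, ‖u' θ‖ ≤ B) {s1 : ℝ} (hs1 : 0 < s1) (hs2 : s1 < 2)
    (hu0 : exp (u 0) = s1) : ∃ A : ℝ, 0 ≤ A ∧ ∃ n₁ : ℕ, ∀ N ≥ n₁,
      Good N u 0 ∧ En N u 0 ≤ A * (1 / ((N : ℝ) + 1) ^ 5) ^ 2 := by
  obtain ⟨P, hP, hb⟩ := h.bounds hB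
  obtain ⟨C, hC, n0, hC'⟩ := real_sharp hs1 hs2
  obtain ⟨m, hm⟩ := exists_nat_ge (P ^ 2 * C)
  refine ⟨P ^ 2 * C, by positivity, max n0 m, fun N hN => ?_⟩
  obtain ⟨c1, c2⟩ := hC' N ((le_max_left _ _).trans hN)
  have hNm : (m : ℝ) ≤ N := by exact_mod_cast (le_max_right _ _).trans hN
  obtain ⟨-, -, -, -, b5, -⟩ := hb 0 ⟨le_rfl, zero_le_one⟩
  obtain ⟨n, hn⟩ : ∃ n : ℝ, n = (N : ℝ) + 1 := ⟨_, rfl⟩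
  have hn1 : 1 ≤ n := hn ▸ one_le_n N
  rw [← hn] at c1
  have hE : En N u 0 ≤ P ^ 2 * C * (1 / n ^ 5) ^ 2 := by
    unfold En Zf
    rw [norm_mul]
    rw [hu0] at b5 ⊢
    have e1 : (‖df N s1‖ * ‖(s1 : ℂ) / qu (u 0)‖) ^ 2 ≤ (‖df N s1‖ * P) ^ 2 := by gcongr
    have e2 : ‖yf N s1‖ ^ 2 ≤ P ^ 2 * ‖yf N s1‖ ^ 2 := le_mul_of_one_le_left (by positivity) (one_le_pow₀ hP)
    calc _ ≤ P ^ 2 * (‖yf N s1‖ ^ 2 + ‖df N s1‖ ^ 2) := by nlinarith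
      _ ≤ P ^ 2 * (C * (1 / n ^ 6) ^ 2) := by gcongr
      _ ≤ P ^ 2 * (C * (1 / n ^ 5) ^ 2) := by gcongr <;> norm_num
      _ = _ := by ring
  rw [Good, ← hn]
  refine ⟨⟨?_, ?_, ?_⟩, hE⟩
  · rw [hu0, scale_real]; exact real_mem_UU N _
  · exact hE.trans (absorb hn1 (by rw [hn]; linarith)).le
  · rw [hu0]; exact c2.trans (by norm_num)

open Filter Topology in
/-- Bootstrap along the level path: the energy stays of size `n⁻¹⁰`. -/
lemma path_est {u u' : ℝ → ℂ} (h : LPath u u') {B : ℝ}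
    (hB : ∀ θ ∈ Set.Icc (0 : ℝ) 1, ‖u' θ‖ ≤ B) {s1 : ℝ} (hs1 : 0 < s1) (hs2 : s1 < 2)
    (hu0 : exp (u 0) = s1) : ∃ C : ℝ, 0 < C ∧ ∃ n₁ : ℕ, ∀ N ≥ n₁,
      ((N : ℂ) + 1) * exp (u 1) ∈ UU N ∧ En N u 1 ≤ (C / ((N : ℝ) + 1) ^ 5) ^ 2 ∧
      ‖gf N (exp (u 1)) - 1 / 2 - wt (ep N) (exp (u 1))‖ ≤ C / ((N : ℝ) + 1) ^ 5 := by
  obtain ⟨A, hA, m1, hz⟩ := Good_zero h hB hs1 hs2 hu0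
  obtain ⟨K, hK, m2, hen⟩ := energy h hB
  obtain ⟨Q, hQ, happ⟩ := approx_bounds h.adm
  obtain ⟨m3, hnear⟩ := bet_near h hB
  obtain ⟨C1, hC1⟩ : ∃ C1, C1 = √((A + 1) * Real.exp K) := ⟨_, rfl⟩
  have hC1s : C1 ^ 2 = (A + 1) * Real.exp K := by rw [hC1, Real.sq_sqrt (by positivity)]
  have hC10 : 0 ≤ C1 := by rw [hC1]; positivity
  obtain ⟨m4, hm4⟩ := exists_nat_ge (C1 ^ 2)
  obtain ⟨m5, hm5⟩ := exists_nat_ge (4 * (Q + K * (C1 + 1)))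
  refine ⟨K * (C1 + 1), by positivity, m1 + m2 + m3 + m4 + m5, fun N hN => ?_⟩
  have hz := hz N (by omega)
  have hen := hen N (by omega)
  have hnear := hnear N (by omega)
  have hm4 : C1 ^ 2 ≤ N := hm4.trans (by exact_mod_cast (by omega : m4 ≤ N))
  have hm5 : 4 * (Q + K * (C1 + 1)) ≤ N := hm5.trans (by exact_mod_cast (by omega : m5 ≤ N))
  have happ := happ N
  unfold Good at hen hz
  have hcl := fun θ hθ => UU_close (θ := θ) h hB hnear hθ
  unfold Good at hcl
  obtain ⟨n, hn⟩ : ∃ n : ℝ, n = (N : ℝ) + 1 := ⟨_, rfl⟩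
  have hn1 : 1 ≤ n := hn ▸ one_le_n N
  have hn0 : 0 < n := by linarith
  rw [← hn] at hen hz happ hcl ⊢
  -- On a good interval the bootstrap bounds hold with strict inequality at the right end.
  have strict : ∀ θ ∈ Set.Icc (0 : ℝ) 1, (∀ τ ∈ Set.Icc 0 θ, ((N : ℂ) + 1) * exp (u τ) ∈ UU N ∧
      En N u τ ≤ (1 / n ^ 4) ^ 2 ∧ ‖gf N (exp (u τ)) - 1 / 2‖ ≤ 1 / 4) →
      En N u θ ≤ (C1 / n ^ 5) ^ 2 ∧
      ‖gf N (exp (u θ)) - 1 / 2 - wt (ep N) (exp (u θ))‖ ≤ K * (C1 + 1) / n ^ 5 ∧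
      En N u θ < (1 / n ^ 4) ^ 2 ∧ ‖gf N (exp (u θ)) - 1 / 2‖ < 1 / 4 := fun θ hθ hg => by
    have k1 : En N u θ ≤ C1 ^ 2 * (1 / n ^ 5) ^ 2 := by
      rw [hC1s]
      exact gron_apriori (by linarith) hA hθ
        (fun τ hτ => (hen τ ⟨hτ.1, hτ.2.trans hθ.2⟩ (hg τ hτ)).1) hz.2
    have k2 : En N u θ ≤ (C1 / n ^ 5) ^ 2 := by
      refine k1.trans_eq ?_
      rw [← mul_pow, mul_one_div]
    have k3 : √(En N u θ) ≤ C1 / n ^ 5 := by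
      rw [← Real.sqrt_sq (by positivity : 0 ≤ C1 / n ^ 5)]
      exact Real.sqrt_le_sqrt k2
    have k4 := (hen θ hθ (hg θ ⟨hθ.1, le_rfl⟩)).2
    have k5 : (1 : ℝ) / n ^ 6 ≤ 1 / n ^ 5 := by gcongr <;> norm_num
    have k6 : ‖gf N (exp (u θ)) - 1 / 2 - wt (ep N) (exp (u θ))‖ ≤ K * (C1 + 1) / n ^ 5 := by
      refine k4.trans ?_
      calc _ ≤ K * (C1 / n ^ 5 + 1 / n ^ 5) := by gcongr
        _ = _ := by ring
    refine ⟨k2, k6, k1.trans_lt (absorb hn1 (by rw [hn]; linarith)), ?_⟩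
    have k7 := (happ (exp (u θ)) ⟨θ, hθ, rfl⟩).2.2.1
    have k8 : K * (C1 + 1) / n ^ 5 ≤ K * (C1 + 1) / n := by
      gcongr
      exact le_self_pow₀ hn1 (by norm_num)
    have k9 : ‖gf N (exp (u θ)) - 1 / 2‖ ≤ (Q + K * (C1 + 1)) / n := by
      rw [add_div]
      have := norm_add_le (gf N (exp (u θ)) - 1 / 2 - wt (ep N) (exp (u θ))) (wt (ep N) (exp (u θ)))
      rw [sub_add_cancel] at this
      linarith
    refine k9.trans_lt ?_
    rw [div_lt_iff₀ hn0]
    linarith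
  have all : ∀ θ ∈ Set.Icc (0 : ℝ) 1, ((N : ℂ) + 1) * exp (u θ) ∈ UU N ∧
      En N u θ ≤ (1 / n ^ 4) ^ 2 ∧ ‖gf N (exp (u θ)) - 1 / 2‖ ≤ 1 / 4 := by
    refine cont_induct hz.1 (fun θ hθ hg => ?_) (fun θ hθ hg => ?_)
    · obtain ⟨-, -, s3, s4⟩ := strict θ ⟨hθ.1, hθ.2.le⟩ hg
      have hU := (hg θ ⟨hθ.1, le_rfl⟩).1
      have c1 : ∀ᶠ τ in 𝓝 θ, ((N : ℂ) + 1) * exp (u τ) ∈ UU N :=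
        (continuous_const.mul h.cont_u.cexp).continuousAt.eventually_mem ((isOpen_UU N).mem_nhds hU)
      have c2 := (cont_En h hU).eventually_lt continuousAt_const s3
      have c3 := ((cont_gf h hU).sub continuousAt_const).norm.eventually_lt continuousAt_const s4
      refine Filter.Eventually.filter_mono nhdsWithin_le_nhds ?_
      filter_upwards [c1, c2, c3] with τ t1 t2 t3 using ⟨t1, t2.le, t3.le⟩
    · have hU := hcl θ hθ hg
      have hev : ∀ᶠ τ in 𝓝[<] θ, τ ∈ Set.Ico 0 θ := by
        filter_upwards [Ioo_mem_nhdsLT hθ.1] with τ hτ using ⟨hτ.1.le, hτ.2⟩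
      refine ⟨hU, ?_, ?_⟩
      · exact le_of_tendsto ((cont_En h hU).tendsto.mono_left nhdsWithin_le_nhds)
          (hev.mono fun τ hτ => (hg τ hτ).2.1)
      · exact le_of_tendsto (((cont_gf h hU).sub continuousAt_const).norm.tendsto.mono_left
          nhdsWithin_le_nhds) (hev.mono fun τ hτ => (hg τ hτ).2.2)
  have h1 : (1 : ℝ) ∈ Set.Icc (0 : ℝ) 1 := ⟨zero_le_one, le_rfl⟩
  obtain ⟨s1, s2, -, -⟩ := strict 1 h1 fun τ hτ => all τ hτ
  refine ⟨(all 1 h1).1, s1.trans ?_, s2⟩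
  gcongr
  nlinarith

/-! ### Asymptotics of the recurrence coefficients -/

/-- The remainder in the formula for `α`, after a factor `n⁻³` has been extracted. -/
noncomputable def remA (s h y d g : ℂ) : ℂ :=
  h * (2 * b2 s - s ^ 2 * w2 s) + (b1 s - s * b1d s / 2) + h ^ 2 * (b2 s - s * b2d s / 2)
    + 2 * y - s ^ 2 * g + y * h - s * d / 2
    - (h * b1 s + h ^ 3 * b2 s + h ^ 2 * y) * (2 * s ^ 2 / (4 - s ^ 2) ^ 2)

lemma remA_bound (s : ℂ) (R : ℝ) : ∃ M : ℝ, 0 ≤ M ∧ ∀ h y d g : ℂ, ‖h‖ ≤ 1 → ‖y‖ ≤ R → ‖d‖ ≤ R →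
    ‖g‖ ≤ R → ‖remA s h y d g‖ ≤ M := by
  obtain ⟨M, hM⟩ := ((isCompact_closedBall (0 : ℂ) 1).prod ((isCompact_closedBall (0 : ℂ) R).prod
    ((isCompact_closedBall (0 : ℂ) R).prod (isCompact_closedBall (0 : ℂ) R)))).exists_bound_of_continuousOn
    (f := fun z : ℂ × ℂ × ℂ × ℂ => remA s z.1 z.2.1 z.2.2.1 z.2.2.2)
    (Continuous.continuousOn (by unfold remA; fun_prop))
  refine ⟨max M 0, le_max_right _ _, fun h y d g hh hy hd hg => ?_⟩
  refine (hM (h, y, d, g) ?_).trans (le_max_left _ _)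
  simp only [Set.mem_prod, mem_closedBall_zero_iff]
  exact ⟨hh, hy, hd, hg⟩

/-- Exact formula for the deviation of `α` from its leading term, in terms of the rescaled errors. -/
lemma alpha_remainder {N : ℕ} {s : ℂ} (hU : ((N : ℂ) + 1) * s ∈ UU N) (hs0 : s ≠ 0)
    (hD : 4 - s ^ 2 ≠ 0) :
    s * bf N s * (alk (N + 1) (((N : ℂ) + 1) * s) - 2 * s / ((s ^ 2 - 4) ^ 2 * ((N : ℂ) + 1) ^ 2))
      = (1 / ((N : ℂ) + 1)) ^ 3 * remA s (1 / ((N : ℂ) + 1)) (((N : ℂ) + 1) ^ 3 * yf N s)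
        (((N : ℂ) + 1) ^ 3 * df N s) (((N : ℂ) + 1) ^ 3 * (gf N s - 1 / 2 - wt (ep N) s)) := by
  have hn := n_ne N
  have hD' : s ^ 2 - 4 ≠ 0 := fun h => hD (by linear_combination -h)
  rw [mul_sub, alk_scaled hU hs0]
  obtain ⟨y, hy⟩ : ∃ y, y = yf N s := ⟨_, rfl⟩
  obtain ⟨d, hd⟩ : ∃ d, d = df N s := ⟨_, rfl⟩
  obtain ⟨g, hg⟩ : ∃ g, g = gf N s - 1 / 2 - wt (ep N) s := ⟨_, rfl⟩
  have e1 : bf N s = bt (ep N) s + y := by rw [hy, yf]; ring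
  have e2 : pf N s = btd (ep N) s / ((N : ℂ) + 1) + d := by rw [hd, df]; ring
  have e3 : gf N s = 1 / 2 + wt (ep N) s + g := by rw [hg]; ring
  rw [← hy, ← hd, ← hg, e1, e2, e3]
  have e4 : (s ^ 2 - 4) ^ 2 = (4 - s ^ 2) ^ 2 := by ring
  rw [e4]
  unfold remA bt btd wt ep
  generalize b2 s = B2
  generalize b2d s = B2d
  generalize w2 s = W2
  generalize b1d s = B1d
  have k2 : b1 s = s ^ 2 * w1 s / 2 + s ^ 4 / (4 * (4 - s ^ 2) ^ 2) := by
    unfold b1 w1; field_simp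
  rw [k2]
  generalize w1 s = W1
  generalize (N : ℂ) + 1 = n at *
  field_simp
  ring

/-- Exact formula for the deviation of `β` from its first two terms. -/
lemma beta_remainder {N : ℕ} {s : ℂ} (hs0 : s ≠ 0) (hD : 4 - s ^ 2 ≠ 0) :
    bet N (((N : ℂ) + 1) * s) - 1 / 4 - (s ^ 2 + 4) / (4 * (s ^ 2 - 4) ^ 2 * ((N : ℂ) + 1) ^ 2)
      = (1 / ((N : ℂ) + 1)) ^ 4 * ((b2 s + ((N : ℂ) + 1) ^ 4 * yf N s) / s ^ 2) := by
  have hn := n_ne N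
  have hD' : s ^ 2 - 4 ≠ 0 := fun h => hD (by linear_combination -h)
  have e4 : (s ^ 2 - 4) ^ 2 = (4 - s ^ 2) ^ 2 := by ring
  rw [yf, bf, bt, b1, ep, e4]
  generalize b2 s = B2
  field_simp
  ring

/-- The error bounds at an arbitrary nonzero point of the genus-zero region. -/
lemma level_est {s : ℂ} (hs : s ∈ G0) (hs0 : s ≠ 0) : ∃ R : ℝ, 0 < R ∧ ∃ n₁ : ℕ, ∀ N ≥ n₁,
    ((N : ℂ) + 1) * s ∈ UU N ∧ ‖yf N s‖ ≤ R / ((N : ℝ) + 1) ^ 5 ∧ ‖df N s‖ ≤ R / ((N : ℝ) + 1) ^ 5 ∧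
      ‖gf N s - 1 / 2 - wt (ep N) s‖ ≤ R / ((N : ℝ) + 1) ^ 5 := by
  obtain ⟨u, u', h, hu1, ⟨s1, h1, h2, hu0⟩, B, hB⟩ := level_path hs hs0
  have h : LPath u u' := h
  obtain ⟨C, hC, m, hm⟩ := path_est h hB h1 h2 hu0
  obtain ⟨P, hP, hb⟩ := h.bounds hB
  obtain ⟨-, -, -, b4, -⟩ := hb 1 ⟨zero_le_one, le_rfl⟩
  refine ⟨P * C, by positivity, m, fun N hN => ?_⟩
  obtain ⟨c1, c2, c3⟩ := hm N hN
  have hCP : C / ((N : ℝ) + 1) ^ 5 ≤ P * C / ((N : ℝ) + 1) ^ 5 := by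
    gcongr; nlinarith
  have hy : ‖yf N (exp (u 1))‖ ≤ C / ((N : ℝ) + 1) ^ 5 := by
    refine (le_abs_self _).trans (abs_le_of_sq_le_sq ?_ (by positivity))
    unfold En at c2; linarith [sq_nonneg ‖Zf N u 1‖]
  have hZ : ‖Zf N u 1‖ ≤ C / ((N : ℝ) + 1) ^ 5 := by
    refine (le_abs_self _).trans (abs_le_of_sq_le_sq ?_ (by positivity))
    unfold En at c2; linarith [sq_nonneg ‖yf N (exp (u 1))‖]
  have hd : df N (exp (u 1)) = qu (u 1) / exp (u 1) * Zf N u 1 := by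
    have := exp_ne_zero (u 1)
    have := qu_ne (h 1).2.1
    unfold Zf; field_simp
  rw [← hu1]
  refine ⟨c1, hy.trans hCP, ?_, c3.trans hCP⟩
  rw [hd, norm_mul, mul_div_assoc]
  gcongr

/-- The asymptotics of the recurrence coefficients, for `s ≠ 0`. -/
lemma asym_ne {s : ℂ} (hs : s ∈ G0) (hs0 : s ≠ 0) : ∃ C : ℝ, 0 < C ∧ ∃ n₁ : ℕ, ∀ N ≥ n₁,
    ((N : ℂ) + 1) * s ∈ UU N ∧
    ‖alk (N + 1) (((N : ℂ) + 1) * s) - 2 * s / ((s ^ 2 - 4) ^ 2 * ((N : ℂ) + 1) ^ 2)‖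
      ≤ C / ((N : ℝ) + 1) ^ 3 ∧
    ‖bet N (((N : ℂ) + 1) * s) - 1 / 4 - (s ^ 2 + 4) / (4 * (s ^ 2 - 4) ^ 2 * ((N : ℂ) + 1) ^ 2)‖
      ≤ C / ((N : ℝ) + 1) ^ 4 := by
  obtain ⟨R, hR, m1, hm⟩ := level_est hs hs0
  have hD : 4 - s ^ 2 ≠ 0 := slitPlane_ne_zero (G0_sub hs).1
  obtain ⟨M, hM0, hM⟩ := remA_bound s R
  have hs' : 0 < ‖s‖ := norm_pos_iff.2 hs0
  obtain ⟨M2, hM2⟩ : ∃ M2, M2 = (‖b2 s‖ + R) / ‖s‖ ^ 2 := ⟨_, rfl⟩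
  have hM20 : 0 ≤ M2 := by rw [hM2]; positivity
  obtain ⟨m2, hm2⟩ := exists_nat_ge
    (8 * (M2 + ‖(s ^ 2 + 4) / (4 * (s ^ 2 - 4) ^ 2)‖))
  refine ⟨8 * M / ‖s‖ ^ 3 + M2 + 1, by positivity, m1 + m2, fun N hN => ?_⟩
  obtain ⟨hU, hy, hd, hg⟩ := hm N (by omega)
  have hm2 := hm2.trans (show (m2 : ℝ) ≤ N by exact_mod_cast (by omega : m2 ≤ N))
  have ea := alpha_remainder hU hs0 hD
  have eb := beta_remainder (N := N) hs0 hD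
  have hnn := norm_n N
  obtain ⟨n, hn⟩ : ∃ n : ℝ, n = (N : ℝ) + 1 := ⟨_, rfl⟩
  have hn1 : 1 ≤ n := hn ▸ one_le_n N
  have hn0 : 0 < n := by linarith
  rw [← hn] at hy hd hg hnn ⊢
  have up : ∀ {z : ℂ} {k : ℕ}, k ≤ 5 → ‖z‖ ≤ R / n ^ 5 → ‖((N : ℂ) + 1) ^ k * z‖ ≤ R := by
    intro z k hk hz
    rw [norm_mul, norm_pow, hnn]
    calc n ^ k * ‖z‖ ≤ n ^ 5 * (R / n ^ 5) := by gcongr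
      _ = R := by field_simp
  have hB : ‖bet N (((N : ℂ) + 1) * s) - 1 / 4
      - (s ^ 2 + 4) / (4 * (s ^ 2 - 4) ^ 2 * ((N : ℂ) + 1) ^ 2)‖ ≤ M2 / n ^ 4 := by
    rw [eb, norm_mul, norm_pow, norm_div, norm_div, hnn, norm_pow, norm_one, hM2]
    calc _ ≤ (1 / n) ^ 4 * ((‖b2 s‖ + R) / ‖s‖ ^ 2) := by
          gcongr
          exact (norm_add_le _ _).trans (by gcongr; exact up (by norm_num) hy)
      _ = _ := by field_simp
  have hb8 : 1 / 8 ≤ ‖bet N (((N : ℂ) + 1) * s)‖ := by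
    obtain ⟨b, hb⟩ : ∃ b, b = bet N (((N : ℂ) + 1) * s) := ⟨_, rfl⟩
    obtain ⟨c, hc⟩ : ∃ c, c = (s ^ 2 + 4) / (4 * (s ^ 2 - 4) ^ 2) := ⟨_, rfl⟩
    have hq : (s ^ 2 + 4) / (4 * (s ^ 2 - 4) ^ 2 * ((N : ℂ) + 1) ^ 2) = c / ((N : ℂ) + 1) ^ 2 := by
      rw [hc, div_div]
    rw [hq, ← hb] at hB
    rw [← hc] at hm2
    rw [← hb]
    have l1 : M2 / n ^ 4 ≤ M2 / n := by gcongr; exact le_self_pow₀ hn1 (by norm_num)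
    have l2 : ‖c / ((N : ℂ) + 1) ^ 2‖ ≤ ‖c‖ / n := by
      rw [norm_div, norm_pow, hnn]; gcongr; exact le_self_pow₀ hn1 (by norm_num)
    have l3 : M2 / n + ‖c‖ / n ≤ 1 / 8 := by
      rw [← add_div, div_le_iff₀ hn0]; linarith
    have l4 : (1 / 4 : ℂ) = b - (b - 1 / 4 - c / ((N : ℂ) + 1) ^ 2) - c / ((N : ℂ) + 1) ^ 2 := by ring
    have l5 := norm_sub_le (b - (b - 1 / 4 - c / ((N : ℂ) + 1) ^ 2)) (c / ((N : ℂ) + 1) ^ 2)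
    rw [← l4] at l5
    have l6 := norm_sub_le b (b - 1 / 4 - c / ((N : ℂ) + 1) ^ 2)
    have l7 : ‖(1 / 4 : ℂ)‖ = 1 / 4 := by norm_num
    linarith
  refine ⟨hU, ?_, hB.trans ?_⟩
  · have hlow : ‖s‖ ^ 3 / 8 ≤ ‖s * bf N s‖ := by
      rw [bf, norm_mul, norm_mul, norm_pow]
      calc _ = ‖s‖ * (‖s‖ ^ 2 * (1 / 8)) := by ring
        _ ≤ _ := by gcongr
    have hrem := hM (1 / ((N : ℂ) + 1)) _ _ _ (by
      rw [norm_div, norm_one, hnn, div_le_one hn0]; exact hn1)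
      (up (k := 3) (by norm_num) hy) (up (k := 3) (by norm_num) hd) (up (k := 3) (by norm_num) hg)
    have h1 := congrArg norm ea
    rw [norm_mul (s * bf N s), norm_mul ((1 / ((N : ℂ) + 1)) ^ 3), norm_pow, norm_div, hnn, norm_one] at h1
    have h2 : ‖s‖ ^ 3 / 8 * ‖alk (N + 1) (((N : ℂ) + 1) * s)
        - 2 * s / ((s ^ 2 - 4) ^ 2 * ((N : ℂ) + 1) ^ 2)‖ ≤ (1 / n) ^ 3 * M := by
      refine le_trans ?_ (h1.le.trans ?_) <;> gcongr
    calc _ ≤ (8 * M / ‖s‖ ^ 3) / n ^ 3 := by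
          rw [div_div, le_div_iff₀ (by positivity)]
          have h3 := mul_le_mul_of_nonneg_left h2 (by positivity : 0 ≤ 8 * n ^ 3)
          have h4 : 8 * n ^ 3 * ((1 / n) ^ 3 * M) = 8 * M := by field_simp
          linarith
      _ ≤ _ := by gcongr; linarith
  · gcongr
    have : 0 ≤ 8 * M / ‖s‖ ^ 3 := by positivity
    linarith

/-- The asymptotics of the recurrence coefficients at `s = 0`, the Legendre case. -/
lemma asym_zero (N : ℕ) :
    ((N : ℂ) + 1) * 0 ∈ UU N ∧
    ‖alk (N + 1) (((N : ℂ) + 1) * 0) - 2 * 0 / ((0 ^ 2 - 4) ^ 2 * ((N : ℂ) + 1) ^ 2)‖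
      ≤ 1 / ((N : ℝ) + 1) ^ 3 ∧
    ‖bet N (((N : ℂ) + 1) * 0) - 1 / 4 - (0 ^ 2 + 4) / (4 * (0 ^ 2 - 4) ^ 2 * ((N : ℂ) + 1) ^ 2)‖
      ≤ 1 / ((N : ℝ) + 1) ^ 4 := by
  have hn := n_ne N
  have hn1 := one_le_n N
  rw [mul_zero]
  refine ⟨by simpa using real_mem_UU N 0, ?_, ?_⟩
  · rw [alk_zero]; simp; positivity
  · have h := bet_zero N
    have hr : (4 * ((N : ℝ) + 1) ^ 2 - 1) ≠ 0 := by nlinarith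
    have hc : (4 * ((N : ℂ) + 1) ^ 2 - 1) ≠ 0 := by exact_mod_cast hr
    have e : bet N 0 - 1 / 4 - (0 ^ 2 + 4) / (4 * (0 ^ 2 - 4) ^ 2 * ((N : ℂ) + 1) ^ 2)
        = ((1 / (16 * ((N : ℝ) + 1) ^ 2 * (4 * ((N : ℝ) + 1) ^ 2 - 1)) : ℝ) : ℂ) := by
      have : bet N 0 = ((N : ℂ) + 1) ^ 2 / (4 * ((N : ℂ) + 1) ^ 2 - 1) := by
        rw [eq_div_iff hc, h]
      rw [this]; push_cast
      generalize (N : ℂ) + 1 = n at *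
      obtain ⟨m, hm⟩ : ∃ m, m = 4 * n ^ 2 - 1 := ⟨_, rfl⟩
      rw [← hm] at hc ⊢
      have e : (n ^ 2 / m - 1 / 4 - (0 ^ 2 + 4) / (4 * (0 ^ 2 - 4) ^ 2 * n ^ 2))
          = (16 * n ^ 4 - 4 * n ^ 2 * m - m) / (16 * n ^ 2 * m) := by
        field_simp; ring
      rw [e, hm]; congr 1; ring
    rw [e, norm_real, Real.norm_eq_abs, abs_of_nonneg]
    · gcongr
      nlinarith [sq_nonneg ((N : ℝ) + 1), mul_le_mul hn1 hn1 zero_le_one (by positivity)]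
    · have : 0 ≤ 4 * ((N : ℝ) + 1) ^ 2 - 1 := by nlinarith
      positivity

lemma ortho_of {n : ℕ} {s : ℂ} {k : ℕ} (hD : Dk k ((n : ℂ) * s) ≠ 0) :
    OrthoConds n s k (Pk k ((n : ℂ) * s)) := by
  refine ⟨Pk_monic _ _, Pk_natDegree _ _, fun j hj => ?_⟩
  have := Pk_ortho hD hj
  simpa [Lf] using this

end GenusZero

open GenusZero in
theorem genus_zero_recurrence_asymptotics (s : ℂ) (hs : s ∈ G0) :
    ∃ (N₀ : ℕ) (C : ℝ), 0 < C ∧ ∃ α β : ℕ → ℂ,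
      ∀ n : ℕ, N₀ ≤ n →
        ∃ Pm P Pp : Polynomial ℂ,
          OrthoConds n s (n - 1) Pm ∧ OrthoConds n s n P ∧ OrthoConds n s (n + 1) Pp ∧
          Polynomial.X * P = Pp + Polynomial.C (α n) * P + Polynomial.C (β n) * Pm ∧
          ‖α n - 2 * s / ((s ^ 2 - 4) ^ 2 * (n : ℂ) ^ 2)‖ ≤ C / (n : ℝ) ^ 3 ∧
          ‖β n - 1 / 4 - (s ^ 2 + 4) / (4 * (s ^ 2 - 4) ^ 2 * (n : ℂ) ^ 2)‖ ≤ C / (n : ℝ) ^ 4 := by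
  obtain ⟨C, hC, n₁, h⟩ : ∃ C : ℝ, 0 < C ∧ ∃ n₁ : ℕ, ∀ N ≥ n₁,
      ((N : ℂ) + 1) * s ∈ UU N ∧
      ‖alk (N + 1) (((N : ℂ) + 1) * s) - 2 * s / ((s ^ 2 - 4) ^ 2 * ((N : ℂ) + 1) ^ 2)‖
        ≤ C / ((N : ℝ) + 1) ^ 3 ∧
      ‖bet N (((N : ℂ) + 1) * s) - 1 / 4 - (s ^ 2 + 4) / (4 * (s ^ 2 - 4) ^ 2 * ((N : ℂ) + 1) ^ 2)‖
        ≤ C / ((N : ℝ) + 1) ^ 4 := by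
    by_cases hs0 : s = 0
    · subst hs0
      exact ⟨1, one_pos, 0, fun N _ => asym_zero N⟩
    · exact asym_ne hs hs0
  refine ⟨n₁ + 1, C, hC, fun n => alk n (n * s), fun n => bet (n - 1) (n * s), fun n hn => ?_⟩
  obtain ⟨N, rfl⟩ : ∃ N, n = N + 1 := ⟨n - 1, by omega⟩
  obtain ⟨hU, ha, hb⟩ := h N (by omega)
  have hc : ((N + 1 : ℕ) : ℂ) = (N : ℂ) + 1 := by push_cast; rfl
  have hr : ((N + 1 : ℕ) : ℝ) = (N : ℝ) + 1 := by push_cast; rfl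
  rw [← hc] at hU ha hb
  rw [← hr] at ha hb
  exact ⟨Pk N ((N + 1 : ℕ) * s), Pk (N + 1) ((N + 1 : ℕ) * s), Pk (N + 2) ((N + 1 : ℕ) * s),
    ortho_of hU.1, ortho_of hU.2.1, ortho_of hU.2.2, three_term hU, ha, hb⟩
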